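/- For every β ≥ 0, the operator T̂ maps L(log L)^{1+β}(-1,1) boundedly into L(log L)^{β}(-1,1). In particular, T̂ : LlogL(-1,1) → L^1(-1,1) is bounded. -/

import Mathlib

open MeasureTheory Set Filter

noncomputable section

/-- Lebesgue measure restricted to the interval `(-1, 1)`. -/
def μI : Measure ℝ := volume.restrict (Set.Ioo (-1 : ℝ) 1)

/-- The finite Hilbert transform: the principal-value limit
`T(f)(t) = lim_{ε→0⁺} (1/π) ∫_{x∈(-1,1), |x-t|≥ε} f(x)/(x-t) dx`. -/
def FHT (f : ℝ → ℂ) (t : ℝ) : ℂ :=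
  limUnder (nhdsWithin (0 : ℝ) (Set.Ioi 0)) fun ε : ℝ =>
    (Real.pi : ℂ)⁻¹ *
      ∫ x in {x : ℝ | x ∈ Set.Ioo (-1 : ℝ) 1 ∧ ε ≤ |x - t|}, f x / ((x : ℂ) - (t : ℂ))

/-- The operator `T̂(g)(x) = -(1-x²)^{-1/2} T(t ↦ √(1-t²) g(t))(x)`. -/
def hatT (g : ℝ → ℂ) (x : ℝ) : ℂ :=
  -((Real.sqrt (1 - x ^ 2) : ℂ))⁻¹ * FHT (fun t => (Real.sqrt (1 - t ^ 2) : ℂ) * g t) x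

/-- Membership in the Zygmund space `L log L(-1,1)`:
`f` is a.e. measurable on `(-1,1)` and `∫ |f| log⁺|f| < ∞`. -/
def MemLlogL (f : ℝ → ℂ) : Prop :=
  AEStronglyMeasurable f μI ∧
    IntegrableOn (fun x => ‖f x‖ * max (Real.log ‖f x‖) 0) (Set.Ioo (-1 : ℝ) 1)

/-- The distribution function `λ ↦ |{x ∈ (-1,1) : |f(x)| > λ}|`. -/
def distFun (f : ℝ → ℂ) (lam : ℝ) : ℝ :=
  (volume {x : ℝ | x ∈ Set.Ioo (-1 : ℝ) 1 ∧ lam < ‖f x‖}).toReal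

/-- The decreasing rearrangement `f*` of `f`, a function on `(0,2)`. -/
def decRearr (f : ℝ → ℂ) (t : ℝ) : ℝ :=
  sInf {lam : ℝ | 0 ≤ lam ∧ distFun f lam ≤ t}

/-- The `L log L` norm `‖f‖ = ∫_0^2 f*(t) log(2e/t) dt`. -/
def llogLNorm (f : ℝ → ℂ) : ℝ :=
  ∫ t in Set.Ioo (0 : ℝ) 2, decRearr f t * Real.log (2 * Real.exp 1 / t)

/-- The `L(log L)^α` norm `∫_0^2 f*(t) log^α(2e/t) dt` (for `α = 0` this is the `L¹` norm). -/
def zygNorm (α : ℝ) (f : ℝ → ℂ) : ℝ :=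
  ∫ t in Set.Ioo (0 : ℝ) 2, decRearr f t * Real.log (2 * Real.exp 1 / t) ^ α

/-- Membership in the Zygmund space `L(log L)^α(-1,1)`. -/
def MemZyg (α : ℝ) (f : ℝ → ℂ) : Prop :=
  AEStronglyMeasurable f μI ∧
    IntegrableOn (fun t => decRearr f t * Real.log (2 * Real.exp 1 / t) ^ α)
      (Set.Ioo (0 : ℝ) 2)

/-- Membership in `L(log L)²(-1,1)`: `∫ |f| (log(2+|f|))² < ∞`. -/
def MemLlogL2 (f : ℝ → ℂ) : Prop :=
  AEStronglyMeasurable f μI ∧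
    IntegrableOn (fun x => ‖f x‖ * Real.log (2 + ‖f x‖) ^ 2) (Set.Ioo (-1 : ℝ) 1)

/-- The constant `c(β,γ) = max{1/(1-β), 1/(1-γ), 1/(β+γ-1)}`. -/
def cBG (β γ : ℝ) : ℝ := max (max (1 / (1 - β)) (1 / (1 - γ))) (1 / (β + γ - 1))


open MeasureTheory Set Filter
noncomputable section
open scoped Topology ENNReal

lemma exp_two_arctan (x : ℝ) : circleMap 0 1 (2 * Real.arctan x) =
    (1 + Complex.I * x) / (1 - Complex.I * x) := by
  have h1 : (1 - Complex.I * (x:ℂ)) ≠ 0 := by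
    intro h
    have := congrArg Complex.re h
    simp at this
  have h2 : circleMap 0 1 (2 * Real.arctan x) = Complex.exp (Real.arctan x * Complex.I) ^ 2 := by
    rw [circleMap, ← Complex.exp_nat_mul]
    push_cast
    simp
    ring_nf
  rw [h2, Complex.exp_mul_I, ← Complex.ofReal_cos, ← Complex.ofReal_sin, Real.cos_arctan,
    Real.sin_arctan, eq_div_iff h1]
  have hs : (0:ℝ) < √(1 + x ^ 2) := Real.sqrt_pos.2 (by positivity)
  have hsq : ((√(1 + x ^ 2) : ℝ) : ℂ) ^ 2 = 1 + x ^ 2 := by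
    rw [← Complex.ofReal_pow, Real.sq_sqrt (by positivity)]; push_cast; ring
  have hs' : ((√(1 + x ^ 2) : ℝ) : ℂ) ≠ 0 := by exact_mod_cast hs.ne'
  push_cast
  field_simp
  rw [hsq]
  have hI : Complex.I ^ 3 = - Complex.I := by
    rw [pow_succ, Complex.I_sq]; ring
  ring_nf
  rw [hI]
  simp only [Complex.I_sq]
  ring

lemma mean_value_line (H : ℂ → ℂ) (hd : ∀ z : ℂ, 0 ≤ z.im → DifferentiableAt ℂ H z)
    (c : ℂ) (hlim : Tendsto H (Bornology.cobounded ℂ ⊓ 𝓟 {z | 0 ≤ z.im}) (𝓝 c)) :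
    Integrable (fun x : ℝ => ((1 + x ^ 2)⁻¹ : ℝ) • H x) ∧
      ∫ x : ℝ, ((1 + x ^ 2)⁻¹ : ℝ) • H x = Real.pi • H Complex.I := by
  classical
  let z : ℂ → ℂ := fun ζ => Complex.I * (1 - ζ) / (1 + ζ)
  let G : ℂ → ℂ := fun ζ => if ζ = -1 then c else H (z ζ)
  have him : ∀ ζ : ℂ, ζ ≠ -1 → (z ζ).im = (1 - ‖ζ‖ ^ 2) / Complex.normSq (1 + ζ) := by
    intro ζ hζ
    simp only [z, Complex.div_im, Complex.mul_re, Complex.mul_im, Complex.I_re, Complex.I_im,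
      Complex.sub_re, Complex.sub_im, Complex.one_re, Complex.one_im, Complex.add_re,
      Complex.add_im]
    rw [← Complex.normSq_eq_norm_sq, Complex.normSq_apply ζ]
    ring
  have hne : ∀ ζ : ℂ, ζ ≠ -1 → 1 + ζ ≠ 0 := by
    intro ζ hζ h
    exact hζ (by linear_combination h)
  have hz0 : ∀ ζ : ℂ, ζ ≠ -1 → ‖ζ‖ ≤ 1 → 0 ≤ (z ζ).im := by
    intro ζ hζ h
    rw [him ζ hζ]
    apply div_nonneg _ (Complex.normSq_nonneg _)
    nlinarith [norm_nonneg ζ]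
  have hzd : ∀ ζ : ℂ, ζ ≠ -1 → DifferentiableAt ℂ z ζ := by
    intro ζ hζ
    have := hne ζ hζ
    simp only [z]
    fun_prop (disch := assumption)
  have hGd : ∀ ζ : ℂ, ζ ≠ -1 → ‖ζ‖ ≤ 1 → DifferentiableAt ℂ G ζ := by
    intro ζ hζ h
    have h1 : DifferentiableAt ℂ (fun ζ => H (z ζ)) ζ :=
      DifferentiableAt.comp ζ (hd _ (hz0 ζ hζ h)) (hzd ζ hζ)
    refine h1.congr_of_eventuallyEq ?_
    filter_upwards [isOpen_ne.mem_nhds hζ] with w hw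
    simp only [G]
    rw [if_neg hw]
  have hGc : ContinuousOn G (Metric.closedBall 0 1) := by
    intro ζ hζ
    rw [mem_closedBall_zero_iff] at hζ
    by_cases h : ζ = -1
    · subst h
      rw [← continuousWithinAt_sdiff_self]
      have hG1 : G (-1) = c := by simp [G]
      rw [ContinuousWithinAt, hG1]
      have hz : Tendsto z (𝓝[Metric.closedBall 0 1 \ {-1}] (-1))
          (Bornology.cobounded ℂ ⊓ 𝓟 {z | 0 ≤ z.im}) := by
        refine tendsto_inf.2 ⟨?_, ?_⟩
        · rw [← tendsto_norm_atTop_iff_cobounded]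
          have h1 : Tendsto (fun ζ : ℂ => 1 + ζ) (𝓝[Metric.closedBall 0 1 \ {-1}] (-1))
              (𝓝[≠] 0) := by
            refine tendsto_nhdsWithin_iff.2 ⟨?_, ?_⟩
            · have : Tendsto (fun ζ : ℂ => 1 + ζ) (𝓝 (-1)) (𝓝 (1 + -1)) := by
                apply Continuous.tendsto; fun_prop
              simp only [add_neg_cancel] at this
              exact this.mono_left nhdsWithin_le_nhds
            · filter_upwards [self_mem_nhdsWithin] with w hw
              exact hne w hw.2
          have h2 := tendsto_norm_cobounded_atTop.comp (tendsto_inv₀_nhdsNE_zero.comp h1)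
          have h3 : Tendsto (fun w => 2 * w - 1 : ℝ → ℝ) atTop atTop :=
            tendsto_atTop_add_const_right _ _ (tendsto_id.const_mul_atTop two_pos)
          refine tendsto_atTop_mono' _ ?_ (h3.comp h2)
          filter_upwards [self_mem_nhdsWithin] with w hw
          simp only [Function.comp_apply, z]
          have hw' := hne w hw.2
          have e : Complex.I * (1 - w) / (1 + w) = Complex.I * (2 * (1 + w)⁻¹ - 1) := by
            field_simp; ring
          rw [e, norm_mul, Complex.norm_I, one_mul]
          have := norm_sub_norm_le (2 * (1 + w)⁻¹) (1 : ℂ)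
          rw [norm_mul] at this
          simpa using this
        · rw [tendsto_principal]
          filter_upwards [self_mem_nhdsWithin] with w hw
          exact hz0 w hw.2 (by simpa using hw.1)
      refine (hlim.comp hz).congr' ?_
      filter_upwards [self_mem_nhdsWithin] with w hw
      have hw2 : w ≠ -1 := hw.2
      simp [G, hw2]
    · exact (hGd ζ h hζ).continuousAt.continuousWithinAt
  have hDC : DiffContOnCl ℂ G (Metric.ball 0 |1|) := by
    rw [abs_one]
    constructor
    · intro ζ hζ
      rw [mem_ball_zero_iff] at hζ
      refine (hGd ζ ?_ hζ.le).differentiableWithinAt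
      rintro rfl
      simp at hζ
    · rw [closure_ball _ one_ne_zero]; exact hGc
  have hmv := hDC.circleAverage
  rw [Real.circleAverage_eq_integral_add (-Real.pi),
    intervalIntegral.integral_comp_add_right (fun θ => G (circleMap 0 1 θ))] at hmv
  have hG0 : G 0 = H Complex.I := by simp [G, z]
  have himg : (fun x : ℝ => 2 * Real.arctan x) '' univ = Ioo (-Real.pi) Real.pi := by
    ext y
    constructor
    · rintro ⟨x, -, rfl⟩
      constructor
      · have := Real.neg_pi_div_two_lt_arctan x
        simp only; linarith
      · have := Real.arctan_lt_pi_div_two x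
        simp only; linarith
    · rintro ⟨h1, h2⟩
      refine ⟨Real.tan (y / 2), trivial, ?_⟩
      simp only
      rw [Real.arctan_tan (by linarith) (by linarith)]
      ring
  have hder : ∀ x ∈ (univ : Set ℝ), HasDerivWithinAt (fun x : ℝ => 2 * Real.arctan x)
      (2 * (1 / (1 + x ^ 2))) univ x := fun x _ =>
    ((Real.hasDerivAt_arctan x).const_mul 2).hasDerivWithinAt
  have hinj : InjOn (fun x : ℝ => 2 * Real.arctan x) univ := by
    intro x _ y _ h
    simp only at h
    exact Real.arctan_injective (by linarith)
  have hcomp : ∀ x : ℝ, G (circleMap 0 1 (2 * Real.arctan x)) = H x := by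
    intro x
    rw [exp_two_arctan]
    have h1 : (1 - Complex.I * (x:ℂ)) ≠ 0 := by
      intro h
      have := congrArg Complex.re h
      simp at this
    have h2 : (1 + Complex.I * (x:ℂ)) / (1 - Complex.I * x) ≠ -1 := by
      intro h
      rw [div_eq_iff h1] at h
      have := congrArg Complex.re h
      norm_num at this
    simp only [G, z]
    rw [if_neg h2]
    congr 1
    have e1 : 1 - (1 + Complex.I * (x:ℂ)) / (1 - Complex.I * x)
        = -2 * Complex.I * x / (1 - Complex.I * x) := by field_simp; ring
    have e2 : 1 + (1 + Complex.I * (x:ℂ)) / (1 - Complex.I * x)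
        = 2 / (1 - Complex.I * x) := by field_simp; ring
    rw [e1, e2]
    field_simp
    simp
  have hcont : Continuous (fun θ => G (circleMap 0 1 θ)) := by
    apply hGc.comp_continuous (continuous_circleMap 0 1)
    intro θ
    exact circleMap_mem_closedBall 0 zero_le_one θ
  have hint : IntegrableOn (fun θ => G (circleMap 0 1 θ)) (Ioo (-Real.pi) Real.pi) :=
    (hcont.integrableOn_Icc).mono_set Ioo_subset_Icc_self
  rw [← himg, integrableOn_image_iff_integrableOn_abs_deriv_smul MeasurableSet.univ hder hinj,
    integrableOn_univ] at hint
  have e3 : ∀ x : ℝ, |2 * (1 / (1 + x ^ 2))| • G (circleMap 0 1 (2 * Real.arctan x))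
      = (2:ℝ) • (((1 + x ^ 2)⁻¹ : ℝ) • H x) := by
    intro x
    rw [hcomp, abs_of_nonneg (by positivity), smul_smul, one_div]
  simp only [e3] at hint
  have hI : ∫ θ in Ioo (-Real.pi) Real.pi, G (circleMap 0 1 θ)
      = (2:ℝ) • ∫ x : ℝ, ((1 + x ^ 2)⁻¹ : ℝ) • H x := by
    rw [← himg, integral_image_eq_integral_abs_deriv_smul MeasurableSet.univ hder hinj,
      setIntegral_univ]
    simp only [e3]
    rw [integral_smul]
  constructor
  · have := hint.smul (2⁻¹ : ℝ)
    refine this.congr (ae_of_all _ fun x => ?_)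
    simp [← mul_assoc]
  · rw [intervalIntegral.integral_of_le (by linarith [Real.pi_pos]), integral_Ioc_eq_integral_Ioo,
      show 0 + -Real.pi = -Real.pi by ring, show 2 * Real.pi + -Real.pi = Real.pi by ring, hI,
      hG0] at hmv
    rw [← hmv, smul_smul, smul_smul]
    have : Real.pi * ((2 * Real.pi)⁻¹ * 2) = 1 := by
      have := Real.pi_pos.ne'
      field_simp
    rw [mul_assoc] at *
    rw [this, one_smul]

end

open MeasureTheory Set Filter
noncomputable section
set_option linter.unusedVariables false
set_option linter.style.haveILetI false
open scoped Topology ENNReal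

lemma mean_value_re (H : ℂ → ℂ) (hd : ∀ z : ℂ, 0 ≤ z.im → DifferentiableAt ℂ H z)
    (c : ℂ) (hlim : Tendsto H (Bornology.cobounded ℂ ⊓ 𝓟 {z | 0 ≤ z.im}) (𝓝 c)) :
    Integrable (fun x : ℝ => (1 + x ^ 2)⁻¹ * (H x).re) ∧
      ∫ x : ℝ, (1 + x ^ 2)⁻¹ * (H x).re = Real.pi * (H Complex.I).re := by
  obtain ⟨h1, h2⟩ := mean_value_line H hd c hlim
  constructor
  · refine h1.re.congr (ae_of_all _ fun x => ?_)
    simp [-Complex.real_smul, Complex.smul_re]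
  · have := congrArg Complex.re h2
    have h3 : (∫ x : ℝ, ((1 + x ^ 2)⁻¹ : ℝ) • H x).re = ∫ x : ℝ, (((1 + x ^ 2)⁻¹ : ℝ) • H x).re :=
      (integral_re h1).symm
    rw [h3] at this
    simpa [-Complex.real_smul, Complex.smul_re] using this

def Qk (ε s : ℝ) : ℝ := s / (s ^ 2 + ε ^ 2) / Real.pi
def Pk (ε s : ℝ) : ℝ := ε / (s ^ 2 + ε ^ 2) / Real.pi
def QE (ε : ℝ) (E : Set ℝ) (x : ℝ) : ℝ := ∫ t in E, Qk ε (x - t)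
def PE (ε : ℝ) (E : Set ℝ) (x : ℝ) : ℝ := ∫ t in E, Pk ε (x - t)
def FE (E : Set ℝ) (z : ℂ) : ℂ := ∫ t in E, Complex.I / Real.pi / (z - t)

lemma sub_ne_of_im {z : ℂ} (hz : 0 < z.im) (t : ℝ) : z - t ≠ 0 := by
  intro h
  have := congrArg Complex.im h
  simp at this
  linarith

lemma im_le_norm_sub (z : ℂ) (t : ℝ) : z.im ≤ ‖z - t‖ := by
  have := (le_abs_self _).trans (Complex.abs_im_le_norm (z - t))
  simpa using this

lemma norm_I_div_pi : ‖(Complex.I / Real.pi : ℂ)‖ = 1 / Real.pi := by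
  rw [norm_div, Complex.norm_I, Complex.norm_real, Real.norm_of_nonneg Real.pi_pos.le]

section
variable {E : Set ℝ}

lemma vol_lt_top (hEI : E ⊆ Ioo (-1) 1) : volume E < ∞ :=
  (measure_mono hEI).trans_lt (by simp)

lemma vol_real_le (hEI : E ⊆ Ioo (-1) 1) : volume.real E ≤ 2 := by
  have := measureReal_mono (μ := volume) hEI (by simp)
  refine this.trans ?_
  rw [measureReal_def, Real.volume_Ioo]
  norm_num

lemma FE_diff (hE : MeasurableSet E) (hEI : E ⊆ Ioo (-1) 1) {z : ℂ} (hz : 0 < z.im) :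
    DifferentiableAt ℂ (FE E) z := by
  have hfin := vol_lt_top hEI
  haveI : IsFiniteMeasure (volume.restrict E) := ⟨by simpa using hfin⟩
  have hs : {w : ℂ | z.im / 2 < w.im} ∈ 𝓝 z :=
    (isOpen_lt continuous_const Complex.continuous_im).mem_nhds (by simp; linarith)
  have hmeas : ∀ w : ℂ, AEStronglyMeasurable (fun t : ℝ => Complex.I / Real.pi / (w - t))
      (volume.restrict E) := fun w => by
    apply Measurable.aestronglyMeasurable
    fun_prop
  have hbd : ∀ w : ℂ, z.im / 2 < w.im → ∀ t : ℝ, ‖w - t‖⁻¹ ≤ (z.im / 2)⁻¹ := by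
    intro w hw t
    exact inv_anti₀ (by linarith) (hw.le.trans (im_le_norm_sub w t))
  have := hasDerivAt_integral_of_dominated_loc_of_deriv_le (μ := volume.restrict E)
    (F := fun (w : ℂ) (t : ℝ) => Complex.I / Real.pi / (w - t))
    (F' := fun (w : ℂ) (t : ℝ) => - (Complex.I / Real.pi) / (w - t) ^ 2) (x₀ := z)
    (s := {w : ℂ | z.im / 2 < w.im})
    (bound := fun _ => (1 / Real.pi) * ((z.im / 2)⁻¹) ^ 2) hs
    (Eventually.of_forall hmeas) ?_ ?_ ?_ (integrable_const _) ?_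
  · exact this.2.differentiableAt
  · refine Integrable.mono' (integrable_const (1 / Real.pi * (z.im / 2)⁻¹)) (hmeas z) ?_
    refine ae_of_all _ fun t => ?_
    rw [norm_div, norm_I_div_pi, div_eq_mul_inv]
    have := hbd z (by linarith) t
    have := Real.pi_pos
    gcongr
  · apply Measurable.aestronglyMeasurable
    fun_prop
  · refine ae_of_all _ fun t w hw => ?_
    rw [norm_div, norm_neg, norm_I_div_pi, norm_pow, div_eq_mul_inv, ← inv_pow]
    have := hbd w hw t
    have := Real.pi_pos
    gcongr
  · refine ae_of_all _ fun t w hw => ?_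
    have hw' : 0 < w.im := by simp at hw; linarith
    have hne := sub_ne_of_im hw' t
    have h1 : HasDerivAt (fun w : ℂ => w - t) 1 w := (hasDerivAt_id w).sub_const _
    have := (hasDerivAt_const w (Complex.I / Real.pi)).div h1 hne
    refine this.congr_deriv ?_
    ring

lemma FE_norm_le (hE : MeasurableSet E) (hEI : E ⊆ Ioo (-1) 1) {z : ℂ} {r : ℝ} (hr : 0 < r)
    (h : ∀ t ∈ E, r ≤ ‖z - t‖) : ‖FE E z‖ ≤ volume.real E / (Real.pi * r) := by
  have hfin := vol_lt_top hEI
  have := norm_setIntegral_le_of_norm_le_const (C := 1 / (Real.pi * r)) hfin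
    (f := fun t : ℝ => Complex.I / Real.pi / (z - t)) ?_
  · refine this.trans (le_of_eq ?_)
    ring
  · intro t ht
    rw [norm_div, norm_I_div_pi, div_div]
    have := Real.pi_pos
    have := h t ht
    gcongr

lemma FE_tendsto (hE : MeasurableSet E) (hEI : E ⊆ Ioo (-1) 1) :
    Tendsto (FE E) (Bornology.cobounded ℂ) (𝓝 0) := by
  have h1 : Tendsto (fun z : ℂ => ‖z‖ - 1) (Bornology.cobounded ℂ) atTop :=
    tendsto_atTop_add_const_right _ _ tendsto_norm_cobounded_atTop
  have h2 : Tendsto (fun z : ℂ => volume.real E / (Real.pi * (‖z‖ - 1)))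
      (Bornology.cobounded ℂ) (𝓝 0) :=
    (h1.const_mul_atTop Real.pi_pos).const_div_atTop _
  refine squeeze_zero_norm' ?_ h2
  filter_upwards [h1.eventually_gt_atTop 0] with z hz
  apply FE_norm_le hE hEI hz
  intro t ht
  have ht' := hEI ht
  have h3 : ‖(t:ℂ)‖ ≤ 1 := by
    rw [Complex.norm_real, Real.norm_eq_abs, abs_le]; exact ⟨ht'.1.le, ht'.2.le⟩
  have := norm_sub_norm_le z t
  linarith

lemma FE_shift_tendsto (hE : MeasurableSet E) (hEI : E ⊆ Ioo (-1) 1) (b : ℂ) :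
    Tendsto (fun z => FE E (z + b)) (Bornology.cobounded ℂ ⊓ 𝓟 {z | 0 ≤ z.im}) (𝓝 0) := by
  refine ((FE_tendsto hE hEI).comp ?_).mono_left inf_le_left
  rw [← tendsto_norm_atTop_iff_cobounded]
  have h1 : Tendsto (fun z : ℂ => ‖z‖ - ‖b‖) (Bornology.cobounded ℂ) atTop :=
    tendsto_atTop_add_const_right _ _ tendsto_norm_cobounded_atTop
  refine tendsto_atTop_mono (fun z => ?_) h1
  have := norm_sub_norm_le z (-b)
  simpa using this

lemma FE_shift_diff (hE : MeasurableSet E) (hEI : E ⊆ Ioo (-1) 1) {ε : ℝ} (hε : 0 < ε) (z : ℂ)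
    (hz : 0 ≤ z.im) : DifferentiableAt ℂ (fun z => FE E (z + ε * Complex.I)) z := by
  have h1 : DifferentiableAt ℂ (FE E) (z + ε * Complex.I) := FE_diff hE hEI (by simp; linarith)
  have h2 : DifferentiableAt ℂ (fun z : ℂ => z + ε * Complex.I) z := by fun_prop
  exact DifferentiableAt.comp (g := FE E) z h1 h2

lemma FE_integrable (hE : MeasurableSet E) (hEI : E ⊆ Ioo (-1) 1) {z : ℂ} (hz : 0 < z.im) :
    IntegrableOn (fun t : ℝ => Complex.I / Real.pi / (z - t)) E := by
  have hfin := vol_lt_top hEI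
  haveI : IsFiniteMeasure (volume.restrict E) := ⟨by simpa using hfin⟩
  refine Integrable.mono' (integrable_const (1 / Real.pi * (z.im)⁻¹)) 
    (Measurable.aestronglyMeasurable (by fun_prop)) ?_
  refine ae_of_all _ fun t => ?_
  rw [norm_div, norm_I_div_pi, div_eq_mul_inv]
  have := im_le_norm_sub z t
  have := Real.pi_pos
  gcongr

lemma kernel_re_im {ε : ℝ} (hε : 0 < ε) (x t : ℝ) :
    (Complex.I / Real.pi / ((x : ℂ) + ε * Complex.I - t)).re = Pk ε (x - t) ∧
    (Complex.I / Real.pi / ((x : ℂ) + ε * Complex.I - t)).im = Qk ε (x - t) := by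
  have e : Complex.I / Real.pi / ((x : ℂ) + ε * Complex.I - t)
      = (Pk ε (x - t) : ℂ) + (Qk ε (x - t) : ℂ) * Complex.I := by
    have h1 : (x : ℂ) + ε * Complex.I - t ≠ 0 := sub_ne_of_im (by simpa using hε) t
    have h2 : ((x : ℂ) - t) ^ 2 + ε ^ 2 ≠ 0 := by
      have : (0:ℝ) < (x - t) ^ 2 + ε ^ 2 := by positivity
      exact_mod_cast this.ne'
    have h3 : (Real.pi : ℂ) ≠ 0 := by exact_mod_cast Real.pi_pos.ne'
    rw [Pk, Qk, div_eq_iff h1]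
    push_cast
    field_simp
    linear_combination (-((x:ℂ) - t) * ε) * Complex.I_sq
  rw [e]
  simp

lemma FE_eq (hE : MeasurableSet E) (hEI : E ⊆ Ioo (-1) 1) {ε : ℝ} (hε : 0 < ε) (x : ℝ) :
    (FE E (x + ε * Complex.I)).re = PE ε E x ∧ (FE E (x + ε * Complex.I)).im = QE ε E x := by
  have hint := FE_integrable hE hEI (z := x + ε * Complex.I) (by simpa using hε)
  constructor
  · have := integral_re hint
    simp only [FE, PE]
    refine this.symm.trans ?_
    congr 1
    ext t
    exact (kernel_re_im hε x t).1
  · have := integral_im hint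
    simp only [FE, QE]
    refine this.symm.trans ?_
    congr 1
    ext t
    exact (kernel_re_im hε x t).2

lemma Pk_integrable {ε : ℝ} (hε : 0 < ε) : Integrable (Pk ε) ∧ ∫ s, Pk ε s = 1 := by
  have e : ∀ s, Pk ε s = (Real.pi * ε)⁻¹ * (1 + (s / ε) ^ 2)⁻¹ := by
    intro s
    have := Real.pi_pos.ne'
    rw [Pk]
    field_simp
    ring
  constructor
  · refine (((integrable_inv_one_add_sq).comp_div hε.ne').const_mul ((Real.pi * ε)⁻¹)).congr
      (ae_of_all _ fun s => (e s).symm)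
  · simp_rw [e]
    rw [integral_const_mul, Measure.integral_comp_div (fun s : ℝ => (1 + s ^ 2)⁻¹),
      integral_univ_inv_one_add_sq, abs_of_pos hε]
    have := Real.pi_pos.ne'
    simp
    field_simp

lemma Pk_nonneg {ε : ℝ} (hε : 0 < ε) (s : ℝ) : 0 ≤ Pk ε s := by
  have := Real.pi_pos
  rw [Pk]; positivity

lemma PE_bounds {ε : ℝ} (hε : 0 < ε) (x : ℝ) : 0 ≤ PE ε E x ∧ PE ε E x ≤ 1 := by
  constructor
  · exact integral_nonneg fun t => Pk_nonneg hε _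
  · have h := Pk_integrable hε
    have h1 : Integrable (fun t => Pk ε (x - t)) := h.1.comp_sub_left x
    refine (setIntegral_le_integral h1 (ae_of_all _ fun t => Pk_nonneg hε _)).trans ?_
    rw [integral_sub_left_eq_self (Pk ε), h.2]

end
end

open MeasureTheory Set Filter
noncomputable section
set_option linter.unusedVariables false
set_option linter.style.haveILetI false
open scoped Topology ENNReal

section
variable {E : Set ℝ}

lemma FE_re_nonneg (hE : MeasurableSet E) (hEI : E ⊆ Ioo (-1) 1) {z : ℂ} (hz : 0 < z.im) :
    0 ≤ (FE E z).re := by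
  have h := (FE_eq hE hEI hz z.re).1
  rw [Complex.re_add_im] at h
  rw [h]
  exact (PE_bounds hz _).1

lemma QE_continuous (hE : MeasurableSet E) (hEI : E ⊆ Ioo (-1) 1) {ε : ℝ} (hε : 0 < ε) :
    Continuous (QE ε E) ∧ Continuous (PE ε E) := by
  have h1 : Continuous (fun x : ℝ => FE E (x + ε * Complex.I)) := by
    rw [continuous_iff_continuousAt]
    intro x
    have := (FE_shift_diff hE hEI hε x (by simp)).continuousAt
    exact ContinuousAt.comp (g := fun z => FE E (z + ε * Complex.I)) this
      Complex.continuous_ofReal.continuousAt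
  constructor
  · have := Complex.continuous_im.comp h1
    refine this.congr fun x => (FE_eq hE hEI hε x).2
  · have := Complex.continuous_re.comp h1
    refine this.congr fun x => (FE_eq hE hEI hε x).1

lemma FE_center (hE : MeasurableSet E) (hEI : E ⊆ Ioo (-1) 1) {ε : ℝ} (hε : 0 < ε) :
    ‖FE E (Complex.I + ε * Complex.I)‖ ≤ volume.real E / Real.pi := by
  have := FE_norm_le hE hEI (z := Complex.I + ε * Complex.I) (r := 1) one_pos ?_
  · simpa using this
  · intro t ht
    refine le_trans ?_ (im_le_norm_sub _ _)
    simp [hε.le]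

lemma QE_weak (hE : MeasurableSet E) (hEI : E ⊆ Ioo (-1) 1) {ε : ℝ} (hε : 0 < ε) {lam : ℝ}
    (hl : 0 < lam) : volume (Ioo (-2) 2 ∩ {x | lam < |QE ε E x|}) ≤
      ENNReal.ofReal (10 * volume.real E / lam) := by
  set w : ℂ → ℂ := fun z => FE E (z + ε * Complex.I) with hw
  have hre : ∀ z : ℂ, 0 ≤ z.im → 0 ≤ (w z).re := fun z hz =>
    FE_re_nonneg hE hEI (by simp; linarith)
  have hne : ∀ z : ℂ, 0 ≤ z.im → w z + lam ≠ 0 := by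
    intro z hz h
    have h1 := congrArg Complex.re h
    have := hre z hz
    simp at h1
    linarith
  have hlim : Tendsto (fun z => w z / (w z + lam)) (Bornology.cobounded ℂ ⊓ 𝓟 {z | 0 ≤ z.im})
      (𝓝 (0 / (0 + lam))) := by
    have h0 := FE_shift_tendsto hE hEI (ε * Complex.I)
    refine h0.div (h0.add_const _) ?_
    simpa using hl.ne'
  obtain ⟨hint, hval⟩ := mean_value_re (fun z => w z / (w z + lam)) (fun z hz => by
    have h1 := FE_shift_diff hE hEI hε z hz
    exact h1.div (h1.add_const _) (hne z hz)) _ hlim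
  have hform : ∀ x : ℝ, (w x / (w x + lam)).re = 
      (PE ε E x * (PE ε E x + lam) + QE ε E x ^ 2) / ((PE ε E x + lam) ^ 2 + QE ε E x ^ 2) := by
    intro x
    obtain ⟨h1, h2⟩ := FE_eq hE hEI hε x
    rw [Complex.div_re]
    simp only [Complex.normSq_apply, Complex.add_re, Complex.add_im, Complex.ofReal_re,
      Complex.ofReal_im, hw, h1, h2]
    ring
  have hnn : ∀ x : ℝ, 0 ≤ (1 + x ^ 2)⁻¹ * (w x / (w x + lam)).re := by
    intro x
    rw [hform]
    have := (PE_bounds (E := E) hε x).1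
    positivity
  have hcen : (w Complex.I / (w Complex.I + lam)).re ≤ volume.real E / Real.pi / lam := by
    refine (Complex.re_le_norm _).trans ?_
    rw [norm_div]
    have h1 := FE_center hE hEI hε
    have h2 : lam ≤ ‖w Complex.I + lam‖ := by
      refine le_trans ?_ (Complex.re_le_norm _)
      have := hre Complex.I (by simp)
      simp; linarith
    gcongr
  have hmark : ENNReal.ofReal (1/10) * volume (Ioo (-2) 2 ∩ {x | lam < |QE ε E x|}) ≤
      ∫⁻ x : ℝ, ENNReal.ofReal ((1 + x ^ 2)⁻¹ * (w x / (w x + lam)).re) := by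
    have hm := mul_meas_ge_le_lintegral₀ (μ := volume) (hint.1.aemeasurable.ennreal_ofReal)
      (ENNReal.ofReal (1/10))
    refine le_trans ?_ hm
    gcongr
    intro x hx
    simp only [mem_setOf_eq]
    apply ENNReal.ofReal_le_ofReal
    obtain ⟨⟨hx1, hx2⟩, hx3⟩ := hx
    simp only [mem_setOf_eq] at hx3
    have hu := (PE_bounds (E := E) hε x).1
    have hv : lam ^ 2 ≤ QE ε E x ^ 2 := by
      rw [← sq_abs (QE ε E x)]
      gcongr
    have h1 : (1:ℝ)/5 ≤ (1 + x ^ 2)⁻¹ := by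
      rw [one_div]
      apply inv_anti₀ (by positivity)
      nlinarith
    have h2 : (1:ℝ)/2 ≤ (w x / (w x + lam)).re := by
      rw [hform, div_le_div_iff₀ two_pos (by positivity)]
      nlinarith
    nlinarith
  rw [← ofReal_integral_eq_lintegral_ofReal hint (ae_of_all _ hnn), hval] at hmark
  have h4 : volume (Ioo (-2) 2 ∩ {x | lam < |QE ε E x|}) =
      ENNReal.ofReal 10 * (ENNReal.ofReal (1/10) * volume (Ioo (-2) 2 ∩ {x | lam < |QE ε E x|})) := by
    rw [← mul_assoc, ← ENNReal.ofReal_mul (by norm_num)]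
    norm_num
  rw [h4]
  calc _ ≤ ENNReal.ofReal 10 * ENNReal.ofReal (Real.pi * (volume.real E / Real.pi / lam)) := by
        have := Real.pi_pos
        gcongr
        exact hmark.trans (ENNReal.ofReal_le_ofReal (by gcongr))
    _ = _ := by
        rw [← ENNReal.ofReal_mul (by norm_num)]
        congr 1
        have := Real.pi_pos.ne'
        field_simp

lemma sq_lintegral_le {v : ℝ → ℝ} {g : ℝ → ℝ} (hg : Integrable g) (hvg : ∀ x, (1 + x ^ 2)⁻¹ * v x ^ 2 ≤ g x) :
    ∫⁻ x in Ioo (-2) 2, ENNReal.ofReal (v x ^ 2) ≤ ENNReal.ofReal (5 * ∫ x, g x) := by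
  have hg0 : ∀ x, 0 ≤ g x := fun x => le_trans (by positivity) (hvg x)
  calc ∫⁻ x in Ioo (-2) 2, ENNReal.ofReal (v x ^ 2) 
      ≤ ∫⁻ x in Ioo (-2) 2, ENNReal.ofReal (5 * g x) := by
        apply setLIntegral_mono' measurableSet_Ioo
        intro x hx
        apply ENNReal.ofReal_le_ofReal
        have h1 : (1:ℝ)/5 ≤ (1 + x ^ 2)⁻¹ := by
          rw [one_div]
          apply inv_anti₀ (by positivity)
          nlinarith [hx.1, hx.2]
        nlinarith [hvg x, sq_nonneg (v x)]
    _ ≤ ∫⁻ x, ENNReal.ofReal (5 * g x) := setLIntegral_le_lintegral _ _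
    _ = _ := by
        rw [← ofReal_integral_eq_lintegral_ofReal (hg.const_mul 5)
          (ae_of_all _ fun x => mul_nonneg (by norm_num) (hg0 x)), integral_const_mul]

lemma QE_sq (hE : MeasurableSet E) (hEI : E ⊆ Ioo (-1) 1) {ε : ℝ} (hε : 0 < ε) :
    ∫⁻ x in Ioo (-2) 2, ENNReal.ofReal (QE ε E x ^ 2) ≤ ENNReal.ofReal (10 * volume.real E) := by
  set w : ℂ → ℂ := fun z => FE E (z + ε * Complex.I) with hw
  have hlim : Tendsto (fun z => w z - w z ^ 2) (Bornology.cobounded ℂ ⊓ 𝓟 {z | 0 ≤ z.im})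
      (𝓝 (0 - 0 ^ 2)) := by
    have h0 := FE_shift_tendsto hE hEI (ε * Complex.I)
    exact h0.sub (h0.pow 2)
  obtain ⟨hint, hval⟩ := mean_value_re (fun z => w z - w z ^ 2) (fun z hz => by
    have h1 := FE_shift_diff hE hEI hε z hz
    exact h1.sub (h1.pow 2)) _ hlim
  refine (sq_lintegral_le hint ?_).trans ?_
  · intro x
    obtain ⟨h1, h2⟩ := FE_eq hE hEI hε x
    have e : (w x - w x ^ 2).re = PE ε E x - PE ε E x ^ 2 + QE ε E x ^ 2 := by
      simp only [pow_two, Complex.sub_re, Complex.mul_re, hw, h1, h2]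
      ring
    rw [e]
    obtain ⟨h3, h4⟩ := PE_bounds (E := E) hε x
    gcongr
    nlinarith
  · apply ENNReal.ofReal_le_ofReal
    rw [hval]
    have h1 : ‖w Complex.I‖ ≤ _ := FE_center hE hEI hε
    have h2 : (w Complex.I - w Complex.I ^ 2).re ≤ ‖w Complex.I‖ + ‖w Complex.I‖ ^ 2 := by
      refine (Complex.re_le_norm _).trans ((norm_sub_le _ _).trans ?_)
      rw [norm_pow]
    have h3 : volume.real E / Real.pi ≤ 1 := by
      rw [div_le_one Real.pi_pos]
      linarith [vol_real_le hEI, Real.pi_gt_three]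
    have h4 : ‖w Complex.I‖ ^ 2 ≤ volume.real E / Real.pi := by
      nlinarith [norm_nonneg (w Complex.I)]
    have h5 : Real.pi * (w Complex.I - w Complex.I ^ 2).re ≤
        Real.pi * (volume.real E / Real.pi + volume.real E / Real.pi) := by
      have := Real.pi_pos
      gcongr
      linarith
    have h6 : Real.pi * (volume.real E / Real.pi + volume.real E / Real.pi) = 2 * volume.real E := by
      have := Real.pi_pos.ne'
      field_simp
      ring
    linarith

/-- L² difference identity -/
lemma QE_diff_sq (hE : MeasurableSet E) (hEI : E ⊆ Ioo (-1) 1) {ε ε' : ℝ} (hε : 0 < ε)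
    (hε' : 0 < ε') :
    ∫⁻ x in Ioo (-2) 2, ENNReal.ofReal ((QE ε E x - QE ε' E x) ^ 2) ≤
      ENNReal.ofReal (5 * ((∫ x, (1 + x ^ 2)⁻¹ * (PE ε E x - PE ε' E x) ^ 2) + 
        Real.pi * ‖FE E (Complex.I + ε * Complex.I) - FE E (Complex.I + ε' * Complex.I)‖ ^ 2)) := by
  set w : ℂ → ℂ := fun z => FE E (z + ε * Complex.I) - FE E (z + ε' * Complex.I) with hw
  have hlim : Tendsto (fun z => w z ^ 2) (Bornology.cobounded ℂ ⊓ 𝓟 {z | 0 ≤ z.im})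
      (𝓝 ((0 - 0) ^ 2)) := by
    have h0 := FE_shift_tendsto hE hEI (ε * Complex.I)
    have h0' := FE_shift_tendsto hE hEI (ε' * Complex.I)
    exact (h0.sub h0').pow 2
  obtain ⟨hint, hval⟩ := mean_value_re (fun z => w z ^ 2) (fun z hz => by
    have h1 := FE_shift_diff hE hEI hε z hz
    have h1' := FE_shift_diff hE hEI hε' z hz
    exact (h1.sub h1').pow 2) _ hlim
  have hP : Integrable (fun x : ℝ => (1 + x ^ 2)⁻¹ * (PE ε E x - PE ε' E x) ^ 2) := by
    refine Integrable.mono' integrable_inv_one_add_sq ?_ ?_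
    · have h1 := (QE_continuous hE hEI hε).2
      have h2 := (QE_continuous hE hEI hε').2
      apply Measurable.aestronglyMeasurable
      fun_prop
    · refine ae_of_all _ fun x => ?_
      rw [Real.norm_of_nonneg (by positivity)]
      obtain ⟨h3, h4⟩ := PE_bounds (E := E) hε x
      obtain ⟨h3', h4'⟩ := PE_bounds (E := E) hε' x
      have : (PE ε E x - PE ε' E x) ^ 2 ≤ 1 := by nlinarith
      have h5 : (0:ℝ) ≤ (1 + x ^ 2)⁻¹ := by positivity
      nlinarith
  refine (sq_lintegral_le (hP.sub hint) ?_).trans ?_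
  · intro x
    obtain ⟨h1, h2⟩ := FE_eq hE hEI hε x
    obtain ⟨h1', h2'⟩ := FE_eq hE hEI hε' x
    have e : (w x ^ 2).re = (PE ε E x - PE ε' E x) ^ 2 - (QE ε E x - QE ε' E x) ^ 2 := by
      simp only [pow_two, Complex.sub_re, Complex.sub_im, Complex.mul_re, hw, h1, h2, h1', h2']
    simp only [Pi.sub_apply]
    rw [e]
    apply le_of_eq
    ring
  · apply ENNReal.ofReal_le_ofReal
    have e : ∫ x : ℝ, ((fun x : ℝ => (1 + x ^ 2)⁻¹ * (PE ε E x - PE ε' E x) ^ 2 : ℝ → ℝ) - 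
      (fun x : ℝ => (1 + x ^ 2)⁻¹ * (w x ^ 2).re : ℝ → ℝ)) x = 
        (∫ x, (1 + x ^ 2)⁻¹ * (PE ε E x - PE ε' E x) ^ 2) - Real.pi * (w Complex.I ^ 2).re := by
      rw [← hval, ← integral_sub hP hint]
      rfl
    rw [e]
    have h2 : -(w Complex.I ^ 2).re ≤ ‖w Complex.I‖ ^ 2 := by
      rw [← norm_pow]
      exact (neg_le_abs _).trans (Complex.abs_re_le_norm _)
    have := Real.pi_pos
    have h3 : Real.pi * -(w Complex.I ^ 2).re ≤ Real.pi * ‖w Complex.I‖ ^ 2 := by gcongr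
    have h4 : ‖w Complex.I‖ = ‖FE E (Complex.I + ε * Complex.I) - FE E (Complex.I + ε' * Complex.I)‖ := rfl
    rw [← h4]
    linarith

end
end

open MeasureTheory Set Filter
noncomputable section
set_option linter.unusedVariables false
set_option linter.style.haveILetI false
open scoped Topology ENNReal

section
variable {F : Type*} [NormedAddCommGroup F]

def omg (f : ℝ → F) (x r : ℝ) : ℝ := r⁻¹ * ∫ t in Metric.closedBall x r, ‖f t - f x‖

lemma omg_tendsto [NormedSpace ℝ F] {f : ℝ → F} (hf : Integrable f) :
    ∀ᵐ x, Tendsto (omg f x) (𝓝[>] 0) (𝓝 0) := by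
  filter_upwards [(Besicovitch.vitaliFamily (volume : Measure ℝ)).ae_tendsto_average_norm_sub
    hf.locallyIntegrable] with x hx
  have h1 := hx.comp (Besicovitch.tendsto_filterAt volume x)
  have h2 := h1.const_mul 2
  rw [mul_zero] at h2
  refine h2.congr' ?_
  filter_upwards [self_mem_nhdsWithin] with r (hr : 0 < r)
  rw [Function.comp, setAverage_eq, measureReal_def, Real.volume_closedBall,
    ENNReal.toReal_ofReal (by positivity), omg, smul_eq_mul, mul_inv]
  ring

lemma omg_nonneg (f : ℝ → F) {x r : ℝ} (hr : 0 < r) : 0 ≤ omg f x r := by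
  rw [omg]
  have : 0 ≤ ∫ t in Metric.closedBall x r, ‖f t - f x‖ := integral_nonneg fun t => norm_nonneg _
  positivity

lemma omg_bdd {f : ℝ → F} (hf : Integrable f) {x : ℝ} (hx : Tendsto (omg f x) (𝓝[>] 0) (𝓝 0)) :
    ∃ M : ℝ, ∀ r, 0 < r → omg f x r ≤ M := by
  have h1 : ∀ᶠ r in 𝓝[>] (0:ℝ), omg f x r < 1 := hx.eventually_lt_const one_pos
  obtain ⟨r0, hr0, h2⟩ := mem_nhdsGT_iff_exists_Ioc_subset.1 h1
  simp only [mem_Ioi] at hr0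
  refine ⟨max 1 (r0⁻¹ * (∫ t, ‖f t‖) + 2 * ‖f x‖), fun r hr => ?_⟩
  by_cases h : r ≤ r0
  · exact le_max_of_le_left (h2 ⟨hr, h⟩).le
  · apply le_max_of_le_right
    push Not at h
    have hb : ∫ t in Metric.closedBall x r, ‖f t - f x‖ ≤ (∫ t, ‖f t‖) + 2 * r * ‖f x‖ := by
      have i1 : IntegrableOn (fun t => ‖f t‖) (Metric.closedBall x r) := hf.norm.integrableOn
      have hc : volume (Metric.closedBall x r) < ∞ := by
        rw [Real.volume_closedBall]; exact ENNReal.ofReal_lt_top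
      have i2 : IntegrableOn (fun t : ℝ => ‖f x‖) (Metric.closedBall x r) :=
        integrableOn_const hc.ne
      have i3 : IntegrableOn (fun t : ℝ => ‖f t - f x‖) (Metric.closedBall x r) :=
        (hf.integrableOn.sub (integrableOn_const hc.ne)).norm
      calc _ ≤ ∫ t in Metric.closedBall x r, (‖f t‖ + ‖f x‖) :=
            setIntegral_mono i3 (i1.add i2) fun t => norm_sub_le _ _
        _ = (∫ t in Metric.closedBall x r, ‖f t‖) + ∫ t in Metric.closedBall x r, ‖f x‖ :=
            integral_add i1 i2
        _ ≤ _ := by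
            rw [setIntegral_const, measureReal_def, Real.volume_closedBall,
              ENNReal.toReal_ofReal (by positivity), smul_eq_mul]
            gcongr
            · exact ae_of_all _ fun t => norm_nonneg _
            · exact hf.norm
            · exact Measure.restrict_le_self
    rw [omg]
    calc r⁻¹ * _ ≤ r⁻¹ * ((∫ t, ‖f t‖) + 2 * r * ‖f x‖) := by gcongr
      _ = r⁻¹ * (∫ t, ‖f t‖) + 2 * ‖f x‖ := by field_simp
      _ ≤ _ := by
        have : 0 ≤ ∫ t, ‖f t‖ := integral_nonneg fun t => norm_nonneg _
        gcongr

lemma dyadic_pt {δ : ℝ} (hδ : 0 < δ) (s : ℝ) :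
    ∃ k : ℕ, |s| ≤ 2 ^ k * δ ∧ δ / (s ^ 2 + δ ^ 2) ≤ 4 * (1/4) ^ k / δ := by
  have hex : ∃ k : ℕ, |s| ≤ 2 ^ k * δ := by
    obtain ⟨k, hk⟩ := pow_unbounded_of_one_lt (|s| / δ) (one_lt_two)
    exact ⟨k, by rw [div_lt_iff₀ hδ] at hk; exact hk.le⟩
  classical
  refine ⟨Nat.find hex, Nat.find_spec hex, ?_⟩
  rcases hk : Nat.find hex with _ | k
  · rw [div_le_div_iff₀ (by positivity) hδ]
    nlinarith [sq_nonneg s, sq_nonneg δ]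
  · have := Nat.find_min hex (m := k) (by omega)
    push Not at this
    rw [div_le_div_iff₀ (by positivity) hδ]
    have h2 : (2 ^ k * δ) ^ 2 ≤ s ^ 2 := by
      rw [← sq_abs s]; gcongr
    have h3 : (1/4 : ℝ) ^ (k) * (2 ^ k) ^ 2 = 1 := by
      rw [← pow_mul, mul_comm k 2, pow_mul, ← mul_pow]; norm_num
    have h4 : (0:ℝ) < (1/4) ^ k := by positivity
    calc δ * δ = (1/4) ^ k * (2 ^ k * δ) ^ 2 := by rw [mul_pow, ← mul_assoc, h3]; ring
      _ ≤ (1/4) ^ k * s ^ 2 := by gcongr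
      _ ≤ _ := by rw [pow_succ (1/4 : ℝ) k]; nlinarith [mul_pos h4 (pow_pos hδ 2)]

lemma poisson_point {f : ℝ → F} (hf : Integrable f) {x : ℝ}
    (hx : Tendsto (omg f x) (𝓝[>] 0) (𝓝 0)) :
    Tendsto (fun δ : ℝ => ∫⁻ t, ‖f t - f x‖ₑ * ENNReal.ofReal (δ / ((x - t) ^ 2 + δ ^ 2)))
      (𝓝[>] 0) (𝓝 0) := by
  obtain ⟨M, hM⟩ := omg_bdd hf hx
  have hM0 : 0 ≤ M := (omg_nonneg f one_pos).trans (hM 1 one_pos)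
  have hsum : Summable fun k : ℕ => 4 * (1/2:ℝ) ^ k * M :=
    ((summable_geometric_of_lt_one (by norm_num) (by norm_num)).mul_left 4).mul_right M
  have key : Tendsto (fun δ : ℝ => ∑' k : ℕ, 4 * (1/2:ℝ) ^ k * omg f x (2 ^ k * δ))
      (𝓝[>] 0) (𝓝 (∑' k : ℕ, 0)) := by
    refine tendsto_tsum_of_dominated_convergence hsum ?_ ?_
    · intro k
      have h1 : Tendsto (fun δ : ℝ => 2 ^ k * δ) (𝓝[>] 0) (𝓝[>] 0) := by
        apply tendsto_nhdsWithin_of_tendsto_nhds_of_eventually_within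
        · have : Tendsto (fun δ : ℝ => 2 ^ k * δ) (𝓝 0) (𝓝 (2 ^ k * 0)) := by
            apply Continuous.tendsto; fun_prop
          rw [mul_zero] at this
          exact this.mono_left nhdsWithin_le_nhds
        · filter_upwards [self_mem_nhdsWithin] with δ (hδ : 0 < δ)
          simp only [mem_Ioi]; positivity
      have := (hx.comp h1).const_mul (4 * (1/2:ℝ) ^ k)
      rwa [mul_zero] at this
    · filter_upwards [self_mem_nhdsWithin] with δ (hδ : 0 < δ) k
      have h0 : 0 ≤ omg f x (2 ^ k * δ) := omg_nonneg f (by positivity)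
      rw [Real.norm_of_nonneg (by positivity)]
      gcongr
      exact hM _ (by positivity)
  rw [tsum_zero] at key
  have key2 := (ENNReal.continuous_ofReal.tendsto 0).comp key
  rw [ENNReal.ofReal_zero] at key2
  refine tendsto_of_tendsto_of_tendsto_of_le_of_le' tendsto_const_nhds key2
    (Eventually.of_forall fun _ => zero_le) ?_
  filter_upwards [self_mem_nhdsWithin] with δ (hδ : 0 < δ)
  have hme : AEMeasurable (fun t => ‖f t - f x‖ₑ) :=
    (hf.aestronglyMeasurable.sub aestronglyMeasurable_const).enorm
  have hmk : ∀ k : ℕ, AEMeasurable (fun t => ENNReal.ofReal (4 * (1/4) ^ k / δ) *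
      (Metric.closedBall x (2 ^ k * δ)).indicator (fun t => ‖f t - f x‖ₑ) t) := fun k =>
    (hme.indicator measurableSet_closedBall).const_mul _
  calc ∫⁻ t, ‖f t - f x‖ₑ * ENNReal.ofReal (δ / ((x - t) ^ 2 + δ ^ 2))
      ≤ ∫⁻ t, ∑' k : ℕ, ENNReal.ofReal (4 * (1/4) ^ k / δ) *
      (Metric.closedBall x (2 ^ k * δ)).indicator (fun t => ‖f t - f x‖ₑ) t := by
        apply lintegral_mono
        intro t
        obtain ⟨k, hk1, hk2⟩ := dyadic_pt hδ (x - t)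
        refine le_trans ?_ (ENNReal.le_tsum k)
        rw [indicator_of_mem]
        · beta_reduce
          rw [mul_comm ‖f t - f x‖ₑ]
          gcongr
        · rw [Metric.mem_closedBall, dist_comm, Real.dist_eq]; exact hk1
    _ = ∑' k : ℕ, ENNReal.ofReal (4 * (1/2:ℝ) ^ k * omg f x (2 ^ k * δ)) := by
        rw [lintegral_tsum hmk]
        congr 1
        ext k
        have hc : volume (Metric.closedBall x (2 ^ k * δ)) < ∞ := by
          rw [Real.volume_closedBall]; exact ENNReal.ofReal_lt_top
        have i3 : IntegrableOn (fun t : ℝ => f t - f x) (Metric.closedBall x (2 ^ k * δ)) :=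
          (hf.integrableOn.sub (integrableOn_const hc.ne))
        rw [lintegral_const_mul' _ _ ENNReal.ofReal_ne_top, lintegral_indicator measurableSet_closedBall,
          ← ofReal_integral_norm_eq_lintegral_enorm i3, ← ENNReal.ofReal_mul (by positivity), omg]
        congr 1
        have : (1/2:ℝ)^k = (1/4)^k * 2^k := by rw [← mul_pow]; norm_num
        rw [this]
        field_simp
    _ = ENNReal.ofReal (∑' k : ℕ, 4 * (1/2:ℝ) ^ k * omg f x (2 ^ k * δ)) := by
        rw [ENNReal.ofReal_tsum_of_nonneg]
        · intro k
          have h0 : 0 ≤ omg f x (2 ^ k * δ) := omg_nonneg f (by positivity)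
          positivity
        · refine Summable.of_nonneg_of_le (fun k => ?_) (fun k => ?_) hsum
          · have h0 : 0 ≤ omg f x (2 ^ k * δ) := omg_nonneg f (by positivity)
            positivity
          · gcongr
            exact hM _ (by positivity)
end
end

open MeasureTheory Set Filter
noncomputable section
set_option linter.unusedVariables false
set_option linter.style.haveILetI false
open scoped Topology ENNReal

section

def Qf (ε : ℝ) (f : ℝ → ℝ) (x : ℝ) : ℝ := ∫ t, Qk ε (x - t) * f t

lemma semigroup_aux {δ ε : ℝ} (hδ : 0 < δ) (hε : 0 < ε) (s : ℝ) :
    ∫ u : ℝ, (1 + u ^ 2)⁻¹ * Qk ε (s + δ * u) = Real.pi * Qk (δ + ε) s := by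
  set H : ℂ → ℂ := fun u => -Complex.I * (Complex.I / Real.pi / (((s + δ * u : ℂ)) + ε * Complex.I - (0:ℝ)))
    with hH
  have hne : ∀ z : ℂ, 0 ≤ z.im → (((s + δ * z : ℂ)) + ε * Complex.I - (0:ℝ)) ≠ 0 := by
    intro z hz
    apply sub_ne_of_im
    simp
    positivity
  have hd : ∀ z : ℂ, 0 ≤ z.im → DifferentiableAt ℂ H z := by
    intro z hz
    have := hne z hz
    fun_prop (disch := assumption)
  have h0 : Tendsto (fun z : ℂ => (((s + δ * z : ℂ)) + ε * Complex.I - (0:ℝ))) (Bornology.cobounded ℂ)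
      (Bornology.cobounded ℂ) := by
    rw [← tendsto_norm_atTop_iff_cobounded]
    have h1 : Tendsto (fun z : ℂ => δ * ‖z‖ - ‖(s + ε * Complex.I : ℂ)‖) (Bornology.cobounded ℂ) atTop :=
      tendsto_atTop_add_const_right _ _ (tendsto_norm_cobounded_atTop.const_mul_atTop hδ)
    refine tendsto_atTop_mono (fun z => ?_) h1
    have := norm_sub_norm_le (δ * z) (-(s + ε * Complex.I : ℂ))
    rw [norm_mul, Complex.norm_real, Real.norm_of_nonneg hδ.le, norm_neg] at this
    refine this.trans (le_of_eq ?_)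
    congr 1
    push_cast
    ring
  have hlim : Tendsto H (Bornology.cobounded ℂ ⊓ 𝓟 {z | 0 ≤ z.im}) (𝓝 0) := by
    have := ((tendsto_inv₀_cobounded.comp h0).const_mul (Complex.I / Real.pi)).const_mul (-Complex.I)
    rw [mul_zero, mul_zero] at this
    exact this.mono_left inf_le_left
  have hre : ∀ w : ℂ, (-Complex.I * w).re = w.im := by intro w; simp
  have h := (mean_value_re H hd 0 hlim).2
  have e1 : ∀ u : ℝ, (H u).re = Qk ε (s + δ * u) := by
    intro u
    rw [hH]
    beta_reduce
    rw [hre]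
    have := (kernel_re_im hε (s + δ * u) 0).2
    rw [sub_zero] at this
    rw [← this]
    push_cast
    rfl
  have e2 : (H Complex.I).re = Qk (δ + ε) s := by
    rw [hH]
    beta_reduce
    rw [hre]
    have := (kernel_re_im (add_pos hδ hε) s 0).2
    rw [sub_zero] at this
    rw [← this]
    congr 2
    push_cast
    ring
  rw [e2] at h
  rw [← h]
  congr 1
  ext u
  rw [e1]

lemma Qk_cont {ε : ℝ} (hε : 0 < ε) : Continuous (Qk ε) := by
  unfold Qk
  have : ∀ s : ℝ, s ^ 2 + ε ^ 2 ≠ 0 := fun s => by positivity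
  fun_prop (disch := assumption)

lemma Pk_cont {ε : ℝ} (hε : 0 < ε) : Continuous (Pk ε) := by
  unfold Pk
  have : ∀ s : ℝ, s ^ 2 + ε ^ 2 ≠ 0 := fun s => by positivity
  fun_prop (disch := assumption)

lemma Qk_meas (ε : ℝ) : Measurable (Qk ε) := by unfold Qk; fun_prop
lemma Pk_meas (ε : ℝ) : Measurable (Pk ε) := by unfold Pk; fun_prop

lemma Qk_bound {ε : ℝ} (hε : 0 < ε) (s : ℝ) : |Qk ε s| ≤ 1 / ε := by
  rw [Qk, abs_div, abs_div, abs_of_pos Real.pi_pos, abs_of_pos (by positivity : 0 < s ^ 2 + ε ^ 2),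
    div_div, div_le_div_iff₀ (by have := Real.pi_pos; positivity) hε, ← sq_abs s]
  have h1 := Real.pi_gt_three
  have h2 : |s| * ε ≤ |s| ^ 2 + ε ^ 2 := by nlinarith [sq_nonneg (|s| - ε), sq_nonneg |s|, sq_nonneg ε]
  nlinarith [sq_nonneg |s|, sq_nonneg ε]

lemma Qk_bound' (ε : ℝ) {s : ℝ} (hs : 1 ≤ |s|) : |Qk ε s| ≤ 1 := by
  have h0 : 0 < s ^ 2 := by rw [← sq_abs]; positivity
  rw [Qk, abs_div, abs_div, abs_of_pos Real.pi_pos, abs_of_pos (by positivity : 0 < s ^ 2 + ε ^ 2),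
    div_div, div_le_one (by have := Real.pi_pos; positivity), ← sq_abs s]
  have h1 := Real.pi_gt_three
  nlinarith [sq_nonneg |s|, sq_nonneg ε]

lemma Pk_bound {ε : ℝ} (hε : 0 < ε) (s : ℝ) : Pk ε s ≤ 1 / ε := by
  have h1 := Real.pi_gt_three
  rw [Pk, div_div, div_le_div_iff₀ (by positivity) hε]
  nlinarith [sq_nonneg s, sq_nonneg ε, mul_nonneg (sq_nonneg s) Real.pi_pos.le]

lemma semigroup {δ ε : ℝ} (hδ : 0 < δ) (hε : 0 < ε) (x t : ℝ) :
    ∫ y : ℝ, Pk δ (x - y) * Qk ε (y - t) = Qk (δ + ε) (x - t) := by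
  have h := semigroup_aux hδ hε (x - t)
  set G : ℝ → ℝ := fun y => Pk δ (x - y) * Qk ε (y - t) with hG
  have e2 := Measure.integral_comp_mul_left (fun v => G (x + v)) δ
  rw [integral_add_left_eq_self G x, abs_of_pos (by positivity), smul_eq_mul] at e2
  have e3 : ∀ u : ℝ, G (x + δ * u) = (Real.pi * δ)⁻¹ * ((1 + u ^ 2)⁻¹ * Qk ε (x - t + δ * u)) := by
    intro u
    simp only [hG, Pk]
    have h1 : x + δ * u - t = x - t + δ * u := by ring
    have := Real.pi_pos.ne'
    rw [h1]
    field_simp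
    ring
  simp_rw [e3] at e2
  rw [integral_const_mul, h] at e2
  have := Real.pi_pos.ne'
  field_simp at e2
  exact e2.symm

lemma Qf_semigroup {f : ℝ → ℝ} (hf : Integrable f) {δ ε : ℝ} (hδ : 0 < δ) (hε : 0 < ε) (x : ℝ) :
    Integrable (fun y => Pk δ (x - y) * Qf ε f y) ∧
    Qf (δ + ε) f x = ∫ y, Pk δ (x - y) * Qf ε f y := by
  have hP : Integrable (fun y => Pk δ (x - y)) := (Pk_integrable hδ).1.comp_sub_left x
  have hprod : Integrable (fun p : ℝ × ℝ => Pk δ (x - p.1) * (Qk ε (p.1 - p.2) * f p.2))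
      (volume.prod volume) := by
    have h1 : Integrable (fun p : ℝ × ℝ => Pk δ (x - p.1) * f p.2) (volume.prod volume) :=
      hP.mul_prod hf
    have h2 := h1.bdd_mul (c := 1 / ε) (f := fun p : ℝ × ℝ => Qk ε (p.1 - p.2)) ?_ ?_
    · refine h2.congr (ae_of_all _ fun p => ?_)
      simp only; ring
    · exact ((Qk_meas ε).comp (measurable_fst.sub measurable_snd)).aestronglyMeasurable
    · exact ae_of_all _ fun p => Qk_bound hε _
  have e1 : ∀ y, ∫ t, Pk δ (x - y) * (Qk ε (y - t) * f t) = Pk δ (x - y) * Qf ε f y := by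
    intro y
    rw [integral_const_mul, Qf]
  constructor
  · have := hprod.integral_prod_left
    simp only [e1] at this
    exact this
  · have := integral_integral_swap (f := fun y t => Pk δ (x - y) * (Qk ε (y - t) * f t)) hprod
    simp only [e1] at this
    rw [this, Qf]
    congr 1
    ext t
    rw [← semigroup hδ hε, ← integral_mul_const]
    congr 1
    ext y
    ring

lemma Qf_far {f : ℝ → ℝ} (hf : Integrable f) (hs : ∀ t, t ∉ Ioo (-1:ℝ) 1 → f t = 0) (ε : ℝ) {y : ℝ}
    (hy : y ∉ Ioo (-2:ℝ) 2) : |Qf ε f y| ≤ ∫ t, |f t| := by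
  rw [← Real.norm_eq_abs]
  refine norm_integral_le_of_norm_le hf.norm (ae_of_all _ fun t => ?_)
  by_cases ht : t ∈ Ioo (-1:ℝ) 1
  · rw [norm_mul, Real.norm_eq_abs]
    have h1 : 1 ≤ |y - t| := by
      simp only [mem_Ioo, not_and_or, not_lt] at hy
      rcases hy with h | h
      · rw [le_abs]; right; linarith [ht.1]
      · rw [le_abs]; left; linarith [ht.2]
    exact mul_le_of_le_one_left (norm_nonneg _) (Qk_bound' ε h1)
  · simp [hs t ht]

lemma Pk_far {δ : ℝ} (hδ : 0 < δ) {x : ℝ} (hx : x ∈ Ioo (-1:ℝ) 1) :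
    ∫ y in (Ioo (-2:ℝ) 2)ᶜ, Pk δ (x - y) ≤ 2 * δ := by
  have hP : Integrable (fun y => Pk δ (x - y)) := (Pk_integrable hδ).1.comp_sub_left x
  have hP1 : Integrable (fun y => 2 * δ * Pk 1 (x - y)) :=
    ((Pk_integrable one_pos).1.comp_sub_left x).const_mul _
  calc _ ≤ ∫ y in (Ioo (-2:ℝ) 2)ᶜ, 2 * δ * Pk 1 (x - y) := by
        refine setIntegral_mono_on hP.integrableOn hP1.integrableOn measurableSet_Ioo.compl ?_
        intro y hy
        have h1 : 1 ≤ (x - y) ^ 2 := by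
          simp only [mem_compl_iff, mem_Ioo, not_and_or, not_lt] at hy
          rcases hy with h | h
          · nlinarith [hx.1]
          · nlinarith [hx.2]
        have := Real.pi_pos
        rw [Pk, Pk, ← mul_div_assoc]
        gcongr
        rw [mul_one_div, div_le_div_iff₀ (by positivity) (by positivity)]
        nlinarith [mul_pos hδ (pow_pos hδ 2)]
    _ ≤ ∫ y, 2 * δ * Pk 1 (x - y) := setIntegral_le_integral hP1
        (ae_of_all _ fun y => by have := Pk_nonneg one_pos (x - y); positivity)
    _ = 2 * δ := by
        rw [integral_const_mul, integral_sub_left_eq_self (Pk 1), (Pk_integrable one_pos).2, mul_one]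

lemma Qf_cont_eps {f : ℝ → ℝ} (hf : Integrable f) {δ : ℝ} (hδ : 0 < δ) {e : ℕ → ℝ} (he : ∀ n, 0 < e n)
    (he0 : Tendsto e atTop (𝓝 0)) (x : ℝ) :
    Tendsto (fun n => Qf (δ + e n) f x) atTop (𝓝 (Qf δ f x)) := by
  refine tendsto_integral_of_dominated_convergence (fun t => 1 / δ * |f t|) ?_ (hf.norm.const_mul _) ?_ ?_
  · intro n
    exact ((Qk_meas _).comp (measurable_const.sub measurable_id)).aestronglyMeasurable.mul hf.1
  · intro n
    refine ae_of_all _ fun t => ?_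
    rw [norm_mul, Real.norm_eq_abs, Real.norm_eq_abs]
    gcongr
    refine (Qk_bound (add_pos hδ (he n)) _).trans ?_
    have := he n
    gcongr
    linarith
  · refine ae_of_all _ fun t => ?_
    have h1 : Tendsto (fun n => δ + e n) atTop (𝓝 δ) := by simpa using he0.const_add δ
    apply Tendsto.mul_const
    unfold Qk
    refine Tendsto.div_const (Tendsto.div tendsto_const_nhds ((h1.pow 2).const_add _) ?_) _
    positivity

lemma Qf_meas {f : ℝ → ℝ} (hf : Integrable f) {ε : ℝ} (hε : 0 < ε) : AEStronglyMeasurable (Qf ε f) := by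
  have h1 : AEStronglyMeasurable (fun p : ℝ × ℝ => (Qk ε (p.1 - p.2) * f p.2))
      (volume.prod volume) :=
    ((Qk_meas ε).comp (measurable_fst.sub measurable_snd)).aestronglyMeasurable.mul hf.1.comp_snd
  exact h1.integral_prod_right'

lemma Qf_approx {f g : ℝ → ℝ} (hf : Integrable f) (hs : ∀ t, t ∉ Ioo (-1:ℝ) 1 → f t = 0)
    (hg : IntegrableOn g (Ioo (-2) 2)) {e : ℕ → ℝ} (he : ∀ n, 0 < e n) (he0 : Tendsto e atTop (𝓝 0))
    (hlim : Tendsto (fun n => ∫⁻ y in Ioo (-2) 2, ‖Qf (e n) f y - g y‖ₑ) atTop (𝓝 0))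
    {x : ℝ} (hx : x ∈ Ioo (-1:ℝ) 1) {δ : ℝ} (hδ : 0 < δ) :
    |Qf δ f x - ∫ y in Ioo (-2) 2, Pk δ (x - y) * g y| ≤ 2 * δ * ∫ t, |f t| := by
  have hP : Integrable (fun y => Pk δ (x - y)) := (Pk_integrable hδ).1.comp_sub_left x
  have hPm : AEStronglyMeasurable (fun y => Pk δ (x - y)) := hP.1
  have h1 := Qf_cont_eps hf hδ he he0 x
  have h2 : Tendsto (fun n => ∫ y in Ioo (-2) 2, Pk δ (x - y) * Qf (e n) f y) atTop
      (𝓝 (∫ y in Ioo (-2) 2, Pk δ (x - y) * g y)) := by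
    refine tendsto_integral_of_L1 _ (hg.bdd_mul (c := 1 / δ) hPm.restrict ?_).1 ?_ ?_
    · refine ae_of_all _ fun y => ?_
      rw [Real.norm_of_nonneg (Pk_nonneg hδ _)]; exact Pk_bound hδ _
    · exact Eventually.of_forall fun n => (Qf_semigroup hf hδ (he n) x).1.integrableOn
    · have h3 : Tendsto (fun n => ENNReal.ofReal (1 / δ) * ∫⁻ y in Ioo (-2) 2, ‖Qf (e n) f y - g y‖ₑ)
          atTop (𝓝 0) := by
        have := ENNReal.Tendsto.const_mul hlim (a := ENNReal.ofReal (1 / δ)) (Or.inr ENNReal.ofReal_ne_top)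
        rwa [mul_zero] at this
      refine tendsto_of_tendsto_of_tendsto_of_le_of_le tendsto_const_nhds h3 (fun _ => zero_le) ?_
      intro n
      simp only
      rw [← lintegral_const_mul' _ _ ENNReal.ofReal_ne_top]
      apply lintegral_mono
      intro y
      simp only
      rw [← mul_sub, enorm_mul]
      gcongr
      rw [Real.enorm_eq_ofReal (Pk_nonneg hδ _)]
      exact ENNReal.ofReal_le_ofReal (Pk_bound hδ _)
  refine le_of_tendsto (h1.sub h2).abs (Eventually.of_forall fun n => ?_)
  obtain ⟨i1, i2⟩ := Qf_semigroup hf hδ (he n) x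
  rw [i2, ← integral_add_compl measurableSet_Ioo i1 (s := Ioo (-2) 2), add_sub_cancel_left]
  have hF : 0 ≤ ∫ t, |f t| := integral_nonneg fun t => abs_nonneg _
  calc _ ≤ ∫ y in (Ioo (-2:ℝ) 2)ᶜ, Pk δ (x - y) * ∫ t, |f t| := by
        rw [← Real.norm_eq_abs]
        refine norm_integral_le_of_norm_le (hP.mul_const _).integrableOn ?_
        filter_upwards [ae_restrict_mem measurableSet_Ioo.compl] with y hy
        rw [norm_mul, Real.norm_of_nonneg (Pk_nonneg hδ _), Real.norm_eq_abs]
        have := Pk_nonneg hδ (x - y)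
        gcongr
        exact Qf_far hf hs _ hy
    _ ≤ _ := by
        rw [integral_mul_const]
        gcongr
        exact Pk_far hδ hx

/-- generic kernel comparison -/
lemma kernel_tendsto {f : ℝ → ℝ} (hf : Integrable f) {x : ℝ}
    (hx : Tendsto (omg f x) (𝓝[>] 0) (𝓝 0)) {m : ℝ → ℝ → ℝ} (hm : ∀ δ, 0 < δ → Measurable (m δ)) {c : ℝ}
    (hb : ∀ δ s, 0 < δ → |m δ s| ≤ δ / (s ^ 2 + δ ^ 2)) (hc : ∀ δ, 0 < δ → ∫ s, m δ s = c) :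
    Tendsto (fun δ => ∫ t, m δ (x - t) * f t) (𝓝[>] 0) (𝓝 (c * f x)) := by
  have hp := poisson_point hf hx
  have : Tendsto (fun δ => (∫ t, m δ (x - t) * (f t - f x)) + c * f x) (𝓝[>] 0) (𝓝 (0 + c * f x)) := by
    apply Tendsto.add_const
    rw [tendsto_zero_iff_enorm_tendsto_zero]
    refine tendsto_of_tendsto_of_tendsto_of_le_of_le' tendsto_const_nhds hp
      (Eventually.of_forall fun _ => zero_le) ?_
    filter_upwards [self_mem_nhdsWithin] with δ (hδ : 0 < δ)
    refine (enorm_integral_le_lintegral_enorm _).trans (lintegral_mono fun t => ?_)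
    simp only
    rw [enorm_mul, mul_comm]
    gcongr
    rw [Real.enorm_eq_ofReal_abs]
    exact ENNReal.ofReal_le_ofReal (hb δ _ hδ)
  rw [zero_add] at this
  refine this.congr' ?_
  filter_upwards [self_mem_nhdsWithin] with δ (hδ : 0 < δ)
  have hbd : ∀ s, ‖m δ s‖ ≤ 1 / δ := by
    intro s
    refine (hb δ s hδ).trans ?_
    rw [div_le_div_iff₀ (by positivity) hδ]
    nlinarith [sq_nonneg s]
  have hmi : Integrable (m δ) := by
    have h1 := (Pk_integrable hδ).1.const_mul Real.pi
    refine h1.mono' (hm δ hδ).aestronglyMeasurable (ae_of_all _ fun s => ?_)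
    rw [Pk, mul_div_cancel₀ _ Real.pi_pos.ne']
    exact hb δ s hδ
  have i1 : Integrable (fun t => m δ (x - t) * f t) := by
    refine hf.bdd_mul (c := 1 / δ) ?_ (ae_of_all _ fun t => hbd _)
    exact ((hm δ hδ).comp (measurable_const.sub measurable_id)).aestronglyMeasurable
  have i2 : Integrable (fun t => m δ (x - t) * f x) := (hmi.comp_sub_left x).mul_const _
  simp_rw [mul_sub]
  rw [integral_sub i1 i2, integral_mul_const, integral_sub_left_eq_self (m δ), hc δ hδ]
  ring

lemma poisson_tendsto {f : ℝ → ℝ} (hf : Integrable f) {x : ℝ}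
    (hx : Tendsto (omg f x) (𝓝[>] 0) (𝓝 0)) :
    Tendsto (fun δ => ∫ t, Pk δ (x - t) * f t) (𝓝[>] 0) (𝓝 (f x)) := by
  have := kernel_tendsto hf hx (m := Pk) (c := 1) (fun δ _ => Pk_meas δ) ?_ 
    (fun δ hδ => (Pk_integrable hδ).2)
  · simpa using this
  · intro δ s hδ
    rw [abs_of_nonneg (Pk_nonneg hδ s), Pk]
    exact div_le_self (by positivity) (by linarith [Real.pi_gt_three])

def mker (δ s : ℝ) : ℝ := (if δ ≤ |s| then (Real.pi * s)⁻¹ else 0) - Qk δ s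

lemma mker_bound {δ : ℝ} (s : ℝ) (hδ : 0 < δ) : |mker δ s| ≤ δ / (s ^ 2 + δ ^ 2) := by
  have hpi := Real.pi_gt_three
  have hpi0 := Real.pi_pos
  rw [mker]
  split_ifs with h
  · have hs : s ≠ 0 := by rintro rfl; simp at h; linarith
    have hs' : 0 < |s| := abs_pos.2 hs
    have e : (Real.pi * s)⁻¹ - Qk δ s = δ ^ 2 / (Real.pi * s * (s ^ 2 + δ ^ 2)) := by
      rw [Qk]; field_simp; ring
    rw [e, abs_div, abs_mul, abs_mul, abs_of_pos hpi0, abs_of_pos (by positivity : 0 < s ^ 2 + δ ^ 2),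
      abs_of_pos (by positivity : 0 < δ ^ 2), div_le_div_iff₀ (by positivity) (by positivity)]
    have h9 : |s| ≤ Real.pi * |s| := le_mul_of_one_le_left hs'.le (by linarith)
    have : δ ^ 2 ≤ δ * (Real.pi * |s|) := by rw [pow_two]; gcongr; linarith
    calc δ ^ 2 * (s ^ 2 + δ ^ 2) ≤ δ * (Real.pi * |s|) * (s ^ 2 + δ ^ 2) := by gcongr
      _ = _ := by ring
  · push Not at h
    rw [zero_sub, abs_neg, Qk, abs_div, abs_div, abs_of_pos hpi0, abs_of_pos (by positivity : 0 < s ^ 2 + δ ^ 2)]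
    refine (div_le_self (by positivity) (by linarith)).trans ?_
    gcongr

lemma mker_meas (δ : ℝ) : Measurable (mker δ) := by
  unfold mker
  refine Measurable.sub (Measurable.ite ?_ (by fun_prop) measurable_const) (Qk_meas δ)
  exact measurableSet_le measurable_const measurable_norm

lemma mker_int (δ : ℝ) : ∫ s, mker δ s = 0 := by
  have h := integral_neg_eq_self (mker δ) volume
  have e : ∀ s, mker δ (-s) = - mker δ s := by
    intro s
    simp only [mker, Qk, abs_neg]
    split_ifs
    · rw [mul_neg, inv_neg]; ring
    · ring
  simp_rw [e] at h
  rw [integral_neg] at h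
  linarith

theorem pv_exists {f g : ℝ → ℝ} (hf : Integrable f) (hs : ∀ t, t ∉ Ioo (-1:ℝ) 1 → f t = 0)
    (hg : IntegrableOn g (Ioo (-2) 2)) {e : ℕ → ℝ} (he : ∀ n, 0 < e n) (he0 : Tendsto e atTop (𝓝 0))
    (hlim : Tendsto (fun n => ∫⁻ y in Ioo (-2) 2, ‖Qf (e n) f y - g y‖ₑ) atTop (𝓝 0)) :
    ∀ᵐ x, x ∈ Ioo (-1:ℝ) 1 → Tendsto (fun δ => ∫ t in {t | δ ≤ |t - x|}, f t * (Real.pi * (x - t))⁻¹)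
      (𝓝[>] 0) (𝓝 (g x)) := by
  have hG : Integrable ((Ioo (-2:ℝ) 2).indicator g) := hg.integrable_indicator measurableSet_Ioo
  filter_upwards [omg_tendsto hf, omg_tendsto hG] with x h1 h2 hx
  have h3 := poisson_tendsto hG h2
  have h4 : (Ioo (-2:ℝ) 2).indicator g x = g x :=
    indicator_of_mem (show x ∈ Ioo (-2:ℝ) 2 from ⟨by linarith [hx.1], by linarith [hx.2]⟩) _
  rw [h4] at h3
  have h5 := kernel_tendsto hf h1 (m := mker) (c := 0) (fun δ _ => mker_meas δ)
    (fun δ s hδ => mker_bound s hδ) (fun δ _ => mker_int δ)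
  rw [zero_mul] at h5
  have h6 : Tendsto (fun δ => Qf δ f x - ∫ y in Ioo (-2) 2, Pk δ (x - y) * g y) (𝓝[>] 0) (𝓝 0) := by
    have h7 : Tendsto (fun δ : ℝ => 2 * δ * ∫ t, |f t|) (𝓝[>] 0) (𝓝 0) := by
      have : Tendsto (fun δ : ℝ => 2 * δ * ∫ t, |f t|) (𝓝 0) (𝓝 (2 * 0 * ∫ t, |f t|)) := by
        apply Continuous.tendsto; fun_prop
      rw [mul_zero, zero_mul] at this
      exact this.mono_left nhdsWithin_le_nhds
    refine squeeze_zero_norm' ?_ h7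
    filter_upwards [self_mem_nhdsWithin] with δ (hδ : 0 < δ)
    exact Qf_approx hf hs hg he he0 hlim hx hδ
  have h8 := (h5.add h6).add h3
  rw [zero_add, zero_add] at h8
  refine h8.congr' ?_
  filter_upwards [self_mem_nhdsWithin] with δ (hδ : 0 < δ)
  have e1 : ∫ t, Pk δ (x - t) * (Ioo (-2:ℝ) 2).indicator g t = ∫ y in Ioo (-2) 2, Pk δ (x - y) * g y := by
    rw [← integral_indicator measurableSet_Ioo]
    congr 1
    ext t
    by_cases ht : t ∈ Ioo (-2:ℝ) 2 <;> simp [ht]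
  have hms : MeasurableSet {t : ℝ | δ ≤ |t - x|} :=
    measurableSet_le measurable_const (by fun_prop)
  have i0 : Integrable (fun t => mker δ (x - t) * f t) := by
    refine hf.bdd_mul (c := 1 / δ) ((mker_meas δ).comp (measurable_const.sub measurable_id)).aestronglyMeasurable (ae_of_all _ fun t => ?_)
    refine (mker_bound _ hδ).trans ?_
    rw [div_le_div_iff₀ (by positivity) hδ]
    nlinarith [sq_nonneg (x - t)]
  have i1 : Integrable (fun t => Qk δ (x - t) * f t) :=
    hf.bdd_mul (c := 1 / δ) ((Qk_meas δ).comp (measurable_const.sub measurable_id)).aestronglyMeasurable (ae_of_all _ fun t => Qk_bound hδ _)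
  have e2 : ∫ t in {t | δ ≤ |t - x|}, f t * (Real.pi * (x - t))⁻¹ =
      (∫ t, mker δ (x - t) * f t) + Qf δ f x := by
    rw [Qf, ← integral_add i0 i1, ← integral_indicator hms]
    congr 1
    ext t
    rw [← add_mul, mker, sub_add_cancel, abs_sub_comm]
    by_cases h : δ ≤ |t - x|
    · rw [indicator_of_mem (by exact h), if_pos h, mul_comm]
    · rw [indicator_of_notMem (by exact h), if_neg h, zero_mul]
  rw [e1, e2]
  ring
end
end

open MeasureTheory Set Filter
noncomputable section
set_option linter.unusedVariables false
set_option linter.style.haveILetI false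
open scoped Topology ENNReal

section

def Lg (s : ℝ) : ℝ := Real.log (2 * Real.exp 1 / s)

lemma Lg_eq {s : ℝ} (hs : 0 < s) : Lg s = 1 + Real.log (2 / s) := by
  rw [Lg, mul_div_right_comm, Real.log_mul (by positivity) (Real.exp_ne_zero _), Real.log_exp, add_comm]

lemma Lg_ge_one {s : ℝ} (hs : 0 < s) (hs2 : s ≤ 2) : 1 ≤ Lg s := by
  rw [Lg_eq hs]
  have : 0 ≤ Real.log (2 / s) := Real.log_nonneg (by rw [le_div_iff₀ hs]; linarith)
  linarith

lemma Lg_anti {s t : ℝ} (hs : 0 < s) (hst : s ≤ t) : Lg t ≤ Lg s := by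
  rw [Lg, Lg]
  have := hs.trans_le hst
  apply Real.log_le_log (by positivity)
  gcongr

lemma Lg_weight {a ρ β : ℝ} (hβ : 0 ≤ β) (ha : 0 < a) (ha2 : a ≤ 2) (hρ : 0 < ρ) (hρ2 : ρ ≤ 2) :
    Lg ρ ^ β ≤ (4 * β + 5) ^ β * Lg a ^ β * (1 + (if ρ < a then (a / ρ) ^ (1/4 : ℝ) else 0)) := by
  have hLa := Lg_ge_one ha ha2
  have hLρ := Lg_ge_one hρ hρ2
  split_ifs with h
  · have h1 : Lg ρ = Lg a + Real.log (a / ρ) := by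
      rw [Lg_eq ha, Lg_eq hρ, add_assoc, ← Real.log_mul (by positivity) (by positivity)]
      congr 2; field_simp
    have h1' : 1 ≤ a / ρ := by rw [le_div_iff₀ hρ]; linarith
    have hlog0 : 0 ≤ Real.log (a / ρ) := Real.log_nonneg h1'
    set e : ℝ := 1 / (4 * (β + 1)) with he
    have he0 : 0 < e := by positivity
    have h2 := Real.log_le_rpow_div (zero_le_one.trans h1') he0
    have h3 : 1 ≤ (a / ρ) ^ e := Real.one_le_rpow h1' he0.le
    have h4 : 1 + Real.log (a / ρ) ≤ (4 * β + 5) * (a / ρ) ^ e := by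
      have : (a / ρ) ^ e / e = (4 * (β + 1)) * (a / ρ) ^ e := by rw [he]; field_simp
      rw [this] at h2
      nlinarith
    have h5 : Lg ρ ≤ (4 * β + 5) * Lg a * (a / ρ) ^ e := by
      calc Lg ρ ≤ Lg a * (1 + Real.log (a / ρ)) := by rw [h1]; nlinarith
        _ ≤ Lg a * ((4 * β + 5) * (a / ρ) ^ e) := by gcongr
        _ = _ := by ring
    have h6 : ((a / ρ) ^ e) ^ β ≤ (a / ρ) ^ (1/4 : ℝ) := by
      rw [← Real.rpow_mul (by positivity)]
      apply Real.rpow_le_rpow_of_exponent_le h1'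
      rw [he, div_mul_eq_mul_div, div_le_div_iff₀ (by positivity) (by positivity)]
      linarith
    calc Lg ρ ^ β ≤ ((4 * β + 5) * Lg a * (a / ρ) ^ e) ^ β := by gcongr
      _ = (4 * β + 5) ^ β * Lg a ^ β * ((a / ρ) ^ e) ^ β := by
          rw [Real.mul_rpow (by positivity) (by positivity), Real.mul_rpow (by positivity) (by positivity)]
      _ ≤ _ := by gcongr; linarith
  · push Not at h
    rw [add_zero, mul_one, ← Real.mul_rpow (by positivity) (by positivity)]
    have := Lg_anti ha h
    gcongr
    nlinarith

lemma meas_mono_ae' {μ : Measure ℝ} {s t : Set ℝ} (h : ∀ᵐ x ∂μ, x ∈ s → x ∈ t) : μ s ≤ μ t := by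
  apply measure_mono_ae
  rw [ae_le_set]
  rw [ae_iff] at h
  refine measure_mono_null (fun x hx => ?_) h
  simp only [mem_ofPred_eq, Classical.not_imp]
  exact hx

structure RankLike (ρ : ℝ → ℝ) : Prop where
  meas : Measurable ρ
  le2 : ∀ x ∈ Ioo (-1:ℝ) 1, ρ x ≤ 2
  vol : ∀ r, 0 < r → volume (Ioo (-1:ℝ) 1 ∩ {x | ρ x < r}) ≤ ENNReal.ofReal r

lemma RankLike.pos {ρ : ℝ → ℝ} (h : RankLike ρ) : ∀ᵐ x ∂(volume.restrict (Ioo (-1:ℝ) 1)), 0 < ρ x := by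
  rw [ae_iff, Measure.restrict_apply' measurableSet_Ioo]
  apply le_antisymm _ zero_le
  have h1 : Tendsto (fun r : ℝ => ENNReal.ofReal r) (𝓝[>] 0) (𝓝 0) := by
    have := (ENNReal.continuous_ofReal.tendsto 0)
    rw [ENNReal.ofReal_zero] at this
    exact this.mono_left nhdsWithin_le_nhds
  refine ge_of_tendsto h1 ?_
  filter_upwards [self_mem_nhdsWithin] with r (hr : 0 < r)
  refine (measure_mono ?_).trans (h.vol r hr)
  rintro x ⟨hx1, hx2⟩
  refine ⟨hx2, ?_⟩
  simp only [mem_ofPred_eq, not_lt] at hx1 ⊢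
  linarith

lemma RankLike.int {ρ : ℝ → ℝ} (h : RankLike ρ) {s : ℝ} (hs : 0 < s) :
    ∫⁻ x in Ioo (-1:ℝ) 1, ENNReal.ofReal (if ρ x < s then (s / ρ x) ^ (3/4:ℝ) else 0) ≤
      ENNReal.ofReal (4 * s) := by
  have hpos := h.pos
  have hm := h.meas
  have hmf : Measurable (fun x => if ρ x < s then (s / ρ x) ^ (3/4:ℝ) else 0) := 
    Measurable.ite (measurableSet_lt hm measurable_const) (by fun_prop) measurable_const
  rw [lintegral_eq_lintegral_meas_lt _ ?_ hmf.aemeasurable]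
  · have hb1 : ∀ t : ℝ, 0 < t → (volume.restrict (Ioo (-1:ℝ) 1)) {x | t < if ρ x < s then (s / ρ x) ^ (3/4:ℝ) else 0}
        ≤ ENNReal.ofReal s := by
      intro t ht
      rw [Measure.restrict_apply' measurableSet_Ioo, inter_comm]
      refine (measure_mono ?_).trans (h.vol s hs)
      rintro x ⟨hx1, hx2⟩
      refine ⟨hx1, ?_⟩
      simp only [mem_ofPred_eq] at hx2 ⊢
      by_contra hc
      rw [if_neg hc] at hx2
      linarith
    have hb2 : ∀ t : ℝ, 0 < t → (volume.restrict (Ioo (-1:ℝ) 1)) {x | t < if ρ x < s then (s / ρ x) ^ (3/4:ℝ) else 0}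
        ≤ ENNReal.ofReal (s * t ^ (-4/3 : ℝ)) := by
      intro t ht
      have h0 : 0 < s * t ^ (-4/3 : ℝ) := by positivity
      refine le_trans ?_ (h.vol _ h0)
      rw [inter_comm, ← Measure.restrict_apply' measurableSet_Ioo]
      apply meas_mono_ae'
      filter_upwards [hpos] with x hx hx2
      replace hx2 : t < (if ρ x < s then (s / ρ x) ^ (3/4:ℝ) else 0) := hx2
      show ρ x < _
      split_ifs at hx2 with hc
      · have h3 : t ^ (4/3 : ℝ) < s / ρ x := by
          have := Real.rpow_lt_rpow ht.le hx2 (show (0:ℝ) < 4/3 by norm_num)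
          rw [← Real.rpow_mul (by positivity)] at this
          norm_num at this
          exact this
        rw [lt_div_iff₀ hx] at h3
        have h4 : t ^ (-4/3 : ℝ) = (t ^ (4/3:ℝ))⁻¹ := by rw [← Real.rpow_neg ht.le]; norm_num
        rw [h4, ← div_eq_mul_inv, lt_div_iff₀ (by positivity)]
        linarith
      · linarith
    calc _ ≤ ∫⁻ t in Ioi (0:ℝ), ((Ioc (0:ℝ) 1).indicator (fun _ => ENNReal.ofReal s) t + 
          (Ioi (1:ℝ)).indicator (fun t => ENNReal.ofReal (s * t ^ (-4/3 : ℝ))) t) := by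
          apply setLIntegral_mono' measurableSet_Ioi
          intro t (ht : 0 < t)
          by_cases h1 : t ≤ 1
          · rw [indicator_of_mem (by exact ⟨ht, h1⟩)]
            exact (hb1 t ht).trans le_self_add
          · push Not at h1
            rw [indicator_of_mem (by exact h1) (fun t => ENNReal.ofReal (s * t ^ (-4/3 : ℝ)))]
            exact (hb2 t ht).trans le_add_self
      _ ≤ ∫⁻ t, ((Ioc (0:ℝ) 1).indicator (fun _ => ENNReal.ofReal s) t + 
          (Ioi (1:ℝ)).indicator (fun t => ENNReal.ofReal (s * t ^ (-4/3 : ℝ))) t) :=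
          setLIntegral_le_lintegral _ _
      _ = ENNReal.ofReal s + ENNReal.ofReal (3 * s) := by
          rw [lintegral_add_left (measurable_const.indicator measurableSet_Ioc),
            lintegral_indicator measurableSet_Ioc, lintegral_indicator measurableSet_Ioi,
            setLIntegral_const, Real.volume_Ioc, ← ofReal_integral_eq_lintegral_ofReal, integral_const_mul,
            integral_Ioi_rpow_of_lt (by norm_num) one_pos]
          · norm_num
            rw [ENNReal.ofReal_mul hs.le]
            norm_num
            ring
          · exact (integrableOn_Ioi_rpow_of_lt (by norm_num) one_pos).const_mul s
          · filter_upwards [ae_restrict_mem measurableSet_Ioi] with t (ht : 1 < t)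
            have : 0 < t := by linarith
            simp only [Pi.zero_apply]
            positivity
      _ = _ := by rw [← ENNReal.ofReal_add hs.le (by positivity)]; congr 1; ring
  · filter_upwards [hpos] with x hx
    simp only [Pi.zero_apply]
    split_ifs
    · positivity
    · exact le_rfl

lemma log_weak {A : ℝ → ℝ} (hA : ∀ x, 0 ≤ A x) (hm : Measurable A) {S : Set ℝ} (hS : MeasurableSet S)
    (hS4 : volume S ≤ 4) {K a : ℝ} (hK : 2 ≤ K) (ha : 0 < a) (ha2 : a ≤ 2)
    (hw : ∀ lam, 0 < lam → volume (S ∩ {x | lam < A x}) ≤ ENNReal.ofReal (K * a / lam)) :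
    ∫⁻ x in S, ENNReal.ofReal (min (A x) 1) ≤ ENNReal.ofReal (K * a * Lg a) := by
  have hmf : Measurable (fun x => min (A x) 1) := hm.min measurable_const
  rw [lintegral_eq_lintegral_meas_lt _ (ae_of_all _ fun x => le_min (hA x) zero_le_one) hmf.aemeasurable]
  have hL : 0 ≤ Real.log (2 / a) := Real.log_nonneg (by rw [le_div_iff₀ ha]; linarith)
  calc _ ≤ ∫⁻ t in Ioi (0:ℝ), ((Ioc (0:ℝ) (a/2)).indicator (fun _ => 4) t + 
          (Ioc (a/2) 1).indicator (fun t => ENNReal.ofReal (K * a * t⁻¹)) t) := by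
        apply setLIntegral_mono' measurableSet_Ioi
        intro t (ht : 0 < t)
        rw [Measure.restrict_apply' hS, inter_comm]
        by_cases h1 : t ≤ a / 2
        · rw [indicator_of_mem (by exact ⟨ht, h1⟩)]
          exact ((measure_mono inter_subset_left).trans hS4).trans le_self_add
        · push Not at h1
          by_cases h2 : t ≤ 1
          · rw [indicator_of_mem (by exact ⟨h1, h2⟩) (fun t => ENNReal.ofReal (K * a * t⁻¹))]
            refine le_trans ?_ le_add_self
            rw [← div_eq_mul_inv]
            refine (measure_mono ?_).trans (hw t ht)
            rintro x ⟨hx1, hx2⟩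
            simp only [mem_ofPred_eq, lt_min_iff] at hx2
            exact ⟨hx1, hx2.1⟩
          · have : S ∩ {x | t < min (A x) 1} = ∅ := by
              ext x
              simp only [mem_inter_iff, mem_ofPred_eq, lt_min_iff, mem_empty_iff_false, iff_false]
              rintro ⟨_, _, h⟩
              linarith
            rw [this, measure_empty]
            exact zero_le
    _ ≤ ∫⁻ t, ((Ioc (0:ℝ) (a/2)).indicator (fun _ => 4) t + 
          (Ioc (a/2) 1).indicator (fun t => ENNReal.ofReal (K * a * t⁻¹)) t) :=
          setLIntegral_le_lintegral _ _
    _ = ENNReal.ofReal (2 * a) + ENNReal.ofReal (K * a * Real.log (2 / a)) := by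
        rw [lintegral_add_left (measurable_const.indicator measurableSet_Ioc),
            lintegral_indicator measurableSet_Ioc, lintegral_indicator measurableSet_Ioc,
            setLIntegral_const, Real.volume_Ioc, ← ofReal_integral_eq_lintegral_ofReal, integral_const_mul,
            ← intervalIntegral.integral_of_le (by linarith), integral_inv_of_pos (by positivity) one_pos]
        · congr 1
          · rw [show (4:ℝ≥0∞) = ENNReal.ofReal 4 by norm_num, ← ENNReal.ofReal_mul (by norm_num)]
            congr 1; ring
          · congr 3; field_simp
        · apply Integrable.const_mul
          rw [← IntegrableOn, ← intervalIntegrable_iff_integrableOn_Ioc_of_le (by linarith)]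
          apply intervalIntegral.intervalIntegrable_inv
          · intro t ht
            rw [uIcc_of_le (by linarith)] at ht
            have := ht.1
            have : 0 < t := by linarith
            exact this.ne'
          · fun_prop
        · filter_upwards [ae_restrict_mem measurableSet_Ioc] with t ht
          have : 0 < t := by linarith [ht.1]
          simp only [Pi.zero_apply]
          positivity
    _ ≤ _ := by
        rw [← ENNReal.ofReal_add (by positivity) (by positivity)]
        apply ENNReal.ofReal_le_ofReal
        rw [Lg_eq ha]
        nlinarith
end
end

open MeasureTheory Set Filter
noncomputable section
set_option linter.unusedVariables false
set_option linter.style.haveILetI false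
open scoped Topology ENNReal

section

lemma young_pt {A ρ a : ℝ} (hA : 0 ≤ A) (hρ : 0 < ρ) (ha : 0 < a) :
    A * (1 + (if ρ < a then (a / ρ) ^ (1/4 : ℝ) else 0)) ≤
      2 * min A 1 + (3 * (if 1 < A then A ^ (3/2:ℝ) else 0) + (if ρ < a then (a / ρ) ^ (3/4:ℝ) else 0)) := by
  set B : ℝ := (if ρ < a then (a / ρ) ^ (1/4 : ℝ) else 0) with hB
  set R : ℝ := (if ρ < a then (a / ρ) ^ (3/4 : ℝ) else 0) with hR
  have hB0 : 0 ≤ B := by rw [hB]; split_ifs <;> positivity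
  have hR3 : B ^ 3 = R := by
    rw [hB, hR]
    split_ifs
    · rw [← Real.rpow_natCast, ← Real.rpow_mul (by positivity)]; norm_num
    · norm_num
  have hBR : B ≤ R := by
    rw [hB, hR]
    split_ifs with h
    · apply Real.rpow_le_rpow_of_exponent_le _ (by norm_num)
      rw [le_div_iff₀ hρ]; linarith
    · exact le_rfl
  by_cases h : 1 < A
  · rw [if_pos h, min_eq_right h.le]
    have h1 : A ≤ A ^ (3/2:ℝ) := by
      conv_lhs => rw [← Real.rpow_one A]
      exact Real.rpow_le_rpow_of_exponent_le h.le (by norm_num)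
    have h2 : A * B ≤ A ^ (3/2:ℝ) + B ^ 3 := by
      have h3 : A ^ (3/2:ℝ) = A * Real.sqrt A := by
        rw [Real.sqrt_eq_rpow, ← Real.rpow_one_add' hA (by norm_num)]; norm_num
      by_cases h4 : B ≤ Real.sqrt A
      · rw [h3]
        have : A * B ≤ A * Real.sqrt A := by gcongr
        have : 0 ≤ B ^ 3 := by positivity
        linarith
      · push Not at h4
        have h5 : A ≤ B ^ 2 := by
          rw [Real.sqrt_lt' (lt_of_le_of_lt (Real.sqrt_nonneg _) h4)] at h4
          exact h4.le
        have : A * B ≤ B ^ 2 * B := by gcongr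
        have h6 : 0 ≤ A ^ (3/2:ℝ) := by positivity
        nlinarith
    rw [hR3] at h2
    have : 0 ≤ A ^ (3/2:ℝ) := by positivity
    linarith
  · rw [if_neg h]
    push Not at h
    rw [min_eq_left h]
    nlinarith

lemma lemD {A ρ : ℝ → ℝ} (hA : ∀ x, 0 ≤ A x) (hm : Measurable A) (hρ : RankLike ρ) {β K a : ℝ}
    (hβ : 0 ≤ β) (hK : 0 ≤ K) (ha : 0 < a) (ha2 : a ≤ 2)
    (h1 : ∫⁻ x in Ioo (-1:ℝ) 1, ENNReal.ofReal (min (A x) 1) ≤ ENNReal.ofReal (K * a * Lg a))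
    (h2 : ∫⁻ x in Ioo (-1:ℝ) 1, ENNReal.ofReal (if 1 < A x then A x ^ (3/2:ℝ) else 0) ≤
      ENNReal.ofReal (K * a)) :
    ∫⁻ x in Ioo (-1:ℝ) 1, ENNReal.ofReal (A x * Lg (ρ x) ^ β) ≤
      ENNReal.ofReal ((4 * β + 5) ^ β * (5 * K + 4) * (a * Lg a ^ (1 + β))) := by
  have hL := Lg_ge_one ha ha2
  set c : ℝ := (4 * β + 5) ^ β * Lg a ^ β with hc
  have hc0 : 0 ≤ c := by positivity
  have hm1 : Measurable (fun x => ENNReal.ofReal (2 * min (A x) 1)) :=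
    ((hm.min measurable_const).const_mul 2).ennreal_ofReal
  have hm2' : Measurable (fun x => (if 1 < A x then A x ^ (3/2:ℝ) else 0)) := 
    Measurable.ite (measurableSet_lt measurable_const hm) (by fun_prop) measurable_const
  have hm2 : Measurable (fun x => ENNReal.ofReal (3 * (if 1 < A x then A x ^ (3/2:ℝ) else 0))) := 
    (hm2'.const_mul 3).ennreal_ofReal
  calc _ ≤ ∫⁻ x in Ioo (-1:ℝ) 1, ENNReal.ofReal c * (ENNReal.ofReal (2 * min (A x) 1) +
          (ENNReal.ofReal (3 * (if 1 < A x then A x ^ (3/2:ℝ) else 0)) +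
          ENNReal.ofReal (if ρ x < a then (a / ρ x) ^ (3/4:ℝ) else 0))) := by
        apply lintegral_mono_ae
        filter_upwards [hρ.pos, ae_restrict_mem measurableSet_Ioo] with x hx hxI
        have hd : 0 ≤ (if 1 < A x then A x ^ (3/2:ℝ) else 0) := by
          have := hA x; split_ifs <;> positivity
        have hr : 0 ≤ (if ρ x < a then (a / ρ x) ^ (3/4:ℝ) else 0) := by split_ifs <;> positivity
        have hmn : 0 ≤ min (A x) 1 := le_min (hA x) zero_le_one
        rw [← ENNReal.ofReal_add (by positivity) hr, ← ENNReal.ofReal_add (by positivity) (by positivity),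
          ← ENNReal.ofReal_mul hc0]
        apply ENNReal.ofReal_le_ofReal
        have hw := Lg_weight hβ ha ha2 hx (hρ.le2 x hxI)
        have hy := young_pt (hA x) hx ha
        calc _ ≤ A x * (c * (1 + if ρ x < a then (a / ρ x) ^ (1 / 4:ℝ) else 0)) := by
              have := hA x
              gcongr
          _ = c * (A x * (1 + if ρ x < a then (a / ρ x) ^ (1 / 4:ℝ) else 0)) := by ring
          _ ≤ _ := by gcongr
    _ ≤ ENNReal.ofReal c * (ENNReal.ofReal (2 * (K * a * Lg a)) + (ENNReal.ofReal (3 * (K * a)) +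
          ENNReal.ofReal (4 * a))) := by
        rw [lintegral_const_mul' _ _ ENNReal.ofReal_ne_top, lintegral_add_left hm1, lintegral_add_left hm2]
        gcongr
        · rw [ENNReal.ofReal_mul (by norm_num)]
          simp_rw [ENNReal.ofReal_mul (show (0:ℝ) ≤ 2 by norm_num)]
          rw [lintegral_const_mul' _ _ ENNReal.ofReal_ne_top]
          gcongr
        · rw [ENNReal.ofReal_mul (by norm_num)]
          simp_rw [ENNReal.ofReal_mul (show (0:ℝ) ≤ 3 by norm_num)]
          rw [lintegral_const_mul' _ _ ENNReal.ofReal_ne_top]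
          gcongr
        · exact hρ.int ha
    _ ≤ _ := by
        rw [← ENNReal.ofReal_add (by positivity) (by positivity), ← ENNReal.ofReal_add (by positivity) (by positivity),
          ← ENNReal.ofReal_mul hc0]
        apply ENNReal.ofReal_le_ofReal
        rw [Real.rpow_add (by positivity), Real.rpow_one]
        have e : 2 * (K * a * Lg a) + (3 * (K * a) + 4 * a) ≤ (5 * K + 4) * (a * Lg a) := by
          have : K * a ≤ K * a * Lg a := le_mul_of_one_le_right (by positivity) hL
          have : a ≤ a * Lg a := le_mul_of_one_le_right ha.le hL
          linarith
        calc _ ≤ c * ((5 * K + 4) * (a * Lg a)) := by gcongr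
          _ = _ := by rw [hc]; ring

variable {E : Set ℝ}

lemma QE_null {ε : ℝ} (h : volume.real E = 0) (hEI : E ⊆ Ioo (-1) 1) (x : ℝ) : QE ε E x = 0 := by
  rw [QE]
  rw [measureReal_def, ENNReal.toReal_eq_zero_iff] at h
  rcases h with h | h
  · exact setIntegral_measure_zero _ h
  · exact absurd h (vol_lt_top hEI).ne

lemma QE_min (hE : MeasurableSet E) (hEI : E ⊆ Ioo (-1) 1) {ε : ℝ} (hε : 0 < ε) (ha : 0 < volume.real E) :
    ∫⁻ x in Ioo (-2:ℝ) 2, ENNReal.ofReal (min |QE ε E x| 1) ≤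
      ENNReal.ofReal (10 * volume.real E * Lg (volume.real E)) := by
  have hm : Measurable (fun x => |QE ε E x|) := (QE_continuous hE hEI hε).1.abs.measurable
  refine log_weak (fun x => abs_nonneg _) hm measurableSet_Ioo ?_ (by norm_num) ha (vol_real_le hEI) ?_
  · rw [Real.volume_Ioo]; norm_num
  · intro lam hl
    exact QE_weak hE hEI hε hl

lemma QE_three (hE : MeasurableSet E) (hEI : E ⊆ Ioo (-1) 1) {ε : ℝ} (hε : 0 < ε) :
    ∫⁻ x in Ioo (-2:ℝ) 2, ENNReal.ofReal (if 1 < |QE ε E x| then |QE ε E x| ^ (3/2:ℝ) else 0) ≤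
      ENNReal.ofReal (10 * volume.real E) := by
  refine le_trans (lintegral_mono fun x => ?_) (QE_sq hE hEI hε)
  apply ENNReal.ofReal_le_ofReal
  split_ifs with h
  · rw [← sq_abs, ← Real.rpow_natCast]
    exact Real.rpow_le_rpow_of_exponent_le h.le (by norm_num)
  · positivity

lemma I_sub_J : Ioo (-1:ℝ) 1 ⊆ Ioo (-2:ℝ) 2 := Ioo_subset_Ioo (by norm_num) (by norm_num)

lemma QE_D (hE : MeasurableSet E) (hEI : E ⊆ Ioo (-1) 1) {ε : ℝ} (hε : 0 < ε) {ρ : ℝ → ℝ}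
    (hρ : RankLike ρ) {β : ℝ} (hβ : 0 ≤ β) :
    ∫⁻ x in Ioo (-1:ℝ) 1, ENNReal.ofReal |QE ε E x| * ENNReal.ofReal (Lg (ρ x) ^ β) ≤
      ENNReal.ofReal ((4 * β + 5) ^ β * 54 * (volume.real E * Lg (volume.real E) ^ (1 + β))) := by
  rcases (measureReal_nonneg (μ := volume) (s := E)).eq_or_lt' with h | h
  · simp [QE_null h hEI]
  · have := lemD (A := fun x => |QE ε E x|) (K := 10) (fun x => abs_nonneg _)
      (QE_continuous hE hEI hε).1.abs.measurable hρ hβ (by norm_num) h (vol_real_le hEI)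
      ((lintegral_mono_set I_sub_J).trans (QE_min hE hEI hε h))
      ((lintegral_mono_set I_sub_J).trans (QE_three hE hEI hε))
    norm_num at this
    exact this

lemma QE_J (hE : MeasurableSet E) (hEI : E ⊆ Ioo (-1) 1) {ε : ℝ} (hε : 0 < ε) :
    ∫⁻ x in Ioo (-2:ℝ) 2, ENNReal.ofReal |QE ε E x| ≤
      ENNReal.ofReal (20 * (volume.real E * Lg (volume.real E))) := by
  rcases (measureReal_nonneg (μ := volume) (s := E)).eq_or_lt' with h | h
  · simp [QE_null h hEI]
  · have hm := (QE_continuous hE hEI hε).1.abs.measurable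
    have hL := Lg_ge_one h (vol_real_le hEI)
    calc _ ≤ ∫⁻ x in Ioo (-2:ℝ) 2, (ENNReal.ofReal (min |QE ε E x| 1) +
          ENNReal.ofReal (if 1 < |QE ε E x| then |QE ε E x| ^ (3/2:ℝ) else 0)) := by
          apply lintegral_mono
          intro x
          by_cases h1 : 1 < |QE ε E x|
          · simp only [if_pos h1]
            refine le_trans ?_ le_add_self
            apply ENNReal.ofReal_le_ofReal
            conv_lhs => rw [← Real.rpow_one |QE ε E x|]
            exact Real.rpow_le_rpow_of_exponent_le h1.le (by norm_num)
          · push Not at h1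
            simp only [min_eq_left h1]
            exact le_self_add
      _ ≤ ENNReal.ofReal (10 * volume.real E * Lg (volume.real E)) + ENNReal.ofReal (10 * volume.real E) := by
          rw [lintegral_add_left (hm.min measurable_const).ennreal_ofReal]
          gcongr
          · exact QE_min hE hEI hε h
          · exact QE_three hE hEI hε
      _ ≤ _ := by
          rw [← ENNReal.ofReal_add (by positivity) (by positivity)]
          apply ENNReal.ofReal_le_ofReal
          have : volume.real E ≤ volume.real E * Lg (volume.real E) := le_mul_of_one_le_right h.le hL
          linarith

/-! commutator part -/
def sg (x : ℝ) : ℝ := max (2 * (1 - |x|)) 0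

lemma sg_rank : RankLike sg where
  meas := by unfold sg; exact (measurable_const.mul (measurable_const.sub measurable_norm)).max measurable_const
  le2 := by
    intro x hx
    rw [sg]
    exact max_le (by linarith [abs_nonneg x]) (by norm_num)
  vol := by
    intro r hr
    calc _ ≤ volume (Ioo (-1:ℝ) (-1 + r/2) ∪ Ioo (1 - r/2) 1) := by
          apply measure_mono
          rintro x ⟨⟨h1, h2⟩, h3⟩
          replace h3 : sg x < r := h3
          rw [sg, max_lt_iff] at h3
          rcases abs_cases x with ⟨h, _⟩ | ⟨h, _⟩
          · right; exact ⟨by linarith, h2⟩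
          · left; exact ⟨h1, by linarith⟩
      _ ≤ _ := measure_union_le _ _
      _ = _ := by
          rw [Real.volume_Ioo, Real.volume_Ioo, ← ENNReal.ofReal_add (by linarith) (by linarith)]
          congr 1; ring

def SE (E : Set ℝ) (x : ℝ) : ℝ≥0∞ := ∫⁻ t in E, ENNReal.ofReal
  (2 / (Real.sqrt (1 - x ^ 2) * (Real.sqrt (1 - x ^ 2) + Real.sqrt (1 - t ^ 2))))

lemma sg_pos {x : ℝ} (hx : x ∈ Ioo (-1:ℝ) 1) : 0 < sg x ∧ sg x / 2 ≤ 1 - x ^ 2 := by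
  have h : |x| < 1 := abs_lt.2 hx
  have e : sg x = 2 * (1 - |x|) := max_eq_left (by linarith)
  rw [e, ← sq_abs x]
  constructor
  · linarith
  · nlinarith [abs_nonneg x]

lemma sg_sqrt {x : ℝ} (hx : x ∈ Ioo (-1:ℝ) 1) : 0 < Real.sqrt (sg x) ∧
    Real.sqrt (sg x) ≤ Real.sqrt 2 * Real.sqrt (1 - x ^ 2) := by
  obtain ⟨h1, h2⟩ := sg_pos hx
  refine ⟨Real.sqrt_pos.2 h1, ?_⟩
  rw [← Real.sqrt_mul (by norm_num)]
  apply Real.sqrt_le_sqrt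
  linarith

lemma int_inv_sqrt (hE : MeasurableSet E) (hEI : E ⊆ Ioo (-1) 1) (ha : 0 < volume.real E) :
    ∫⁻ t in E, ENNReal.ofReal (Real.sqrt (sg t))⁻¹ ≤ ENNReal.ofReal (5 * Real.sqrt (volume.real E)) := by
  set a := volume.real E with hadef
  have hsa : 0 < Real.sqrt a := Real.sqrt_pos.2 ha
  calc _ ≤ ∫⁻ t in E, (ENNReal.ofReal (Real.sqrt a)⁻¹ + ENNReal.ofReal (Real.sqrt a)⁻¹ *
        ENNReal.ofReal (if sg t < a then (a / sg t) ^ (3/4:ℝ) else 0)) := by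
        apply setLIntegral_mono' hE
        intro t ht
        obtain ⟨h1, _⟩ := sg_pos (hEI ht)
        have h2 := Real.sqrt_pos.2 h1
        split_ifs with h
        · refine le_trans ?_ le_add_self
          rw [← ENNReal.ofReal_mul (by positivity)]
          apply ENNReal.ofReal_le_ofReal
          have h3 : Real.sqrt a / Real.sqrt (sg t) ≤ (a / sg t) ^ (3/4:ℝ) := by
            rw [← Real.sqrt_div ha.le, Real.sqrt_eq_rpow]
            apply Real.rpow_le_rpow_of_exponent_le _ (by norm_num)
            rw [le_div_iff₀ h1]; linarith
          calc _ = (Real.sqrt a)⁻¹ * (Real.sqrt a / Real.sqrt (sg t)) := by field_simp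
            _ ≤ _ := by gcongr
        · refine le_trans ?_ le_self_add
          push Not at h
          apply ENNReal.ofReal_le_ofReal
          gcongr
    _ ≤ ENNReal.ofReal (Real.sqrt a)⁻¹ * ENNReal.ofReal a + ENNReal.ofReal (Real.sqrt a)⁻¹ * ENNReal.ofReal (4 * a) := by
        rw [lintegral_add_left measurable_const, lintegral_const_mul' _ _ ENNReal.ofReal_ne_top,
          setLIntegral_const]
        gcongr
        · rw [hadef, measureReal_def, ENNReal.ofReal_toReal (vol_lt_top hEI).ne]
        · exact (lintegral_mono_set hEI).trans (sg_rank.int ha)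
    _ = _ := by
        rw [← ENNReal.ofReal_mul (by positivity), ← ENNReal.ofReal_mul (by positivity),
          ← ENNReal.ofReal_add (by positivity) (by positivity)]
        congr 1
        have := Real.mul_self_sqrt ha.le
        field_simp
        rw [Real.sq_sqrt ha.le]; ring

lemma SE_le (hE : MeasurableSet E) (hEI : E ⊆ Ioo (-1) 1) (ha : 0 < volume.real E) {x : ℝ}
    (hx : x ∈ Ioo (-1:ℝ) 1) : SE E x ≤ ENNReal.ofReal (20 * 
      min (volume.real E / sg x) (Real.sqrt (volume.real E / sg x))) := by
  set a := volume.real E with hadef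
  obtain ⟨h1, h2⟩ := sg_pos hx
  obtain ⟨h3, h4⟩ := sg_sqrt hx
  have hq : 0 < Real.sqrt (1 - x ^ 2) := Real.sqrt_pos.2 (by linarith)
  have h22 : Real.sqrt 2 * Real.sqrt 2 = 2 := Real.mul_self_sqrt (by norm_num)
  have hs2 : 0 < Real.sqrt 2 := by positivity
  rw [mul_min_of_nonneg _ _ (by norm_num), ENNReal.ofReal_min]
  apply le_min
  · calc _ ≤ ∫⁻ t in E, ENNReal.ofReal (4 / sg x) := by
          apply setLIntegral_mono' hE
          intro t ht
          apply ENNReal.ofReal_le_ofReal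
          rw [div_le_div_iff₀ (by positivity) h1]
          have : Real.sqrt (1 - x ^ 2) * Real.sqrt (1 - x ^ 2) = 1 - x ^ 2 := Real.mul_self_sqrt (by linarith)
          nlinarith [mul_nonneg hq.le (Real.sqrt_nonneg (1 - t ^ 2))]
      _ = ENNReal.ofReal (4 / sg x) * ENNReal.ofReal a := by
          rw [setLIntegral_const, hadef, measureReal_def, ENNReal.ofReal_toReal (vol_lt_top hEI).ne]
      _ ≤ _ := by
          rw [← ENNReal.ofReal_mul (by positivity)]
          apply ENNReal.ofReal_le_ofReal
          have : 0 < a / sg x := by positivity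
          calc _ = 4 * (a / sg x) := by ring
            _ ≤ _ := by linarith
  · calc _ ≤ ∫⁻ t in E, ENNReal.ofReal (4 / Real.sqrt (sg x)) * ENNReal.ofReal (Real.sqrt (sg t))⁻¹ := by
          apply setLIntegral_mono' hE
          intro t ht
          obtain ⟨h5, h6⟩ := sg_sqrt (hEI ht)
          have hqt : 0 < Real.sqrt (1 - t ^ 2) := Real.sqrt_pos.2 (by linarith [(sg_pos (hEI ht)).1, (sg_pos (hEI ht)).2])
          rw [← ENNReal.ofReal_mul (by positivity)]
          apply ENNReal.ofReal_le_ofReal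
          rw [← div_eq_mul_inv, div_div, div_le_div_iff₀ (by positivity) (by positivity)]
          have h7 : Real.sqrt (sg x) * Real.sqrt (sg t) ≤ 
            (Real.sqrt 2 * Real.sqrt (1 - x ^ 2)) * (Real.sqrt 2 * Real.sqrt (1 - t ^ 2)) := by gcongr
          have h8 : (Real.sqrt 2 * Real.sqrt (1 - x ^ 2)) * (Real.sqrt 2 * Real.sqrt (1 - t ^ 2)) = 
            2 * (Real.sqrt (1 - x ^ 2) * Real.sqrt (1 - t ^ 2)) := by
            calc _ = (Real.sqrt 2 * Real.sqrt 2) * (Real.sqrt (1 - x ^ 2) * Real.sqrt (1 - t ^ 2)) := by ring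
              _ = _ := by rw [h22]
          nlinarith [mul_pos hq hq]
      _ ≤ ENNReal.ofReal (4 / Real.sqrt (sg x)) * ENNReal.ofReal (5 * Real.sqrt a) := by
          rw [lintegral_const_mul' _ _ ENNReal.ofReal_ne_top]
          gcongr
          exact int_inv_sqrt hE hEI ha
      _ = _ := by
          rw [← ENNReal.ofReal_mul (by positivity), Real.sqrt_div ha.le]
          congr 1; ring

lemma SE_D (hE : MeasurableSet E) (hEI : E ⊆ Ioo (-1) 1) {ρ : ℝ → ℝ}
    (hρ : RankLike ρ) {β : ℝ} (hβ : 0 ≤ β) :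
    ∫⁻ x in Ioo (-1:ℝ) 1, SE E x * ENNReal.ofReal (Lg (ρ x) ^ β) ≤
      ENNReal.ofReal ((4 * β + 5) ^ β * 480 * (volume.real E * Lg (volume.real E) ^ (1 + β))) := by
  rcases (measureReal_nonneg (μ := volume) (s := E)).eq_or_lt' with h | h
  · have h0 : volume E = 0 := by
      rw [measureReal_def, ENNReal.toReal_eq_zero_iff] at h
      rcases h with h | h
      · exact h
      · exact absurd h (vol_lt_top hEI).ne
    have : ∀ x, SE E x = 0 := fun x => setLIntegral_measure_zero _ _ h0
    simp [this]
  · set a := volume.real E with hadef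
    set A : ℝ → ℝ := fun x => min (a / sg x) (Real.sqrt (a / sg x)) with hAdef
    have hsg0 : ∀ x, 0 ≤ sg x := fun x => le_max_right _ _
    have hA : ∀ x, 0 ≤ A x := fun x => le_min (div_nonneg h.le (hsg0 x)) (Real.sqrt_nonneg _)
    have hms := sg_rank.meas
    have hAm : Measurable A := by
      refine Measurable.min (by fun_prop) (by fun_prop)
    have k1 : ∫⁻ x in Ioo (-1:ℝ) 1, ENNReal.ofReal (min (A x) 1) ≤ ENNReal.ofReal (4 * a * Lg a) := by
      refine log_weak hA hAm measurableSet_Ioo ?_ (by norm_num) h (vol_real_le hEI) ?_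
      · rw [Real.volume_Ioo, show (4:ℝ≥0∞) = ENNReal.ofReal 4 by norm_num]
        apply ENNReal.ofReal_le_ofReal; norm_num
      · intro lam hl
        calc _ ≤ volume (Ioo (-1:ℝ) 1 ∩ {x | sg x < a / lam}) := by
              apply measure_mono
              rintro x ⟨hx1, hx2⟩
              refine ⟨hx1, ?_⟩
              replace hx2 : lam < A x := hx2
              show sg x < a / lam
              have h5 := (lt_min_iff.1 hx2).1
              have h6 := (sg_pos hx1).1
              rw [lt_div_iff₀ h6] at h5
              rw [lt_div_iff₀ hl]; linarith
          _ ≤ _ := sg_rank.vol _ (by positivity)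
          _ ≤ _ := by
              apply ENNReal.ofReal_le_ofReal
              gcongr
              linarith
    have k2 : ∫⁻ x in Ioo (-1:ℝ) 1, ENNReal.ofReal (if 1 < A x then A x ^ (3/2:ℝ) else 0) ≤
        ENNReal.ofReal (4 * a) := by
      refine le_trans (setLIntegral_mono' measurableSet_Ioo fun x hx => ?_) (sg_rank.int h)
      apply ENNReal.ofReal_le_ofReal
      have h6 := (sg_pos hx).1
      split_ifs with h1 h2 h2
      · calc A x ^ (3/2:ℝ) ≤ (Real.sqrt (a / sg x)) ^ (3/2:ℝ) := by
              have := hA x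
              gcongr
              exact min_le_right _ _
          _ = _ := by
              rw [Real.sqrt_eq_rpow, ← Real.rpow_mul (by positivity)]; norm_num
      · exfalso
        have h5 := (lt_min_iff.1 h1).1
        rw [lt_div_iff₀ h6] at h5
        linarith
      · positivity
      · exact le_rfl
    have := lemD hA hAm hρ hβ (by norm_num) h (vol_real_le hEI) k1 k2
    calc _ ≤ ∫⁻ x in Ioo (-1:ℝ) 1, ENNReal.ofReal 20 * ENNReal.ofReal (A x * Lg (ρ x) ^ β) := by
          apply setLIntegral_mono' measurableSet_Ioo
          intro x hx
          rw [ENNReal.ofReal_mul (hA x), ← mul_assoc, ← ENNReal.ofReal_mul (by norm_num)]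
          gcongr
          exact SE_le hE hEI h hx
      _ ≤ _ := by
          rw [lintegral_const_mul' _ _ ENNReal.ofReal_ne_top]
          refine (mul_le_mul_right this _).trans (le_of_eq ?_)
          rw [← ENNReal.ofReal_mul (by norm_num)]
          congr 1
          ring
end
end

open MeasureTheory Set Filter
noncomputable section
set_option linter.unusedVariables false
set_option linter.style.haveILetI false
open scoped Topology ENNReal

section
variable {g : ℝ → ℂ}

lemma dset_lt_top (P : ℝ → Prop) : volume {x : ℝ | x ∈ Ioo (-1:ℝ) 1 ∧ P x} < ⊤ :=
  (measure_mono (fun x hx => hx.1)).trans_lt (measure_Ioo_lt_top (a := (-1:ℝ)) (b := 1))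

lemma distFun_anti (g : ℝ → ℂ) : Antitone (distFun g) := by
  intro a b hab
  apply ENNReal.toReal_mono (dset_lt_top _).ne
  apply measure_mono
  rintro x ⟨h1, h2⟩
  exact ⟨h1, hab.trans_lt h2⟩

lemma distFun_nonneg (g : ℝ → ℂ) (l : ℝ) : 0 ≤ distFun g l := ENNReal.toReal_nonneg

lemma distFun_le_two (g : ℝ → ℂ) (l : ℝ) : distFun g l ≤ 2 := by
  have : volume (Ioo (-1:ℝ) 1) = 2 := by rw [Real.volume_Ioo]; norm_num
  have h2 : (2:ℝ) = (volume (Ioo (-1:ℝ) 1)).toReal := by rw [this]; norm_num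
  rw [h2]
  exact ENNReal.toReal_mono (by rw [this]; norm_num) (measure_mono (fun x hx => hx.1))

lemma distFun_congr {f g : ℝ → ℂ} (h : f =ᵐ[μI] g) : distFun f = distFun g := by
  ext l
  unfold distFun
  congr 1
  apply measure_congr
  rw [μI, Filter.EventuallyEq, ae_restrict_iff' measurableSet_Ioo] at h
  filter_upwards [h] with x hx
  apply propext
  show (x ∈ Ioo (-1:ℝ) 1 ∧ l < ‖f x‖) ↔ (x ∈ Ioo (-1:ℝ) 1 ∧ l < ‖g x‖)
  constructor
  · rintro ⟨h1, h2⟩; rw [hx h1] at h2; exact ⟨h1, h2⟩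
  · rintro ⟨h1, h2⟩; rw [← hx h1] at h2; exact ⟨h1, h2⟩

lemma decRearr_congr {f g : ℝ → ℂ} (h : f =ᵐ[μI] g) : decRearr f = decRearr g := by
  ext t; unfold decRearr; rw [distFun_congr h]

lemma distFun_right (hg : Measurable g) {l t : ℝ} (h : t < distFun g l) : ∃ l' > l, t < distFun g l' := by
  have hU : {x : ℝ | x ∈ Ioo (-1:ℝ) 1 ∧ l < ‖g x‖} = 
      ⋃ n : ℕ, {x : ℝ | x ∈ Ioo (-1:ℝ) 1 ∧ l + 1 / ((n:ℝ) + 1) < ‖g x‖} := by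
    ext x
    simp only [mem_iUnion]
    constructor
    · rintro ⟨h1, h2⟩
      obtain ⟨n, hn⟩ := exists_nat_one_div_lt (sub_pos.2 h2)
      exact ⟨n, h1, by linarith⟩
    · rintro ⟨n, h1, h2⟩
      refine ⟨h1, ?_⟩
      have : 0 < 1 / ((n:ℝ) + 1) := by positivity
      linarith
  have hmono : Monotone (fun n : ℕ => {x : ℝ | x ∈ Ioo (-1:ℝ) 1 ∧ l + 1 / ((n:ℝ) + 1) < ‖g x‖}) := by
    intro n m hnm x hx
    refine ⟨hx.1, lt_of_le_of_lt ?_ hx.2⟩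
    have : 1 / ((m:ℝ) + 1) ≤ 1 / ((n:ℝ) + 1) := by gcongr
    linarith
  have h1 := tendsto_measure_iUnion_atTop (μ := volume) hmono
  rw [← hU] at h1
  have h2 : Tendsto (fun n : ℕ => distFun g (l + 1 / ((n:ℝ) + 1))) atTop (𝓝 (distFun g l)) :=
    (ENNReal.tendsto_toReal (dset_lt_top _).ne).comp h1
  obtain ⟨n, hn⟩ := (h2.eventually (lt_mem_nhds h)).exists
  exact ⟨_, lt_add_of_pos_right _ (by positivity), hn⟩

lemma distFun_zero (hg : Measurable g) {t : ℝ} (ht : 0 < t) : ∃ l, 0 ≤ l ∧ distFun g l ≤ t := by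
  have hmono : Antitone (fun n : ℕ => {x : ℝ | x ∈ Ioo (-1:ℝ) 1 ∧ (n:ℝ) < ‖g x‖}) := by
    intro n m hnm x hx
    exact ⟨hx.1, lt_of_le_of_lt (by exact_mod_cast hnm) hx.2⟩
  have h1 := tendsto_measure_iInter_atTop (μ := volume) (s := (fun n : ℕ => {x : ℝ | x ∈ Ioo (-1:ℝ) 1 ∧ (n:ℝ) < ‖g x‖}))
    (fun n => (measurableSet_Ioo.inter (measurableSet_lt measurable_const hg.norm)).nullMeasurableSet) hmono
    ⟨0, (dset_lt_top _).ne⟩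
  have hE : (⋂ n : ℕ, {x : ℝ | x ∈ Ioo (-1:ℝ) 1 ∧ (n:ℝ) < ‖g x‖}) = ∅ := by
    rw [eq_empty_iff_forall_notMem]
    intro x hx
    rw [mem_iInter] at hx
    obtain ⟨n, hn⟩ := exists_nat_gt ‖g x‖
    have := (hx n).2
    linarith
  rw [hE, measure_empty] at h1
  have h2 : Tendsto (fun n : ℕ => distFun g n) atTop (𝓝 0) :=
    (ENNReal.tendsto_toReal (by simp)).comp h1
  obtain ⟨n, hn⟩ := (h2.eventually (gt_mem_nhds ht)).exists
  exact ⟨n, by positivity, hn.le⟩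

lemma lt_decRearr (hg : Measurable g) {l t : ℝ} (hl : 0 ≤ l) (ht : 0 < t) :
    l < decRearr g t ↔ t < distFun g l := by
  constructor
  · intro h
    by_contra hc
    push Not at hc
    have : decRearr g t ≤ l := csInf_le ⟨0, fun y hy => hy.1⟩ ⟨hl, hc⟩
    linarith
  · intro h
    obtain ⟨l', h1, h2⟩ := distFun_right hg h
    refine h1.trans_le ?_
    obtain ⟨l₀, h3⟩ := distFun_zero hg ht
    apply le_csInf ⟨l₀, h3⟩
    rintro y ⟨hy1, hy2⟩
    by_contra hc
    push Not at hc
    have := distFun_anti g hc.le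
    linarith

lemma decRearr_nonneg (g : ℝ → ℂ) (t : ℝ) : 0 ≤ decRearr g t := Real.sInf_nonneg (fun y hy => hy.1)

lemma decRearr_anti (hg : Measurable g) : AntitoneOn (decRearr g) (Ioi 0) := by
  intro a ha b hb hab
  by_contra hc
  push Not at hc
  have h1 := (lt_decRearr hg (decRearr_nonneg g a) hb).1 hc
  have h2 := (lt_decRearr hg (decRearr_nonneg g a) ha).2 (hab.trans_lt h1)
  exact lt_irrefl _ h2

lemma decRearr_aem (hg : Measurable g) : AEMeasurable (decRearr g) (volume.restrict (Ioo (0:ℝ) 2)) :=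
  aemeasurable_restrict_of_antitoneOn measurableSet_Ioo ((decRearr_anti hg).mono (fun x hx => hx.1))

def NZ (α : ℝ) (g : ℝ → ℂ) : ℝ≥0∞ := ∫⁻ t in Ioo (0:ℝ) 2, ENNReal.ofReal (decRearr g t * Lg t ^ α)

def Nd (α : ℝ) (g : ℝ → ℂ) : ℝ≥0∞ := ∫⁻ l in Ioi (0:ℝ), ENNReal.ofReal (distFun g l * Lg (distFun g l) ^ α)

lemma Lg_meas : Measurable Lg := by unfold Lg; fun_prop

lemma Lgp_meas (α : ℝ) : Measurable (fun t => ENNReal.ofReal (Lg t ^ α)) := 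
  (Lg_meas.pow_const α).ennreal_ofReal

lemma NZ_eq (hg : Measurable g) (α : ℝ) : 
    NZ α g = ∫⁻ l in Ioi (0:ℝ), ∫⁻ t in Ioo 0 (distFun g l), ENNReal.ofReal (Lg t ^ α) := by
  have h1 : NZ α g = ∫⁻ t, ENNReal.ofReal (decRearr g t) ∂((volume.restrict (Ioo (0:ℝ) 2)).withDensity
      (fun t => ENNReal.ofReal (Lg t ^ α))) := by
    rw [lintegral_withDensity_eq_lintegral_mul₀ (Lgp_meas α).aemeasurable (decRearr_aem hg).ennreal_ofReal]
    unfold NZ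
    apply lintegral_congr
    intro t
    rw [ENNReal.ofReal_mul (decRearr_nonneg g t), Pi.mul_apply, mul_comm]
  rw [h1, lintegral_eq_lintegral_meas_lt _ (ae_of_all _ (decRearr_nonneg g))
    ((decRearr_aem hg).mono_ac (withDensity_absolutelyContinuous _ _))]
  apply setLIntegral_congr_fun measurableSet_Ioi
  intro l (hl : 0 < l)
  beta_reduce
  have h2 : ((volume.restrict (Ioo (0:ℝ) 2)).withDensity (fun t => ENNReal.ofReal (Lg t ^ α))) {t | l < decRearr g t} =
     ((volume.restrict (Ioo (0:ℝ) 2)).withDensity (fun t => ENNReal.ofReal (Lg t ^ α))) (Ioo 0 (distFun g l)) := by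
    apply measure_congr
    have : ∀ᵐ t ∂(volume.restrict (Ioo (0:ℝ) 2)), t ∈ Ioo (0:ℝ) 2 := ae_restrict_mem measurableSet_Ioo
    filter_upwards [(withDensity_absolutelyContinuous _ _).ae_le this] with t ht
    apply propext
    show l < decRearr g t ↔ (0 < t ∧ t < distFun g l)
    rw [lt_decRearr hg hl.le ht.1]
    simp [ht.1]
  rw [h2, withDensity_apply _ measurableSet_Ioo, Measure.restrict_restrict measurableSet_Ioo]
  congr 2
  apply inter_eq_left.2
  exact Ioo_subset_Ioo le_rfl (distFun_le_two g l)

lemma W_ge {α s : ℝ} (hα : 0 ≤ α) (hs0 : 0 ≤ s) (hs2 : s ≤ 2) :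
    ENNReal.ofReal (s * Lg s ^ α) ≤ ∫⁻ t in Ioo 0 s, ENNReal.ofReal (Lg t ^ α) := by
  rcases hs0.eq_or_lt with h | hs
  · simp [← h]
  · calc _ = ∫⁻ t in Ioo 0 s, ENNReal.ofReal (Lg s ^ α) := by
          rw [setLIntegral_const, Real.volume_Ioo, sub_zero, ENNReal.ofReal_mul hs.le, mul_comm]
      _ ≤ _ := by
          apply setLIntegral_mono' measurableSet_Ioo
          rintro t ⟨h1, h2⟩
          apply ENNReal.ofReal_le_ofReal
          have := Lg_ge_one hs hs2
          have := Lg_anti h1 h2.le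
          gcongr

lemma W_le {α s : ℝ} (hα : 0 ≤ α) (hs : 0 ≤ s) (hs2 : s ≤ 2) :
    ∫⁻ t in Ioo 0 s, ENNReal.ofReal (Lg t ^ α) ≤ ENNReal.ofReal ((4 * α + 5) ^ α * 3 * (s * Lg s ^ α)) := by
  rcases hs.eq_or_lt with h | hs
  · simp [← h]
  have hL := Lg_ge_one hs hs2
  have hI : IntegrableOn (fun t : ℝ => t ^ (-(1/4):ℝ)) (Ioo 0 s) := by
    rw [intervalIntegral.integrableOn_Ioo_rpow_iff hs]; norm_num
  calc _ ≤ ∫⁻ t in Ioo 0 s, ENNReal.ofReal ((4 * α + 5) ^ α * Lg s ^ α * (1 + s ^ (1/4:ℝ) * t ^ (-(1/4):ℝ))) := by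
        apply setLIntegral_mono' measurableSet_Ioo
        rintro t ⟨h1, h2⟩
        apply ENNReal.ofReal_le_ofReal
        have := Lg_weight hα hs hs2 h1 (h2.le.trans hs2)
        rw [if_pos h2, Real.div_rpow hs.le h1.le, div_eq_mul_inv, ← Real.rpow_neg h1.le] at this
        exact this
    _ = ENNReal.ofReal (∫ t in Ioo 0 s, (4 * α + 5) ^ α * Lg s ^ α * (1 + s ^ (1/4:ℝ) * t ^ (-(1/4):ℝ))) := by
        rw [ofReal_integral_eq_lintegral_ofReal]
        · apply Integrable.const_mul
          apply Integrable.add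
          · exact integrableOn_const (by simp)
          · exact hI.const_mul _
        · filter_upwards [ae_restrict_mem measurableSet_Ioo] with t ht
          have := ht.1
          show (0:ℝ) ≤ _
          positivity
    _ ≤ _ := by
        apply ENNReal.ofReal_le_ofReal
        have h5 : ∫ t in Ioo 0 s, t ^ (-(1/4):ℝ) = 4/3 * s ^ (3/4:ℝ) := by
          rw [← integral_Ioc_eq_integral_Ioo, ← intervalIntegral.integral_of_le hs.le, integral_rpow (by norm_num)]
          rw [Real.zero_rpow (by norm_num)]
          norm_num
          ring
        have h6 : s ^ (1/4:ℝ) * s ^ (3/4:ℝ) = s := by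
          rw [← Real.rpow_add hs]; norm_num
        have hc : Integrable (fun _ : ℝ => (1:ℝ)) (volume.restrict (Ioo 0 s)) := integrableOn_const (by simp)
        rw [integral_const_mul, integral_add hc (hI.const_mul _), integral_const_mul, h5]
        simp only [integral_const, MeasurableSet.univ, measureReal_restrict_apply, univ_inter, smul_eq_mul, mul_one]
        rw [Real.volume_real_Ioo_of_le hs.le, sub_zero]
        have : s + s ^ (1/4:ℝ) * (4/3 * s ^ (3/4:ℝ)) ≤ 3 * s := by
          have : s ^ (1/4:ℝ) * (4/3 * s ^ (3/4:ℝ)) = 4/3 * s := by rw [mul_left_comm, h6]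
          linarith
        calc _ ≤ (4 * α + 5) ^ α * Lg s ^ α * (3 * s) := by gcongr
          _ = _ := by ring

lemma Nd_le_NZ (hg : Measurable g) {α : ℝ} (hα : 0 ≤ α) : Nd α g ≤ NZ α g := by
  rw [NZ_eq hg]
  apply lintegral_mono
  intro l
  exact W_ge hα (distFun_nonneg g l) (distFun_le_two g l)

lemma NZ_le_Nd (hg : Measurable g) {α : ℝ} (hα : 0 ≤ α) : 
    NZ α g ≤ ENNReal.ofReal ((4 * α + 5) ^ α * 3) * Nd α g := by
  rw [NZ_eq hg, Nd, ← lintegral_const_mul' _ _ ENNReal.ofReal_ne_top]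
  apply lintegral_mono
  intro l
  beta_reduce
  rw [← ENNReal.ofReal_mul (by positivity)]
  exact W_le hα (distFun_nonneg g l) (distFun_le_two g l)

def Dge (g : ℝ → ℂ) (s : ℝ) : ℝ := (volume {x : ℝ | x ∈ Ioo (-1:ℝ) 1 ∧ s ≤ ‖g x‖}).toReal

def rk (g : ℝ → ℂ) (x : ℝ) : ℝ := Dge g ‖g x‖

lemma Dge_anti (g : ℝ → ℂ) : Antitone (Dge g) := by
  intro a b hab
  apply ENNReal.toReal_mono (dset_lt_top _).ne
  apply measure_mono
  rintro x ⟨h1, h2⟩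
  exact ⟨h1, hab.trans h2⟩

lemma rk_rank (hg : Measurable g) : RankLike (rk g) where
  meas := (Dge_anti g).measurable.comp hg.norm
  le2 := by
    intro x _
    have : volume (Ioo (-1:ℝ) 1) = 2 := by rw [Real.volume_Ioo]; norm_num
    have h2 : (2:ℝ) = (volume (Ioo (-1:ℝ) 1)).toReal := by rw [this]; norm_num
    rw [h2]
    exact ENNReal.toReal_mono (by rw [this]; norm_num) (measure_mono (fun x hx => hx.1))
  vol := by
    intro r hr
    have key : ∀ s, Dge g s < r → volume {x : ℝ | x ∈ Ioo (-1:ℝ) 1 ∧ s ≤ ‖g x‖} ≤ ENNReal.ofReal r := by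
      intro s hs
      rw [← ENNReal.ofReal_toReal (dset_lt_top (fun x => s ≤ ‖g x‖)).ne]
      exact ENNReal.ofReal_le_ofReal hs.le
    set A : Set ℝ := {s | 0 ≤ s ∧ Dge g s < r} with hA
    have hbdd : BddBelow A := ⟨0, fun y hy => hy.1⟩
    by_cases hne : A.Nonempty
    · by_cases hm : sInf A ∈ A
      · refine (measure_mono ?_).trans (key _ hm.2)
        rintro x ⟨h1, h2⟩
        exact ⟨h1, csInf_le hbdd ⟨norm_nonneg _, h2⟩⟩
      · obtain ⟨u, hu1, hu2, hu3⟩ := exists_seq_tendsto_sInf hne hbdd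
        have hmono : Monotone (fun n : ℕ => {x : ℝ | x ∈ Ioo (-1:ℝ) 1 ∧ u n ≤ ‖g x‖}) := by
          intro n m hnm x hx
          exact ⟨hx.1, (hu1 hnm).trans hx.2⟩
        have hsub : Ioo (-1:ℝ) 1 ∩ {x | rk g x < r} ⊆ ⋃ n, {x : ℝ | x ∈ Ioo (-1:ℝ) 1 ∧ u n ≤ ‖g x‖} := by
          rintro x ⟨h1, h2⟩
          have hx : ‖g x‖ ∈ A := ⟨norm_nonneg _, h2⟩
          have hlt : sInf A < ‖g x‖ := lt_of_le_of_ne (csInf_le hbdd hx) (fun h => hm (h ▸ hx))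
          obtain ⟨n, hn⟩ := (hu2.eventually (gt_mem_nhds hlt)).exists
          exact mem_iUnion.2 ⟨n, h1, le_of_lt hn⟩
        refine (measure_mono hsub).trans ?_
        rw [hmono.measure_iUnion]
        exact iSup_le fun n => key _ (hu3 n).2
    · have : Ioo (-1:ℝ) 1 ∩ {x | rk g x < r} = ∅ := by
        rw [eq_empty_iff_forall_notMem]
        rintro x ⟨h1, h2⟩
        exact hne ⟨‖g x‖, norm_nonneg _, h2⟩
      rw [this]; simp

lemma layer_norm (hg : Measurable g) {w : ℝ → ℝ≥0∞} (hw : Measurable w) :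
    ∫⁻ x in Ioo (-1:ℝ) 1, ‖g x‖ₑ * w x = 
      ∫⁻ l in Ioi (0:ℝ), ∫⁻ x in {x | x ∈ Ioo (-1:ℝ) 1 ∧ l < ‖g x‖}, w x := by
  have h1 : ∫⁻ x in Ioo (-1:ℝ) 1, ‖g x‖ₑ * w x = 
      ∫⁻ t, ENNReal.ofReal ‖g t‖ ∂((volume.restrict (Ioo (-1:ℝ) 1)).withDensity w) := by
    rw [lintegral_withDensity_eq_lintegral_mul₀ hw.aemeasurable hg.norm.aemeasurable.ennreal_ofReal]
    apply lintegral_congr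
    intro t
    rw [Pi.mul_apply, mul_comm, ofReal_norm]
  rw [h1, lintegral_eq_lintegral_meas_lt _ (ae_of_all _ (fun _ => norm_nonneg _)) hg.norm.aemeasurable]
  apply lintegral_congr
  intro l
  have hms : MeasurableSet {x | l < ‖g x‖} := measurableSet_lt measurable_const hg.norm
  rw [withDensity_apply _ hms, Measure.restrict_restrict hms]
  congr 2
  ext x
  exact and_comm

lemma Nd_le_dual (hg : Measurable g) {β : ℝ} (hβ : 0 ≤ β) :
    Nd β g ≤ ∫⁻ x in Ioo (-1:ℝ) 1, ‖g x‖ₑ * ENNReal.ofReal (Lg (rk g x) ^ β) := by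
  rw [layer_norm (w := fun x => ENNReal.ofReal (Lg (rk g x) ^ β)) hg ((Lgp_meas β).comp (rk_rank hg).meas), Nd]
  apply lintegral_mono
  intro l
  beta_reduce
  have hS : MeasurableSet {x | x ∈ Ioo (-1:ℝ) 1 ∧ l < ‖g x‖} := 
    measurableSet_Ioo.inter (measurableSet_lt measurable_const hg.norm)
  calc _ = ∫⁻ x in {x | x ∈ Ioo (-1:ℝ) 1 ∧ l < ‖g x‖}, ENNReal.ofReal (Lg (distFun g l) ^ β) := by
        rw [setLIntegral_const, ENNReal.ofReal_mul (distFun_nonneg g l), mul_comm, distFun, 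
          ENNReal.ofReal_toReal (dset_lt_top _).ne]
    _ ≤ _ := by
        apply setLIntegral_mono_ae' hS
        have := (rk_rank hg).pos
        rw [ae_restrict_iff' measurableSet_Ioo] at this
        filter_upwards [this] with x hx h
        have hx0 := hx h.1
        have hle : rk g x ≤ distFun g l := by
          apply ENNReal.toReal_mono (dset_lt_top _).ne
          apply measure_mono
          rintro y ⟨hy1, hy2⟩
          exact ⟨hy1, h.2.trans_le hy2⟩
        have h1 := Lg_ge_one (hx0.trans_le hle) (distFun_le_two g l)
        have h2 := Lg_anti hx0 hle
        apply ENNReal.ofReal_le_ofReal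
        gcongr

end
end

open MeasureTheory Set Filter
noncomputable section
set_option linter.unusedVariables false
set_option linter.style.haveILetI false
open scoped Topology ENNReal

section

def El (f : ℝ → ℝ) (l : ℝ) : Set ℝ := {x | x ∈ Ioo (-1:ℝ) 1 ∧ l < f x}

lemma El_sub (f : ℝ → ℝ) (l : ℝ) : El f l ⊆ Ioo (-1) 1 := fun x hx => hx.1

variable {f : ℝ → ℝ}

lemma El_meas (hf : Measurable f) (l : ℝ) : MeasurableSet (El f l) :=
  measurableSet_Ioo.inter (measurableSet_lt measurable_const hf)

lemma El_prod (hf : Measurable f) : MeasurableSet {p : ℝ × ℝ | p.1 ∈ El f p.2} := by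
  have : {p : ℝ × ℝ | p.1 ∈ El f p.2} = {p : ℝ × ℝ | p.1 ∈ Ioo (-1:ℝ) 1} ∩ {p | p.2 < f p.1} := rfl
  rw [this]
  exact (measurable_fst measurableSet_Ioo).inter (measurableSet_lt measurable_snd (hf.comp measurable_fst))

lemma layer_int (hf : Measurable f) (hf0 : ∀ x, 0 ≤ f x) (hfI : ∀ x, x ∉ Ioo (-1:ℝ) 1 → f x = 0)
    (hfi : Integrable f) {k : ℝ → ℝ} (hk : Measurable k) {B : ℝ} (hB : ∀ t, |k t| ≤ B) :
    Integrable (fun l => ∫ t in El f l, k t) (volume.restrict (Ioi (0:ℝ))) ∧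
    ∫ t, k t * f t = ∫ l in Ioi (0:ℝ), ∫ t in El f l, k t := by
  set F : ℝ × ℝ → ℝ := {p : ℝ × ℝ | p.1 ∈ El f p.2}.indicator (fun p => k p.1) with hF
  have hFm : Measurable F := (hk.comp measurable_fst).indicator (El_prod hf)
  have hsec : ∀ t l, 0 < l → F (t, l) = (Iio (f t)).indicator (fun _ => k t) l := by
    intro t l hl
    by_cases h : l < f t
    · have ht : t ∈ Ioo (-1:ℝ) 1 := by
        by_contra hc
        rw [hfI t hc] at h; linarith
      have : (t, l) ∈ {p : ℝ × ℝ | p.1 ∈ El f p.2} := ⟨ht, h⟩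
      rw [hF, indicator_of_mem this, indicator_of_mem (show l ∈ Iio (f t) from h)]
    · have : (t, l) ∉ {p : ℝ × ℝ | p.1 ∈ El f p.2} := fun hc => h hc.2
      rw [hF, indicator_of_notMem this, indicator_of_notMem (show l ∉ Iio (f t) from h)]
  have hres : ∀ t (c : ℝ), ∫ l in Ioi (0:ℝ), (Iio (f t)).indicator (fun _ => c) l = c * f t := by
    intro t c
    rw [setIntegral_indicator measurableSet_Iio, setIntegral_const, Ioi_inter_Iio, Real.volume_real_Ioo_of_le (hf0 t)]
    simp [mul_comm]
  have hint : Integrable F (volume.prod (volume.restrict (Ioi (0:ℝ)))) := by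
    rw [integrable_prod_iff hFm.aestronglyMeasurable]
    constructor
    · refine ae_of_all _ fun t => ?_
      have : IntegrableOn (fun l => (Iio (f t)).indicator (fun _ => k t) l) (Ioi 0) := by
        rw [IntegrableOn, integrable_indicator_iff measurableSet_Iio, IntegrableOn, Measure.restrict_restrict measurableSet_Iio]
        apply integrableOn_const (by rw [inter_comm, Ioi_inter_Iio]; simp)
      exact this.congr_fun (fun l hl => (hsec t l hl).symm) measurableSet_Ioi
    · have : (fun t => ∫ l in Ioi (0:ℝ), ‖F (t, l)‖) = fun t => |k t| * f t := by
        ext t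
        rw [← hres t]
        apply setIntegral_congr_fun measurableSet_Ioi
        intro l hl
        beta_reduce
        rw [hsec t l hl, ← Real.norm_eq_abs, norm_indicator_eq_indicator_norm]
      rw [this]
      refine Integrable.bdd_mul (c := B) hfi (measurable_norm.comp hk).aestronglyMeasurable (ae_of_all _ fun t => ?_)
      simpa using hB t
  have hin : ∀ l, ∫ t, F (t, l) = ∫ t in El f l, k t := by
    intro l
    rw [← integral_indicator (El_meas hf l)]
    rfl
  constructor
  · have := hint.integral_prod_right
    simp only [hin] at this
    exact this
  · have := integral_integral_swap (f := fun t l => F (t, l)) hint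
    simp only [hin] at this
    rw [← this]
    apply integral_congr_ae
    refine ae_of_all _ fun t => ?_
    beta_reduce
    rw [← hres t]
    apply setIntegral_congr_fun measurableSet_Ioi
    intro l hl
    exact (hsec t l hl).symm

end
end

open MeasureTheory Set Filter
noncomputable section
set_option linter.unusedVariables false
set_option linter.style.haveILetI false
open scoped Topology ENNReal

section

structure Nice (f : ℝ → ℝ) : Prop where
  meas : Measurable f
  nonneg : ∀ x, 0 ≤ f x
  off : ∀ x, x ∉ Ioo (-1:ℝ) 1 → f x = 0
  int : Integrable f

variable {f : ℝ → ℝ}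

def cf (f : ℝ → ℝ) : ℝ → ℂ := fun x => (f x : ℂ)

lemma cf_meas (hf : Measurable f) : Measurable (cf f) := Complex.measurable_ofReal.comp hf

lemma El_vol (hf : Nice f) (l : ℝ) : volume.real (El f l) = distFun (cf f) l := by
  unfold distFun El cf
  rw [measureReal_def]
  congr 3
  ext x
  rw [Complex.norm_real, Real.norm_eq_abs, abs_of_nonneg (hf.nonneg x)]

lemma Qf_layer (hf : Nice f) {ε : ℝ} (hε : 0 < ε) (x : ℝ) :
    Integrable (fun l => QE ε (El f l) x) (volume.restrict (Ioi (0:ℝ))) ∧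
    Qf ε f x = ∫ l in Ioi (0:ℝ), QE ε (El f l) x := 
  layer_int hf.meas hf.nonneg hf.off hf.int (k := fun t => Qk ε (x - t)) 
    ((Qk_meas ε).comp (measurable_const.sub measurable_id)) (fun t => Qk_bound hε _)

lemma QE_joint (hf : Nice f) {ε : ℝ} (hε : 0 < ε) : 
    Measurable (fun p : ℝ × ℝ => QE ε (El f p.2) p.1) := by
  have h1 : Measurable (fun q : (ℝ × ℝ) × ℝ => {r : ℝ × ℝ | r.1 ∈ El f r.2}.indicator (fun _ => (1:ℝ)) (q.2, q.1.2) 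
      * Qk ε (q.1.1 - q.2)) := by
    apply Measurable.mul
    · exact (measurable_const.indicator (El_prod hf.meas)).comp (measurable_snd.prodMk (measurable_snd.comp measurable_fst))
    · exact (Qk_meas ε).comp ((measurable_fst.comp measurable_fst).sub measurable_snd)
  have h2 := h1.stronglyMeasurable.integral_prod_right' (ν := volume)
  have h3 : (fun p : ℝ × ℝ => QE ε (El f p.2) p.1) = fun p : ℝ × ℝ => ∫ t, 
      {r : ℝ × ℝ | r.1 ∈ El f r.2}.indicator (fun _ => (1:ℝ)) (t, p.2) * Qk ε (p.1 - t) := by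
    ext p
    rw [QE, ← integral_indicator (El_meas hf.meas p.2)]
    congr 1
    ext t
    by_cases h : t ∈ El f p.2
    · rw [indicator_of_mem h, indicator_of_mem (show (t, p.2) ∈ {r : ℝ × ℝ | r.1 ∈ El f r.2} from h), one_mul]
    · rw [indicator_of_notMem h, indicator_of_notMem (show (t, p.2) ∉ {r : ℝ × ℝ | r.1 ∈ El f r.2} from h), zero_mul]
  rw [h3]
  exact h2.measurable

lemma Qf_D (hf : Nice f) {ε : ℝ} (hε : 0 < ε) {ρ : ℝ → ℝ} (hρ : RankLike ρ) {β : ℝ} (hβ : 0 ≤ β) :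
    ∫⁻ x in Ioo (-1:ℝ) 1, ‖Qf ε f x‖ₑ * ENNReal.ofReal (Lg (ρ x) ^ β) ≤
      ENNReal.ofReal ((4 * β + 5) ^ β * 54) * Nd (1 + β) (cf f) := by
  have hw : Measurable (fun x => ENNReal.ofReal (Lg (ρ x) ^ β)) := (Lgp_meas β).comp hρ.meas
  calc _ ≤ ∫⁻ x in Ioo (-1:ℝ) 1, ∫⁻ l in Ioi (0:ℝ), ENNReal.ofReal |QE ε (El f l) x| * ENNReal.ofReal (Lg (ρ x) ^ β) := by
        apply lintegral_mono
        intro x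
        beta_reduce
        rw [lintegral_mul_const' _ _ ENNReal.ofReal_ne_top, (Qf_layer hf hε x).2]
        gcongr
        refine (enorm_integral_le_lintegral_enorm _).trans (le_of_eq ?_)
        apply lintegral_congr
        intro l
        rw [← ofReal_norm, Real.norm_eq_abs]
    _ = ∫⁻ l in Ioi (0:ℝ), ∫⁻ x in Ioo (-1:ℝ) 1, ENNReal.ofReal |QE ε (El f l) x| * ENNReal.ofReal (Lg (ρ x) ^ β) := by
        rw [lintegral_lintegral_swap]
        apply Measurable.aemeasurable
        refine Measurable.mul (f := fun p : ℝ × ℝ => ENNReal.ofReal |QE ε (El f p.2) p.1|) (g := fun p : ℝ × ℝ => ENNReal.ofReal (Lg (ρ p.1) ^ β)) ?_ ?_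
        · exact (measurable_norm.comp (QE_joint hf hε)).ennreal_ofReal
        · exact hw.comp measurable_fst
    _ ≤ _ := by
        rw [Nd, ← lintegral_const_mul' _ _ ENNReal.ofReal_ne_top]
        apply lintegral_mono
        intro l
        beta_reduce
        rw [← ENNReal.ofReal_mul (by positivity), ← El_vol hf]
        exact QE_D (El_meas hf.meas l) (El_sub f l) hε hρ hβ

def Kx (x t : ℝ) : ℝ≥0∞ := ENNReal.ofReal
  (2 / (Real.sqrt (1 - x ^ 2) * (Real.sqrt (1 - x ^ 2) + Real.sqrt (1 - t ^ 2))))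

def Sf (F : ℝ → ℂ) (x : ℝ) : ℝ≥0∞ := ∫⁻ t in Ioo (-1:ℝ) 1, ‖F t‖ₑ * Kx x t

lemma Kx_meas : Measurable (fun p : ℝ × ℝ => Kx p.1 p.2) := by
  unfold Kx; fun_prop

lemma Kx_meas' (x : ℝ) : Measurable (Kx x) := by unfold Kx; fun_prop

lemma Sf_layer {F : ℝ → ℂ} (hF : Measurable F) (x : ℝ) : 
    Sf F x = ∫⁻ l in Ioi (0:ℝ), SE (El (fun x => ‖F x‖) l) x := by
  rw [Sf, layer_norm hF (Kx_meas' x)]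
  unfold SE El Kx
  rfl

lemma Sf_D {F : ℝ → ℂ} (hF : Measurable F) {ρ : ℝ → ℝ} (hρ : RankLike ρ) {β : ℝ} (hβ : 0 ≤ β) :
    ∫⁻ x in Ioo (-1:ℝ) 1, Sf F x * ENNReal.ofReal (Lg (ρ x) ^ β) ≤
      ENNReal.ofReal ((4 * β + 5) ^ β * 480) * Nd (1 + β) F := by
  have hw : Measurable (fun x => ENNReal.ofReal (Lg (ρ x) ^ β)) := (Lgp_meas β).comp hρ.meas
  calc _ = ∫⁻ x in Ioo (-1:ℝ) 1, ∫⁻ l in Ioi (0:ℝ), SE (El (fun x => ‖F x‖) l) x * ENNReal.ofReal (Lg (ρ x) ^ β) := by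
        apply lintegral_congr
        intro x
        rw [lintegral_mul_const' _ _ ENNReal.ofReal_ne_top, Sf_layer hF]
    _ = ∫⁻ l in Ioi (0:ℝ), ∫⁻ x in Ioo (-1:ℝ) 1, SE (El (fun x => ‖F x‖) l) x * ENNReal.ofReal (Lg (ρ x) ^ β) := by
        rw [lintegral_lintegral_swap]
        apply Measurable.aemeasurable
        refine Measurable.mul (f := fun p : ℝ × ℝ => SE (El (fun x => ‖F x‖) p.2) p.1) (g := fun p : ℝ × ℝ => ENNReal.ofReal (Lg (ρ p.1) ^ β)) ?_ ?_
        · have h1 : Measurable (fun q : (ℝ × ℝ) × ℝ => {r : ℝ × ℝ | r.1 ∈ El (fun x => ‖F x‖) r.2}.indicator (fun _ => (1:ℝ≥0∞)) (q.2, q.1.2) 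
              * Kx (q.1.1) (q.2)) := by
            apply Measurable.mul
            · exact (measurable_const.indicator (El_prod hF.norm)).comp (measurable_snd.prodMk (measurable_snd.comp measurable_fst))
            · exact Kx_meas.comp ((measurable_fst.comp measurable_fst).prodMk measurable_snd)
          have h2 := h1.lintegral_prod_right' (ν := volume)
          convert h2 using 1
          ext p
          rw [SE, ← lintegral_indicator (El_meas hF.norm p.2)]
          congr 1
          ext t
          by_cases h : t ∈ El (fun x => ‖F x‖) p.2
          · rw [indicator_of_mem h, indicator_of_mem (show (t, p.2) ∈ {r : ℝ × ℝ | r.1 ∈ El (fun x => ‖F x‖) r.2} from h), one_mul, Kx]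
          · rw [indicator_of_notMem h, indicator_of_notMem (show (t, p.2) ∉ {r : ℝ × ℝ | r.1 ∈ El (fun x => ‖F x‖) r.2} from h), zero_mul]
        · exact hw.comp measurable_fst
    _ ≤ _ := by
        rw [Nd, ← lintegral_const_mul' _ _ ENNReal.ofReal_ne_top]
        apply lintegral_mono
        intro l
        beta_reduce
        rw [← ENNReal.ofReal_mul (by positivity)]
        exact SE_D (El_meas hF.norm l) (El_sub _ l) hρ hβ

lemma Qf_diff (hf : Nice f) {ε ε' : ℝ} (hε : 0 < ε) (hε' : 0 < ε') :
    ∫⁻ x in Ioo (-2:ℝ) 2, ‖Qf ε f x - Qf ε' f x‖ₑ ≤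
     ∫⁻ l in Ioi (0:ℝ), ∫⁻ x in Ioo (-2:ℝ) 2, ‖QE ε (El f l) x - QE ε' (El f l) x‖ₑ := by
  calc _ ≤ ∫⁻ x in Ioo (-2:ℝ) 2, ∫⁻ l in Ioi (0:ℝ), ‖QE ε (El f l) x - QE ε' (El f l) x‖ₑ := by
        apply lintegral_mono
        intro x
        beta_reduce
        rw [(Qf_layer hf hε x).2, (Qf_layer hf hε' x).2, ← integral_sub (Qf_layer hf hε x).1 (Qf_layer hf hε' x).1]
        exact (enorm_integral_le_lintegral_enorm _)
    _ = _ := by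
        rw [lintegral_lintegral_swap]
        apply Measurable.aemeasurable
        exact ((QE_joint hf hε).sub (QE_joint hf hε')).enorm

lemma QE_cauchy {E : Set ℝ} (hE : MeasurableSet E) (hEI : E ⊆ Ioo (-1) 1) {e : ℕ → ℝ} (he : ∀ n, 0 < e n) 
    (he0 : Tendsto e atTop (𝓝 0)) :
    Tendsto (fun p : ℕ × ℕ => ∫⁻ x in Ioo (-2:ℝ) 2, ‖QE (e p.1) E x - QE (e p.2) E x‖ₑ) atTop (𝓝 0) := by
  have he1 : Tendsto (fun p : ℕ × ℕ => e p.1) atTop (𝓝[>] 0) := by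
    rw [← prod_atTop_atTop_eq]
    exact (tendsto_nhdsWithin_iff.2 ⟨he0, Eventually.of_forall he⟩).comp tendsto_fst
  have he2 : Tendsto (fun p : ℕ × ℕ => e p.2) atTop (𝓝[>] 0) := by
    rw [← prod_atTop_atTop_eq]
    exact (tendsto_nhdsWithin_iff.2 ⟨he0, Eventually.of_forall he⟩).comp tendsto_snd
  have hind : Integrable (E.indicator (fun _ => (1:ℝ))) := by
    rw [integrable_indicator_iff hE]
    exact integrableOn_const (vol_lt_top hEI).ne
  have hPE : ∀ δ x, PE δ E x = ∫ t, Pk δ (x - t) * E.indicator (fun _ => (1:ℝ)) t := by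
    intro δ x
    rw [PE, ← integral_indicator hE]
    congr 1
    ext t
    by_cases h : t ∈ E <;> simp [h]
  have hA : Tendsto (fun p : ℕ × ℕ => ∫ x, (1 + x ^ 2)⁻¹ * (PE (e p.1) E x - PE (e p.2) E x) ^ 2) atTop (𝓝 0) := by
    have : (0:ℝ) = ∫ x : ℝ, (0:ℝ) := by simp
    rw [this]
    apply tendsto_integral_filter_of_dominated_convergence (fun x : ℝ => (1 + x ^ 2)⁻¹)
    · refine Eventually.of_forall fun p => ?_
      have h1 := (QE_continuous hE hEI (he p.1)).2
      have h2 := (QE_continuous hE hEI (he p.2)).2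
      exact ((measurable_const.add (measurable_id.pow_const 2)).inv.mul ((h1.measurable.sub h2.measurable).pow_const 2)).aestronglyMeasurable
    · refine Eventually.of_forall fun p => ae_of_all _ fun x => ?_
      have h1 := PE_bounds (E := E) (he p.1) x
      have h2 := PE_bounds (E := E) (he p.2) x
      rw [Real.norm_of_nonneg (by positivity)]
      have : (PE (e p.1) E x - PE (e p.2) E x) ^ 2 ≤ 1 := by
        rw [sq_le_one_iff_abs_le_one, abs_le]; constructor <;> linarith [h1.1, h1.2, h2.1, h2.2]
      exact mul_le_of_le_one_right (by positivity) this
    · exact integrable_inv_one_add_sq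
    · filter_upwards [omg_tendsto hind] with x hx
      have h1 := poisson_tendsto hind hx
      simp only [← hPE] at h1
      have := (((h1.comp he1).sub (h1.comp he2)).pow 2).const_mul ((1 + x ^ 2)⁻¹)
      simpa using this
  have hB : Tendsto (fun p : ℕ × ℕ => ‖FE E (Complex.I + e p.1 * Complex.I) - FE E (Complex.I + e p.2 * Complex.I)‖) atTop (𝓝 0) := by
    have hc : Tendsto (fun δ : ℝ => FE E (Complex.I + δ * Complex.I)) (𝓝[>] 0) (𝓝 (FE E Complex.I)) := by
      have h1 := (FE_diff hE hEI (z := Complex.I) (by simp)).continuousAt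
      have h2 : Tendsto (fun δ : ℝ => Complex.I + δ * Complex.I) (𝓝 0) (𝓝 Complex.I) := by
        have : Continuous (fun δ : ℝ => Complex.I + δ * Complex.I) := by fun_prop
        have := this.tendsto 0
        simpa using this
      exact h1.tendsto.comp (h2.mono_left nhdsWithin_le_nhds)
    have := ((hc.comp he1).sub (hc.comp he2)).norm
    simpa using this
  have hC : Tendsto (fun p : ℕ × ℕ => ENNReal.ofReal (5 * ((∫ x, (1 + x ^ 2)⁻¹ * (PE (e p.1) E x - PE (e p.2) E x) ^ 2) + 
        Real.pi * ‖FE E (Complex.I + e p.1 * Complex.I) - FE E (Complex.I + e p.2 * Complex.I)‖ ^ 2))) atTop (𝓝 0) := by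
    have := ENNReal.tendsto_ofReal ((hA.add ((hB.pow 2).const_mul Real.pi)).const_mul 5)
    simpa using this
  have hD : Tendsto (fun p : ℕ × ℕ => ∫⁻ x in Ioo (-2:ℝ) 2, ENNReal.ofReal ((QE (e p.1) E x - QE (e p.2) E x) ^ 2)) atTop (𝓝 0) :=
    tendsto_of_tendsto_of_tendsto_of_le_of_le tendsto_const_nhds hC (fun _ => zero_le) 
      (fun p => QE_diff_sq hE hEI (he p.1) (he p.2))
  have hE' : ∀ p : ℕ × ℕ, ∫⁻ x in Ioo (-2:ℝ) 2, ‖QE (e p.1) E x - QE (e p.2) E x‖ₑ ≤ 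
      ((∫⁻ x in Ioo (-2:ℝ) 2, ENNReal.ofReal ((QE (e p.1) E x - QE (e p.2) E x) ^ 2))) ^ (1/2:ℝ) * 4 ^ (1/2:ℝ) := by
    intro p
    have h1 := (QE_continuous hE hEI (he p.1)).1
    have h2 := (QE_continuous hE hEI (he p.2)).1
    have hm : Measurable (fun x => ‖QE (e p.1) E x - QE (e p.2) E x‖ₑ) := (h1.sub h2).measurable.enorm
    have := ENNReal.lintegral_mul_le_Lp_mul_Lq (volume.restrict (Ioo (-2:ℝ) 2)) Real.HolderConjugate.two_two
      hm.aemeasurable (aemeasurable_const (b := (1:ℝ≥0∞)))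
    simp only [Pi.mul_apply, mul_one, ENNReal.one_rpow, setLIntegral_const, Real.volume_Ioo, one_mul] at this
    norm_num at this
    convert this using 4
    · ext x
      rw [← ofReal_norm, ← ENNReal.ofReal_pow (norm_nonneg _), Real.norm_eq_abs, sq_abs]
  have hF : Tendsto (fun p : ℕ × ℕ => ((∫⁻ x in Ioo (-2:ℝ) 2, ENNReal.ofReal ((QE (e p.1) E x - QE (e p.2) E x) ^ 2))) ^ (1/2:ℝ) * 4 ^ (1/2:ℝ))
     atTop (𝓝 0) := by
    have h1 := (ENNReal.continuous_rpow_const (y := (1/2:ℝ))).tendsto 0 |>.comp hD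
    rw [ENNReal.zero_rpow_of_pos (by norm_num)] at h1
    have := ENNReal.Tendsto.mul_const (b := (4:ℝ≥0∞) ^ (1/2:ℝ)) h1 (Or.inr (by simp))
    simpa using this
  exact tendsto_of_tendsto_of_tendsto_of_le_of_le tendsto_const_nhds hF (fun _ => zero_le) hE'

end
end

open MeasureTheory Set Filter
noncomputable section
set_option linter.unusedVariables false
set_option linter.style.haveILetI false
open scoped Topology ENNReal

section
variable {f : ℝ → ℝ}

lemma Qf_cauchy (hf : Nice f) (hN : Nd 1 (cf f) ≠ ⊤) {e : ℕ → ℝ} (he : ∀ n, 0 < e n) 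
    (he0 : Tendsto e atTop (𝓝 0)) :
    Tendsto (fun p : ℕ × ℕ => ∫⁻ x in Ioo (-2:ℝ) 2, ‖Qf (e p.1) f x - Qf (e p.2) f x‖ₑ) atTop (𝓝 0) := by
  have h1 : Tendsto (fun p : ℕ × ℕ => ∫⁻ l in Ioi (0:ℝ), 
      ∫⁻ x in Ioo (-2:ℝ) 2, ‖QE (e p.1) (El f l) x - QE (e p.2) (El f l) x‖ₑ) atTop (𝓝 0) := by
    have : (0:ℝ≥0∞) = ∫⁻ l in Ioi (0:ℝ), 0 := by simp
    rw [this]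
    apply tendsto_lintegral_filter_of_dominated_convergence 
      (fun l => 40 * ENNReal.ofReal (distFun (cf f) l * Lg (distFun (cf f) l) ^ (1:ℝ)))
    · refine Eventually.of_forall fun p => ?_
      exact ((QE_joint hf (he p.1)).sub (QE_joint hf (he p.2))).enorm.lintegral_prod_left'
    · refine Eventually.of_forall fun p => ae_of_all _ fun l => ?_
      have hQ := fun n => QE_J (El_meas hf.meas l) (El_sub f l) (he n)
      have hm : Measurable (fun x => ‖QE (e p.1) (El f l) x‖ₑ) := 
        (QE_continuous (El_meas hf.meas l) (El_sub f l) (he p.1)).1.measurable.enorm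
      have hn : ∀ x, ‖x‖ₑ = ENNReal.ofReal |x| := fun x : ℝ => by rw [← ofReal_norm, Real.norm_eq_abs]
      calc _ ≤ ∫⁻ x in Ioo (-2:ℝ) 2, (‖QE (e p.1) (El f l) x‖ₑ + ‖QE (e p.2) (El f l) x‖ₑ) :=
            lintegral_mono fun x => enorm_sub_le
        _ = (∫⁻ x in Ioo (-2:ℝ) 2, ‖QE (e p.1) (El f l) x‖ₑ) + ∫⁻ x in Ioo (-2:ℝ) 2, ‖QE (e p.2) (El f l) x‖ₑ :=
            lintegral_add_left hm _
        _ ≤ _ := by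
            simp only [hn]
            refine (add_le_add (hQ p.1) (hQ p.2)).trans ?_
            have : (40:ℝ≥0∞) = ENNReal.ofReal 20 + ENNReal.ofReal 20 := by norm_num
            rw [El_vol hf, this, Real.rpow_one, add_mul, ← ENNReal.ofReal_mul (by norm_num)]
    · rw [lintegral_const_mul' _ _ (by norm_num)]
      exact ENNReal.mul_ne_top (by norm_num) hN
    · refine ae_of_all _ fun l => QE_cauchy (El_meas hf.meas l) (El_sub f l) he he0
  exact tendsto_of_tendsto_of_tendsto_of_le_of_le tendsto_const_nhds h1 (fun _ => zero_le) 
    (fun p => Qf_diff hf (he p.1) (he p.2))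

lemma Qf_memLp (hf : Nice f) {ε : ℝ} (hε : 0 < ε) : MemLp (Qf ε f) 1 (volume.restrict (Ioo (-2:ℝ) 2)) := by
  rw [memLp_one_iff_integrable]
  haveI : IsFiniteMeasure (volume.restrict (Ioo (-2:ℝ) 2)) := ⟨by simp⟩
  refine Integrable.of_bound (C := ∫ t, 1 / ε * |f t|) (Qf_meas hf.int hε).restrict (ae_of_all _ fun x => ?_)
  refine norm_integral_le_of_norm_le (hf.int.abs.const_mul _) (ae_of_all _ fun t => ?_)
  rw [norm_mul, Real.norm_eq_abs, Real.norm_eq_abs]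
  gcongr
  exact Qk_bound hε _

theorem real_limit (hf : Nice f) (hN : Nd 1 (cf f) ≠ ⊤) :
    ∃ g : ℝ → ℝ, Measurable g ∧ 
      (∀ᵐ x, x ∈ Ioo (-1:ℝ) 1 → Tendsto (fun δ => ∫ t in {t | δ ≤ |t - x|}, f t * (Real.pi * (x - t))⁻¹)
        (𝓝[>] 0) (𝓝 (g x))) ∧
      ∀ (ρ : ℝ → ℝ) (β : ℝ), RankLike ρ → 0 ≤ β → 
        ∫⁻ x in Ioo (-1:ℝ) 1, ‖g x‖ₑ * ENNReal.ofReal (Lg (ρ x) ^ β) ≤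
          ENNReal.ofReal ((4 * β + 5) ^ β * 54) * Nd (1 + β) (cf f) := by
  set e : ℕ → ℝ := fun n => 1 / ((n:ℝ) + 1) with hedef
  have he : ∀ n, 0 < e n := fun n => by rw [hedef]; positivity
  have he0 : Tendsto e atTop (𝓝 0) := tendsto_one_div_add_atTop_nhds_zero_nat
  have hM : ∀ n, MemLp (Qf (e n) f) 1 (volume.restrict (Ioo (-2:ℝ) 2)) := fun n => Qf_memLp hf (he n)
  have hc : CauchySeq (fun n => (hM n).toLp (Qf (e n) f)) := by
    rw [Lp.cauchySeq_Lp_iff_cauchySeq_eLpNorm]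
    refine (Qf_cauchy hf hN he he0).congr fun p => ?_
    rw [eLpNorm_one_eq_lintegral_enorm]
    apply lintegral_congr_ae
    filter_upwards [(hM p.1).coeFn_toLp, (hM p.2).coeFn_toLp] with x h1 h2
    rw [Pi.sub_apply, h1, h2]
  obtain ⟨G, hG⟩ := cauchySeq_tendsto_of_complete hc
  rw [Lp.tendsto_Lp_iff_tendsto_eLpNorm'] at hG
  have hG2 : Tendsto (fun n => eLpNorm (Qf (e n) f - (G : ℝ → ℝ)) 1 (volume.restrict (Ioo (-2:ℝ) 2))) atTop (𝓝 0) := by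
    refine hG.congr fun n => ?_
    apply eLpNorm_congr_ae
    filter_upwards [(hM n).coeFn_toLp] with x h1
    rw [Pi.sub_apply, Pi.sub_apply, h1]
  refine ⟨G, (Lp.stronglyMeasurable G).measurable, ?_, ?_⟩
  · refine pv_exists hf.int hf.off (memLp_one_iff_integrable.1 (Lp.memLp G)) he he0 ?_
    simp only [eLpNorm_one_eq_lintegral_enorm] at hG2
    exact hG2
  · intro ρ β hρ hβ
    have hw : Measurable (fun x => ENNReal.ofReal (Lg (ρ x) ^ β)) := (Lgp_meas β).comp hρ.meas
    have hmeas := tendstoInMeasure_of_tendsto_eLpNorm one_ne_zero (fun n => (hM n).1) (Lp.aestronglyMeasurable G) hG2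
    obtain ⟨ns, hns, hlim⟩ := hmeas.exists_seq_tendsto_ae
    have hlim' : ∀ᵐ x ∂(volume.restrict (Ioo (-1:ℝ) 1)), Tendsto (fun i => Qf (e (ns i)) f x) atTop (𝓝 (G x)) :=
      ae_mono (Measure.restrict_mono_set _ I_sub_J) hlim
    calc _ = ∫⁻ x in Ioo (-1:ℝ) 1, liminf (fun i => ‖Qf (e (ns i)) f x‖ₑ * ENNReal.ofReal (Lg (ρ x) ^ β)) atTop := by
          apply lintegral_congr_ae
          filter_upwards [hlim'] with x hx
          have h1 := ENNReal.Tendsto.mul_const (b := ENNReal.ofReal (Lg (ρ x) ^ β)) hx.enorm (Or.inr ENNReal.ofReal_ne_top)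
          exact h1.liminf_eq.symm
      _ ≤ liminf (fun i => ∫⁻ x in Ioo (-1:ℝ) 1, ‖Qf (e (ns i)) f x‖ₑ * ENNReal.ofReal (Lg (ρ x) ^ β)) atTop := by
          apply lintegral_liminf_le'
          intro i
          exact (Qf_meas hf.int (he _)).restrict.enorm.mul hw.aemeasurable
      _ ≤ _ := by
          refine liminf_le_of_frequently_le' (Frequently.of_forall fun i => ?_)
          exact Qf_D hf (he _) hρ hβ

end
end

open MeasureTheory Set Filter
noncomputable section
set_option linter.unusedVariables false
set_option linter.style.haveILetI false
open scoped Topology ENNReal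

section

lemma NZ_mono {F G : ℝ → ℂ} (hF : Measurable F) (hG : Measurable G) (h : ∀ x, ‖F x‖ ≤ ‖G x‖) (α : ℝ) :
    NZ α F ≤ NZ α G := by
  rw [NZ_eq hF, NZ_eq hG]
  apply lintegral_mono
  intro l
  apply lintegral_mono_set
  apply Ioo_subset_Ioo le_rfl
  apply ENNReal.toReal_mono (dset_lt_top _).ne
  apply measure_mono
  rintro x ⟨h1, h2⟩
  exact ⟨h1, h2.trans_le (h x)⟩

lemma lint_le_Nd {F : ℝ → ℂ} (hF : Measurable F) {α : ℝ} (hα : 0 ≤ α) : ∫⁻ x in Ioo (-1:ℝ) 1, ‖F x‖ₑ ≤ Nd α F := by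
  have := layer_norm hF (w := fun _ => 1) measurable_const
  simp only [mul_one, lintegral_one, Measure.restrict_apply_univ] at this
  rw [this, Nd]
  apply lintegral_mono
  intro l
  beta_reduce
  have h1 : volume {x | x ∈ Ioo (-1:ℝ) 1 ∧ l < ‖F x‖} = ENNReal.ofReal (distFun F l) := by
    rw [distFun, ENNReal.ofReal_toReal (dset_lt_top _).ne]
  rw [h1]
  apply ENNReal.ofReal_le_ofReal
  rcases (distFun_nonneg F l).eq_or_lt with h | h
  · simp [← h]
  · have := Lg_ge_one h (distFun_le_two F l)
    have := Real.one_le_rpow this hα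
    nlinarith

lemma pv_integrable {p : ℝ → ℝ} (hp : Integrable p) {δ : ℝ} (hδ : 0 < δ) (x : ℝ) :
    IntegrableOn (fun t => p t * (Real.pi * (x - t))⁻¹) {t | δ ≤ |t - x|} := by
  have hms : MeasurableSet {t : ℝ | δ ≤ |t - x|} := measurableSet_le measurable_const (measurable_norm.comp (measurable_id.sub measurable_const))
  refine Integrable.mul_bdd (c := δ⁻¹) hp.integrableOn (Measurable.aestronglyMeasurable (by fun_prop)) ?_
  filter_upwards [ae_restrict_mem hms] with t ht
  replace ht : δ ≤ |t - x| := ht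
  rw [norm_inv, norm_mul, Real.norm_eq_abs, Real.norm_eq_abs, abs_of_pos Real.pi_pos, abs_sub_comm]
  have := Real.pi_gt_three
  gcongr
  nlinarith

structure NiceC (F : ℝ → ℂ) : Prop where
  meas : Measurable F
  off : ∀ x, x ∉ Ioo (-1:ℝ) 1 → F x = 0
  int : Integrable F

lemma NiceC.part {F : ℝ → ℂ} (hF : NiceC F) (L : ℂ → ℝ) (hL : Measurable L) (hL0 : L 0 = 0) (hL1 : ∀ z, |L z| ≤ ‖z‖) :
    Nice (fun x => max (L (F x)) 0) ∧ ∀ α, NZ α (cf (fun x => max (L (F x)) 0)) ≤ NZ α F := by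
  have hm : Measurable (fun x => max (L (F x)) 0) := (hL.comp hF.meas).max measurable_const
  have hb : ∀ x, |max (L (F x)) 0| ≤ ‖F x‖ := by
    intro x
    rw [abs_of_nonneg (le_max_right _ _)]
    exact max_le ((le_abs_self _).trans (hL1 _)) (norm_nonneg _)
  refine ⟨⟨hm, fun x => le_max_right _ _, fun x hx => by simp [hF.off x hx, hL0], ?_⟩, ?_⟩
  · exact hF.int.norm.mono' hm.aestronglyMeasurable (ae_of_all _ hb)
  · intro α
    apply NZ_mono (cf_meas hm) hF.meas
    intro x
    rw [cf, Complex.norm_real]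
    exact hb x

theorem complex_limit {F : ℝ → ℂ} (hF : NiceC F) (hN : NZ 1 F ≠ ⊤) :
    ∃ g : ℝ → ℂ, Measurable g ∧ 
      (∀ᵐ x, x ∈ Ioo (-1:ℝ) 1 → Tendsto (fun δ => ∫ t in {t | δ ≤ |t - x|}, F t * ((Real.pi * (x - t))⁻¹ : ℝ))
        (𝓝[>] 0) (𝓝 (g x))) ∧
      ∀ (ρ : ℝ → ℝ) (β : ℝ), RankLike ρ → 0 ≤ β → 
        ∫⁻ x in Ioo (-1:ℝ) 1, ‖g x‖ₑ * ENNReal.ofReal (Lg (ρ x) ^ β) ≤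
          4 * (ENNReal.ofReal ((4 * β + 5) ^ β * 54) * NZ (1 + β) F) := by
  have key : ∀ (L : ℂ → ℝ) (hL : Measurable L) (hL0 : L 0 = 0) (hL1 : ∀ z, |L z| ≤ ‖z‖), ∃ g : ℝ → ℝ, Measurable g ∧ 
      (∀ᵐ x, x ∈ Ioo (-1:ℝ) 1 → Tendsto (fun δ => ∫ t in {t | δ ≤ |t - x|}, max (L (F t)) 0 * (Real.pi * (x - t))⁻¹)
        (𝓝[>] 0) (𝓝 (g x))) ∧
      ∀ (ρ : ℝ → ℝ) (β : ℝ), RankLike ρ → 0 ≤ β → 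
        ∫⁻ x in Ioo (-1:ℝ) 1, ‖g x‖ₑ * ENNReal.ofReal (Lg (ρ x) ^ β) ≤
          ENNReal.ofReal ((4 * β + 5) ^ β * 54) * NZ (1 + β) F := by
    intro L hL hL0 hL1
    obtain ⟨h1, h2⟩ := hF.part L hL hL0 hL1
    have hm := cf_meas h1.meas
    obtain ⟨g, hg1, hg2, hg3⟩ := real_limit h1 (((Nd_le_NZ hm zero_le_one).trans (h2 1)).trans_lt hN.lt_top).ne
    refine ⟨g, hg1, hg2, fun ρ β hρ hβ => (hg3 ρ β hρ hβ).trans ?_⟩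
    gcongr
    exact (Nd_le_NZ hm (by linarith)).trans (h2 _)
  obtain ⟨g1, m1, t1, b1⟩ := key (fun z => z.re) Complex.measurable_re (by simp) Complex.abs_re_le_norm
  obtain ⟨g2, m2, t2, b2⟩ := key (fun z => -z.re) Complex.measurable_re.neg (by simp) (fun z => by rw [abs_neg]; exact Complex.abs_re_le_norm z)
  obtain ⟨g3, m3, t3, b3⟩ := key (fun z => z.im) Complex.measurable_im (by simp) Complex.abs_im_le_norm
  obtain ⟨g4, m4, t4, b4⟩ := key (fun z => -z.im) Complex.measurable_im.neg (by simp) (fun z => by rw [abs_neg]; exact Complex.abs_im_le_norm z)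
  refine ⟨fun x => ((g1 x - g2 x : ℝ) : ℂ) + ((g3 x - g4 x : ℝ) : ℂ) * Complex.I, by fun_prop, ?_, ?_⟩
  · filter_upwards [t1, t2, t3, t4] with x h1 h2 h3 h4 hx
    have hh := (((Complex.continuous_ofReal.tendsto _).comp ((h1 hx).sub (h2 hx)))).add
      ((((Complex.continuous_ofReal.tendsto _).comp ((h3 hx).sub (h4 hx)))).mul_const Complex.I)
    refine Tendsto.congr' ?_ hh
    filter_upwards [self_mem_nhdsWithin] with δ (hδ : 0 < δ)
    have i1 := pv_integrable (hF.part (fun z => z.re) Complex.measurable_re (by simp) Complex.abs_re_le_norm).1.int hδ x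
    have i2 := pv_integrable (hF.part (fun z => -z.re) Complex.measurable_re.neg (by simp) (fun z => by rw [abs_neg]; exact Complex.abs_re_le_norm z)).1.int hδ x
    have i3 := pv_integrable (hF.part (fun z => z.im) Complex.measurable_im (by simp) Complex.abs_im_le_norm).1.int hδ x
    have i4 := pv_integrable (hF.part (fun z => -z.im) Complex.measurable_im.neg (by simp) (fun z => by rw [abs_neg]; exact Complex.abs_im_le_norm z)).1.int hδ x
    simp only [Function.comp_apply]
    have hmx : ∀ r : ℝ, max r 0 - max (-r) 0 = r := by
      intro r
      rcases le_total r 0 with h | h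
      · rw [max_eq_right h, max_eq_left (by linarith)]; ring
      · rw [max_eq_left h, max_eq_right (by linarith)]; ring
    have i12 := i1.sub i2
    have i34 := i3.sub i4
    rw [← integral_sub i1 i2, ← integral_sub i3 i4, ← integral_complex_ofReal, ← integral_complex_ofReal, ← integral_mul_const, 
      ← integral_add i12.ofReal (i34.ofReal.mul_const _)]
    congr 1
    ext t
    rw [← sub_mul, ← sub_mul, hmx, hmx]
    conv_rhs => rw [← Complex.re_add_im (F t)]
    push_cast
    ring
  · intro ρ β hρ hβ
    have hw : Measurable (fun x => ENNReal.ofReal (Lg (ρ x) ^ β)) := (Lgp_meas β).comp hρ.meas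
    calc _ ≤ ∫⁻ x in Ioo (-1:ℝ) 1, (‖g1 x‖ₑ * ENNReal.ofReal (Lg (ρ x) ^ β) + (‖g2 x‖ₑ * ENNReal.ofReal (Lg (ρ x) ^ β) 
          + (‖g3 x‖ₑ * ENNReal.ofReal (Lg (ρ x) ^ β) + ‖g4 x‖ₑ * ENNReal.ofReal (Lg (ρ x) ^ β)))) := by
          apply lintegral_mono
          intro x
          beta_reduce
          rw [← add_mul, ← add_mul, ← add_mul]
          gcongr
          refine (enorm_add_le _ _).trans ?_
          rw [enorm_mul, ← add_assoc]
          have e1 : ‖((g1 x - g2 x : ℝ) : ℂ)‖ₑ ≤ ‖g1 x‖ₑ + ‖g2 x‖ₑ := by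
            rw [← ofReal_norm, Complex.norm_real, ofReal_norm]; exact enorm_sub_le
          have e2 : ‖((g3 x - g4 x : ℝ) : ℂ)‖ₑ ≤ ‖g3 x‖ₑ + ‖g4 x‖ₑ := by
            rw [← ofReal_norm, Complex.norm_real, ofReal_norm]; exact enorm_sub_le
          have e3 : ‖Complex.I‖ₑ = 1 := by rw [← ofReal_norm, Complex.norm_I]; simp
          rw [e3, mul_one]
          exact add_le_add e1 e2
      _ ≤ ENNReal.ofReal ((4 * β + 5) ^ β * 54) * NZ (1 + β) F + (ENNReal.ofReal ((4 * β + 5) ^ β * 54) * NZ (1 + β) F 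
          + (ENNReal.ofReal ((4 * β + 5) ^ β * 54) * NZ (1 + β) F + ENNReal.ofReal ((4 * β + 5) ^ β * 54) * NZ (1 + β) F)) := by
          have mm : ∀ g : ℝ → ℝ, Measurable g → Measurable (fun x => ‖g x‖ₑ * ENNReal.ofReal (Lg (ρ x) ^ β)) := 
            fun g hg => hg.enorm.mul hw
          rw [lintegral_add_left (mm g1 m1), lintegral_add_left (mm g2 m2), lintegral_add_left (mm g3 m3)]
          exact add_le_add (b1 ρ β hρ hβ) (add_le_add (b2 ρ β hρ hβ) (add_le_add (b3 ρ β hρ hβ) (b4 ρ β hρ hβ)))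
      _ = _ := by ring

end
end

open MeasureTheory Set Filter
noncomputable section
set_option linter.unusedVariables false
set_option linter.style.haveILetI false
open scoped Topology ENNReal

section

def cK (x t : ℝ) : ℝ := (Real.sqrt (1 - t ^ 2) - Real.sqrt (1 - x ^ 2)) / (t - x) / (Real.pi * Real.sqrt (1 - x ^ 2))

lemma cK_meas : Measurable (fun p : ℝ × ℝ => cK p.1 p.2) := by unfold cK; fun_prop

lemma cK_le {x t : ℝ} (hx : x ∈ Ioo (-1:ℝ) 1) (ht : t ∈ Ioo (-1:ℝ) 1) : 
    ‖cK x t‖ₑ ≤ Kx x t := by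
  rw [← ofReal_norm, Kx]
  apply ENNReal.ofReal_le_ofReal
  have hx1 : 0 < 1 - x ^ 2 := by nlinarith [hx.1, hx.2]
  have ht1 : 0 < 1 - t ^ 2 := by nlinarith [ht.1, ht.2]
  have ha := Real.sqrt_pos.2 hx1
  have hb := Real.sqrt_pos.2 ht1
  have ha2 := Real.sq_sqrt hx1.le
  have hb2 := Real.sq_sqrt ht1.le
  have hpi := Real.pi_gt_three
  rw [cK]
  set a := Real.sqrt (1 - x ^ 2)
  set b := Real.sqrt (1 - t ^ 2)
  rcases eq_or_ne t x with h | h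
  · rw [h]; simp; positivity
  · have hne : t - x ≠ 0 := sub_ne_zero.2 h
    have e : (b - a) / (t - x) = -(t + x) / (a + b) := by
      rw [div_eq_div_iff hne (by positivity)]
      nlinarith
    rw [e, div_div, norm_div, Real.norm_eq_abs, Real.norm_eq_abs, abs_of_pos (by positivity : 0 < (a + b) * (Real.pi * a)), abs_neg]
    have h1 : |t + x| ≤ 2 := abs_le.2 ⟨by linarith [hx.1, ht.1], by linarith [hx.2, ht.2]⟩
    have h2 : a * (a + b) ≤ (a + b) * (Real.pi * a) := by
      have : 0 < (a + b) * a := by positivity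
      nlinarith
    gcongr

lemma hatT_congr {f F : ℝ → ℂ} (h : f =ᵐ[μI] F) : hatT f = hatT F := by
  have : FHT (fun t => (Real.sqrt (1 - t ^ 2) : ℂ) * f t) = FHT (fun t => (Real.sqrt (1 - t ^ 2) : ℂ) * F t) := by
    ext x
    unfold FHT
    congr 1
    ext ε
    congr 1
    apply integral_congr_ae
    have hle : volume.restrict {y : ℝ | y ∈ Ioo (-1:ℝ) 1 ∧ ε ≤ |y - x|} ≤ μI := 
      Measure.restrict_mono_set _ (fun y hy => hy.1)
    filter_upwards [ae_mono hle h] with t ht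
    rw [ht]
  ext x
  unfold hatT
  rw [this]

lemma cK_id (x t : ℝ) (y : ℂ) (ha : Real.sqrt (1 - x ^ 2) ≠ 0) (hne : t - x ≠ 0) :
    -(Real.sqrt (1 - x ^ 2) : ℂ) * (y * ((Real.pi * (x - t))⁻¹ : ℝ) - y * (cK x t : ℂ)) =
      (Real.pi : ℂ)⁻¹ * (((Real.sqrt (1 - t ^ 2) : ℂ) * y) / ((t : ℂ) - (x : ℂ))) := by
  have hac : (Real.sqrt (1 - x ^ 2) : ℂ) ≠ 0 := by exact_mod_cast ha
  have hpc : (Real.pi : ℂ) ≠ 0 := by exact_mod_cast Real.pi_pos.ne'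
  have hne' : (t:ℂ) - x ≠ 0 := by exact_mod_cast hne
  rw [cK, ← neg_sub t x]
  push_cast
  generalize (Real.sqrt (1 - x ^ 2) : ℂ) = a at *
  generalize (Real.sqrt (1 - t ^ 2) : ℂ) = b at *
  generalize (t:ℂ) - x = d at *
  field_simp
  ring

set_option maxHeartbeats 2000000 in
lemma hatT_at {F : ℝ → ℂ} (hF : NiceC F) {x : ℝ} (hx : x ∈ Ioo (-1:ℝ) 1) {G : ℂ}
    (hG : Tendsto (fun δ => ∫ t in {t | δ ≤ |t - x|}, F t * ((Real.pi * (x - t))⁻¹ : ℝ)) (𝓝[>] 0) (𝓝 G))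
    (hS : Sf F x < ⊤) :
    hatT F x = G - ∫ t in Ioo (-1:ℝ) 1, F t * (cK x t : ℂ) := by
  have hx1 : 0 < 1 - x ^ 2 := by nlinarith [hx.1, hx.2]
  have ha := Real.sqrt_pos.2 hx1
  have hpi := Real.pi_pos
  have hac : (Real.sqrt (1 - x ^ 2) : ℂ) ≠ 0 := by exact_mod_cast ha.ne'
  have hpc : (Real.pi : ℂ) ≠ 0 := by exact_mod_cast hpi.ne'
  have hcm : Measurable (fun t => F t * (cK x t : ℂ)) := 
    hF.meas.mul (Complex.measurable_ofReal.comp (cK_meas.comp measurable_prodMk_left))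
  have hci : IntegrableOn (fun t => F t * (cK x t : ℂ)) (Ioo (-1:ℝ) 1) := by
    refine ⟨hcm.aestronglyMeasurable, ?_⟩
    refine lt_of_le_of_lt ?_ hS
    apply setLIntegral_mono' measurableSet_Ioo
    intro t ht
    rw [enorm_mul]
    gcongr
    rw [← ofReal_norm, Complex.norm_real, ofReal_norm]
    exact cK_le hx ht
  have hmD : ∀ δ, MeasurableSet {t : ℝ | t ∈ Ioo (-1:ℝ) 1 ∧ δ ≤ |t - x|} := fun δ =>
    measurableSet_Ioo.inter (measurableSet_le measurable_const (measurable_norm.comp (measurable_id.sub measurable_const)))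
  have hmD' : ∀ δ, MeasurableSet {t : ℝ | δ ≤ |t - x|} := fun δ =>
    (measurableSet_le measurable_const (measurable_norm.comp (measurable_id.sub measurable_const)))
  have hH : Tendsto (fun δ => ∫ t in {t : ℝ | t ∈ Ioo (-1:ℝ) 1 ∧ δ ≤ |t - x|}, F t * (cK x t : ℂ)) (𝓝[>] 0)
      (𝓝 (∫ t in Ioo (-1:ℝ) 1, F t * (cK x t : ℂ))) := by
    have e : ∀ δ, ∫ t in {t : ℝ | t ∈ Ioo (-1:ℝ) 1 ∧ δ ≤ |t - x|}, F t * (cK x t : ℂ) = 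
       ∫ t in Ioo (-1:ℝ) 1, {t : ℝ | δ ≤ |t - x|}.indicator (fun t => F t * (cK x t : ℂ)) t := by
      intro δ
      rw [setIntegral_indicator (hmD' δ)]
      rfl
    simp only [e]
    apply tendsto_integral_filter_of_dominated_convergence (fun t => ‖F t * (cK x t : ℂ)‖)
    · exact Eventually.of_forall fun δ => (hcm.indicator (hmD' δ)).aestronglyMeasurable
    · exact Eventually.of_forall fun δ => ae_of_all _ fun t => norm_indicator_le_norm_self _ _
    · exact hci.norm
    · refine ae_of_all _ fun t => ?_
      rcases eq_or_ne t x with h | h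
      · have : F t * (cK x t : ℂ) = 0 := by rw [h, cK]; simp
        rw [this]
        refine tendsto_const_nhds.congr fun δ => ?_
        by_cases h' : t ∈ {t : ℝ | δ ≤ |t - x|}
        · rw [indicator_of_mem h', this]
        · rw [indicator_of_notMem h']
      · have hp : 0 < |t - x| := abs_pos.2 (sub_ne_zero.2 h)
        refine tendsto_const_nhds.congr' ?_
        filter_upwards [nhdsWithin_le_nhds (gt_mem_nhds hp)] with δ hδ
        rw [indicator_of_mem (show t ∈ {t : ℝ | δ ≤ |t - x|} from le_of_lt hδ)]
  have hT : Tendsto (fun ε : ℝ => (Real.pi : ℂ)⁻¹ *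
      ∫ t in {t : ℝ | t ∈ Set.Ioo (-1 : ℝ) 1 ∧ ε ≤ |t - x|}, ((Real.sqrt (1 - t ^ 2) : ℂ) * F t) / ((t : ℂ) - (x : ℂ)))
      (𝓝[>] 0) (𝓝 (-(Real.sqrt (1 - x ^ 2) : ℂ) * (G - ∫ t in Ioo (-1:ℝ) 1, F t * (cK x t : ℂ)))) := by
    refine Tendsto.congr' ?_ ((hG.sub hH).const_mul (-(Real.sqrt (1 - x ^ 2) : ℂ)))
    filter_upwards [self_mem_nhdsWithin] with δ (hδ : 0 < δ)
    have i1 : IntegrableOn (fun t => F t * ((Real.pi * (x - t))⁻¹ : ℝ)) {t | δ ≤ |t - x|} := by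
      refine Integrable.mul_bdd (c := δ⁻¹) hF.int.integrableOn (Measurable.aestronglyMeasurable (by fun_prop)) ?_
      filter_upwards [ae_restrict_mem (hmD' δ)] with t ht
      replace ht : δ ≤ |t - x| := ht
      rw [Complex.norm_real, norm_inv, norm_mul, Real.norm_eq_abs, Real.norm_eq_abs, abs_of_pos Real.pi_pos, abs_sub_comm]
      have := Real.pi_gt_three
      gcongr
      nlinarith
    have e1 : ∫ t in {t | δ ≤ |t - x|}, F t * ((Real.pi * (x - t))⁻¹ : ℝ) = 
        ∫ t in {t : ℝ | t ∈ Set.Ioo (-1 : ℝ) 1 ∧ δ ≤ |t - x|}, F t * ((Real.pi * (x - t))⁻¹ : ℝ) := by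
      apply setIntegral_eq_of_subset_of_forall_diff_eq_zero (hmD' δ) (fun t ht => ht.2)
      rintro t ⟨h1, h2⟩
      have : t ∉ Ioo (-1:ℝ) 1 := fun h => h2 ⟨h, h1⟩
      rw [hF.off t this, zero_mul]
    have i1' := i1.mono_set (s := {t : ℝ | t ∈ Set.Ioo (-1 : ℝ) 1 ∧ δ ≤ |t - x|}) (fun t ht => ht.2)
    have i2 := hci.mono_set (s := {t : ℝ | t ∈ Set.Ioo (-1 : ℝ) 1 ∧ δ ≤ |t - x|}) (fun t ht => ht.1)
    rw [e1, ← integral_sub i1' i2, ← integral_const_mul, ← integral_const_mul]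
    apply setIntegral_congr_fun (hmD δ)
    rintro t ⟨h1, h2⟩
    have hne : t - x ≠ 0 := by
      intro h; rw [h, abs_zero] at h2; linarith
    exact cK_id x t (F t) ha.ne' hne
  have hE : FHT (fun t => (Real.sqrt (1 - t ^ 2) : ℂ) * F t) x = _ := hT.limUnder_eq
  rw [hatT, hE, ← mul_assoc, neg_mul_neg, inv_mul_cancel₀ hac, one_mul]

theorem hatT_main {F : ℝ → ℂ} (hF : NiceC F) (hN : NZ 1 F ≠ ⊤) :
    ∃ H : ℝ → ℂ, Measurable H ∧ hatT F =ᵐ[μI] H ∧ 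
      ∀ (ρ : ℝ → ℝ) (β : ℝ), RankLike ρ → 0 ≤ β → 
        ∫⁻ x in Ioo (-1:ℝ) 1, ‖H x‖ₑ * ENNReal.ofReal (Lg (ρ x) ^ β) ≤
          ENNReal.ofReal ((4 * β + 5) ^ β * 696) * NZ (1 + β) F := by
  obtain ⟨G, hG1, hG2, hG3⟩ := complex_limit hF hN
  have hSm : Measurable (Sf F) := by
    unfold Sf
    exact ((hF.meas.comp measurable_snd).enorm.mul Kx_meas).lintegral_prod_right' (ν := volume.restrict (Ioo (-1:ℝ) 1))
  have hHm : Measurable (fun x => ∫ t in Ioo (-1:ℝ) 1, F t * (cK x t : ℂ)) := by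
    have : Measurable (fun p : ℝ × ℝ => F p.2 * (cK p.1 p.2 : ℂ)) :=
      (hF.meas.comp measurable_snd).mul (Complex.measurable_ofReal.comp cK_meas)
    exact (this.stronglyMeasurable.integral_prod_right' (ν := volume.restrict (Ioo (-1:ℝ) 1))).measurable
  have hSfin : ∀ᵐ x ∂(volume.restrict (Ioo (-1:ℝ) 1)), Sf F x < ⊤ := by
    apply ae_lt_top hSm
    have := Sf_D hF.meas sg_rank (le_refl (0:ℝ))
    simp only [Real.rpow_zero, ENNReal.ofReal_one, mul_one, add_zero] at this
    refine (this.trans_lt (ENNReal.mul_lt_top ENNReal.ofReal_lt_top ?_)).ne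
    exact (Nd_le_NZ hF.meas zero_le_one).trans_lt hN.lt_top
  refine ⟨fun x => G x - ∫ t in Ioo (-1:ℝ) 1, F t * (cK x t : ℂ), hG1.sub hHm, ?_, ?_⟩
  · have h1 : ∀ᵐ x ∂(volume.restrict (Ioo (-1:ℝ) 1)), x ∈ Ioo (-1:ℝ) 1 := ae_restrict_mem measurableSet_Ioo
    show ∀ᵐ x ∂(volume.restrict (Ioo (-1:ℝ) 1)), _
    filter_upwards [hSfin, h1, ae_restrict_of_ae hG2] with x h1 h2 h3
    exact hatT_at hF h2 (h3 h2) h1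
  · intro ρ β hρ hβ
    have hw : Measurable (fun x => ENNReal.ofReal (Lg (ρ x) ^ β)) := (Lgp_meas β).comp hρ.meas
    have mm : Measurable (fun x => ‖G x‖ₑ * ENNReal.ofReal (Lg (ρ x) ^ β)) := hG1.enorm.mul hw
    calc _ ≤ ∫⁻ x in Ioo (-1:ℝ) 1, (‖G x‖ₑ * ENNReal.ofReal (Lg (ρ x) ^ β) + Sf F x * ENNReal.ofReal (Lg (ρ x) ^ β)) := by
          apply setLIntegral_mono' measurableSet_Ioo
          intro x hx
          rw [← add_mul]
          gcongr
          refine enorm_sub_le.trans ?_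
          gcongr
          refine (enorm_integral_le_lintegral_enorm _).trans ?_
          apply setLIntegral_mono' measurableSet_Ioo
          intro t ht
          rw [enorm_mul]
          gcongr
          rw [← ofReal_norm, Complex.norm_real, ofReal_norm]
          exact cK_le hx ht
      _ ≤ 4 * (ENNReal.ofReal ((4 * β + 5) ^ β * 54) * NZ (1 + β) F) + ENNReal.ofReal ((4 * β + 5) ^ β * 480) * NZ (1 + β) F := by
          rw [lintegral_add_left mm]
          refine add_le_add (hG3 ρ β hρ hβ) ((Sf_D hF.meas hρ hβ).trans ?_)
          gcongr
          exact Nd_le_NZ hF.meas (by linarith)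
      _ = _ := by
          have h4 : (4:ℝ≥0∞) = ENNReal.ofReal 4 := by norm_num
          rw [← mul_assoc, ← add_mul, h4, ← ENNReal.ofReal_mul (by norm_num), ← ENNReal.ofReal_add (by positivity) (by positivity)]
          congr 2
          ring

end
end

open MeasureTheory Set Filter
noncomputable section
set_option linter.unusedVariables false
set_option linter.style.haveILetI false
open scoped Topology ENNReal

section

lemma exists_rep {f : ℝ → ℂ} (hf : AEStronglyMeasurable f μI) :
    ∃ F : ℝ → ℂ, Measurable F ∧ (∀ x, x ∉ Ioo (-1:ℝ) 1 → F x = 0) ∧ f =ᵐ[μI] F := by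
  refine ⟨(Ioo (-1:ℝ) 1).indicator (hf.mk f), hf.stronglyMeasurable_mk.measurable.indicator measurableSet_Ioo,
    fun x hx => indicator_of_notMem hx _, ?_⟩
  have h1 : ∀ᵐ x ∂μI, x ∈ Ioo (-1:ℝ) 1 := ae_restrict_mem measurableSet_Ioo
  filter_upwards [hf.ae_eq_mk, h1] with x h2 h3
  rw [indicator_of_mem h3]; exact h2

lemma zint_nonneg (α : ℝ) (g : ℝ → ℂ) :
    0 ≤ᵐ[volume.restrict (Ioo (0:ℝ) 2)] (fun t => decRearr g t * Lg t ^ α) := by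
  filter_upwards [ae_restrict_mem measurableSet_Ioo] with t ht
  have := Lg_ge_one ht.1 ht.2.le
  exact mul_nonneg (decRearr_nonneg g t) (Real.rpow_nonneg (by linarith) _)

lemma zint_meas (α : ℝ) {g : ℝ → ℂ} (hg : Measurable g) :
    AEStronglyMeasurable (fun t => decRearr g t * Lg t ^ α) (volume.restrict (Ioo (0:ℝ) 2)) :=
  ((decRearr_aem hg).mul (Lg_meas.pow_const α).aemeasurable).aestronglyMeasurable

lemma zint_iff (α : ℝ) {g : ℝ → ℂ} (hg : Measurable g) :
    IntegrableOn (fun t => decRearr g t * Lg t ^ α) (Ioo (0:ℝ) 2) ↔ NZ α g < ⊤ := by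
  have h := hasFiniteIntegral_iff_ofReal (zint_nonneg α g)
  exact ⟨fun hi => h.1 hi.2, fun hi => ⟨zint_meas α hg, h.2 hi⟩⟩

lemma zint_eq (α : ℝ) {g : ℝ → ℂ} (hg : Measurable g) :
    ∫ t in Ioo (0:ℝ) 2, decRearr g t * Lg t ^ α = (NZ α g).toReal :=
  integral_eq_lintegral_of_nonneg_ae (zint_nonneg α g) (zint_meas α hg)

lemma NZ_exp_mono {a b : ℝ} (hab : a ≤ b) (g : ℝ → ℂ) : NZ a g ≤ NZ b g := by
  apply setLIntegral_mono' measurableSet_Ioo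
  intro t ht
  apply ENNReal.ofReal_le_ofReal
  exact mul_le_mul_of_nonneg_left (Real.rpow_le_rpow_of_exponent_le (Lg_ge_one ht.1 ht.2.le) hab) (decRearr_nonneg g t)

lemma niceC_of {F : ℝ → ℂ} (hm : Measurable F) (ho : ∀ x, x ∉ Ioo (-1:ℝ) 1 → F x = 0) (hN : NZ 1 F < ⊤) :
    NiceC F := by
  refine ⟨hm, ho, ?_⟩
  have : IntegrableOn F (Ioo (-1:ℝ) 1) := ⟨hm.aestronglyMeasurable, 
    ((lint_le_Nd hm zero_le_one).trans (Nd_le_NZ hm zero_le_one)).trans_lt hN⟩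
  exact this.integrable_of_forall_notMem_eq_zero ho

lemma young_log_pt {ρ u : ℝ} (hρ : 0 < ρ) (hρ2 : ρ ≤ 2) (hu : 0 ≤ u) :
    u * Lg ρ ≤ 5 + 5 * (if ρ < 2 then (2 / ρ) ^ (3/4:ℝ) else 0) + 3 * (u * max (Real.log u) 0) := by
  rw [Lg_eq hρ]
  have hy1 : 1 ≤ 2 / ρ := by rw [le_div_iff₀ hρ]; linarith
  have hq : (2 / ρ) ^ (3/4:ℝ) ≤ 1 + (if ρ < 2 then (2 / ρ) ^ (3/4:ℝ) else 0) := by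
    split_ifs with h
    · linarith
    · have : ρ = 2 := le_antisymm hρ2 (not_lt.1 h)
      rw [this]; norm_num
  set q := (if ρ < 2 then (2 / ρ) ^ (3/4:ℝ) else 0)
  set y := 2 / ρ
  have hy0 : 0 < y := by linarith
  have hp0 : 0 ≤ u * max (Real.log u) 0 := mul_nonneg hu (le_max_right _ _)
  have hly : 0 ≤ Real.log y := Real.log_nonneg hy1
  have hq0 : 0 ≤ q := by
    show 0 ≤ (if ρ < 2 then (2 / ρ) ^ (3/4:ℝ) else 0)
    split_ifs <;> positivity
  by_cases h : u ≤ y ^ (1/2:ℝ)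
  · have h1 := Real.log_le_rpow_div hy0.le (show (0:ℝ) < 1/4 by norm_num)
    have h2 : (1:ℝ) ≤ y ^ (1/4:ℝ) := Real.one_le_rpow hy1 (by norm_num)
    have h3 : 1 + Real.log y ≤ 5 * y ^ (1/4:ℝ) := by linarith
    have h4 : y ^ (1/2:ℝ) * y ^ (1/4:ℝ) = y ^ (3/4:ℝ) := by rw [← Real.rpow_add hy0]; norm_num
    have h5 : u * (1 + Real.log y) ≤ y ^ (1/2:ℝ) * (5 * y ^ (1/4:ℝ)) :=
      mul_le_mul h h3 (by linarith) (by positivity)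
    nlinarith
  · push Not at h
    have hu0 : 0 < u := lt_of_le_of_lt (by positivity) h
    have h1 : Real.log y ≤ 2 * Real.log u := by
      have := Real.log_le_log (by positivity) h.le
      rw [Real.log_rpow hy0] at this
      linarith
    have h2 : u * Real.log y ≤ 2 * (u * max (Real.log u) 0) := by
      have := le_max_left (Real.log u) 0
      nlinarith
    have h3 : u ≤ 3 + u * max (Real.log u) 0 := by
      by_cases hue : u ≤ 3
      · linarith
      · push Not at hue
        have : 1 ≤ Real.log u := by
          rw [Real.le_log_iff_exp_le hu0]
          linarith [Real.exp_one_lt_d9]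
        have := this.trans (le_max_left _ 0)
        nlinarith
    nlinarith

lemma NZ_fin_of_LlogL {F : ℝ → ℂ} (hm : Measurable F) 
    (hi : IntegrableOn (fun x => ‖F x‖ * max (Real.log ‖F x‖) 0) (Ioo (-1:ℝ) 1)) : NZ 1 F < ⊤ := by
  refine (NZ_le_Nd hm zero_le_one).trans_lt (ENNReal.mul_lt_top ENNReal.ofReal_lt_top ?_)
  refine (Nd_le_dual hm zero_le_one).trans_lt ?_
  have hr := rk_rank hm
  have hfin : IntegrableOn (fun x => (if rk F x < 2 then (2 / rk F x) ^ (3/4:ℝ) else 0)) (Ioo (-1:ℝ) 1) := by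
    refine ⟨?_, ?_⟩
    · exact (Measurable.ite (measurableSet_lt hr.meas measurable_const) 
        ((measurable_const.div hr.meas).pow_const _) measurable_const).aestronglyMeasurable
    · rw [hasFiniteIntegral_iff_ofReal]
      · exact (hr.int two_pos).trans_lt ENNReal.ofReal_lt_top
      · filter_upwards [hr.pos] with x hx
        show 0 ≤ (if rk F x < 2 then (2 / rk F x) ^ (3/4:ℝ) else 0)
        split_ifs <;> positivity
  have hc : IntegrableOn (fun x : ℝ => (5:ℝ)) (Ioo (-1:ℝ) 1) := integrableOn_const (by simp)
  have hsum := (hc.add (hfin.const_mul 5)).add (hi.const_mul 3)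
  refine lt_of_le_of_lt ?_ hsum.lintegral_lt_top
  apply lintegral_mono_ae
  filter_upwards [hr.pos, ae_restrict_mem measurableSet_Ioo] with x h1 h2
  rw [← ofReal_norm, ← ENNReal.ofReal_mul (norm_nonneg _), Real.rpow_one]
  exact ENNReal.ofReal_le_ofReal (young_log_pt h1 (hr.le2 x h2) (norm_nonneg _))

theorem part1 (β : ℝ) (hβ : 0 ≤ β) : ∃ C : ℝ, 0 < C ∧ ∀ f : ℝ → ℂ, MemZyg (1 + β) f →
      MemZyg β (hatT f) ∧ zygNorm β (hatT f) ≤ C * zygNorm (1 + β) f := by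
  refine ⟨((4 * β + 5) ^ β * 3) * ((4 * β + 5) ^ β * 696), by positivity, ?_⟩
  rintro f ⟨hf, hi⟩
  obtain ⟨F, hm, ho, hfF⟩ := exists_rep hf
  rw [decRearr_congr hfF] at hi
  have hN : NZ (1 + β) F < ⊤ := (zint_iff _ hm).1 hi
  have hN1 : NZ 1 F < ⊤ := (NZ_exp_mono (by linarith) F).trans_lt hN
  obtain ⟨H, hHm, hH, hb⟩ := hatT_main (niceC_of hm ho hN1) hN1.ne
  rw [hatT_congr hfF]
  have hle : NZ β H ≤ ENNReal.ofReal (((4 * β + 5) ^ β * 3) * ((4 * β + 5) ^ β * 696)) * NZ (1 + β) F := by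
    rw [ENNReal.ofReal_mul (by positivity), mul_assoc]
    refine (NZ_le_Nd hHm hβ).trans ?_
    gcongr
    exact (Nd_le_dual hHm hβ).trans (hb _ β (rk_rank hHm) hβ)
  have hlt := ENNReal.mul_lt_top (ENNReal.ofReal_lt_top (r := ((4 * β + 5) ^ β * 3) * ((4 * β + 5) ^ β * 696))) hN
  have hz1 : zygNorm β (hatT F) = (NZ β H).toReal := by
    rw [zygNorm, decRearr_congr hH]
    exact zint_eq β hHm
  have hz2 : zygNorm (1 + β) f = (NZ (1 + β) F).toReal := by
    rw [zygNorm, decRearr_congr hfF]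
    exact zint_eq _ hm
  refine ⟨⟨⟨H, hHm.stronglyMeasurable, hH⟩, ?_⟩, ?_⟩
  · rw [decRearr_congr hH]
    exact (zint_iff β hHm).2 (hle.trans_lt hlt)
  · rw [hz1, hz2]
    have := ENNReal.toReal_mono hlt.ne hle
    rwa [ENNReal.toReal_mul, ENNReal.toReal_ofReal (by positivity)] at this

theorem part2 : ∃ C : ℝ, 0 < C ∧ ∀ f : ℝ → ℂ, MemLlogL f →
      IntegrableOn (hatT f) (Set.Ioo (-1 : ℝ) 1) ∧
      ∫ x in Set.Ioo (-1 : ℝ) 1, ‖hatT f x‖ ≤ C * llogLNorm f := by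
  refine ⟨696, by norm_num, ?_⟩
  rintro f ⟨hf, hi⟩
  obtain ⟨F, hm, ho, hfF⟩ := exists_rep hf
  have hi' : IntegrableOn (fun x => ‖F x‖ * max (Real.log ‖F x‖) 0) (Ioo (-1:ℝ) 1) := by
    refine hi.congr ?_
    have h : f =ᵐ[volume.restrict (Ioo (-1:ℝ) 1)] F := hfF
    filter_upwards [h] with x hx
    rw [hx]
  have hN := NZ_fin_of_LlogL hm hi'
  obtain ⟨H, hHm, hH, hb⟩ := hatT_main (niceC_of hm ho hN) hN.ne
  rw [hatT_congr hfF]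
  replace hH : hatT F =ᵐ[volume.restrict (Ioo (-1:ℝ) 1)] H := hH
  have hle := hb _ 0 sg_rank le_rfl
  simp only [Real.rpow_zero, ENNReal.ofReal_one, mul_one, add_zero, one_mul] at hle
  have hlt := ENNReal.mul_lt_top (ENNReal.ofReal_lt_top (r := 696)) hN
  have hHi : IntegrableOn H (Ioo (-1:ℝ) 1) := ⟨hHm.aestronglyMeasurable, hle.trans_lt hlt⟩
  refine ⟨Integrable.congr hHi hH.symm, ?_⟩
  have hz2 : llogLNorm f = (NZ 1 F).toReal := by
    rw [llogLNorm, decRearr_congr hfF, ← zint_eq 1 hm]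
    simp only [Real.rpow_one]
    rfl
  have e : ∫ x in Set.Ioo (-1 : ℝ) 1, ‖hatT F x‖ = (∫⁻ x in Ioo (-1:ℝ) 1, ‖H x‖ₑ).toReal := by
    rw [integral_congr_ae (g := fun x => ‖H x‖) (by filter_upwards [hH] with x hx; rw [hx])]
    exact integral_norm_eq_lintegral_enorm hHm.aestronglyMeasurable
  rw [e, hz2]
  have := ENNReal.toReal_mono hlt.ne hle
  rwa [ENNReal.toReal_mul, ENNReal.toReal_ofReal (by positivity)] at this

end
end

/-- For every `β ≥ 0` the operator `T̂` maps `L(log L)^{1+β}(-1,1)` boundedly into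
`L(log L)^β(-1,1)`; in particular `T̂ : L log L(-1,1) → L¹(-1,1)` is bounded. -/
theorem hatT_Zygmund_bound :
    (∀ β : ℝ, 0 ≤ β → ∃ C : ℝ, 0 < C ∧ ∀ f : ℝ → ℂ, MemZyg (1 + β) f →
      MemZyg β (hatT f) ∧ zygNorm β (hatT f) ≤ C * zygNorm (1 + β) f) ∧
    (∃ C : ℝ, 0 < C ∧ ∀ f : ℝ → ℂ, MemLlogL f →
      IntegrableOn (hatT f) (Set.Ioo (-1 : ℝ) 1) ∧
      ∫ x in Set.Ioo (-1 : ℝ) 1, ‖hatT f x‖ ≤ C * llogLNorm f) := by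
  exact ⟨part1, part2⟩
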